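/- Let m > 2, 1 ≤ n ≤ m, and 0 < 2α_j < 1 for j = 1,…,n; set α = α_1+…+α_n, β = (m−2)/2 + α, γ = 2^{2β−m} Γ(β) π^{−m/2} ∏_{j=1}^n Γ(α_j)/Γ(2α_j), and Ω = {x ∈ ℝ^m : x_1 > 0, …, x_n > 0}. For x with x_j ≥ 0, ξ ∈ Ω, x ≠ ξ, let r² = Σ_{i=1}^m (x_i − ξ_i)² and q(x,ξ) = γ r^{−2β} F_A^{(n)}(β, (α_1,…,α_n); (2α_1,…,2α_n); −4x_1ξ_1/r², …, −4x_nξ_n/r²). For each k = 1,…,n let ν_k be a continuous function on S_k = {x̃_k : x_i > 0 for i ≤ n, i ≠ k} satisfying |ν_k(x̃_k)| ≤ c_k (1 + Σ_{i≠k} x_i²)^{−(1−2α_k+ε_k)/2} for some constants c_k > 0, ε_k > 0. Then the function u(ξ) = −Σ_{k=1}^n ∫_{S_k} [∏_{j≤n, j≠k} x_j^{2α_j}] ν_k(x̃_k) q(x_k^0, ξ) dx̃_k, where x_k^0 denotes the point whose k-th coordinate is 0 and whose remaining coordinates are those of x̃_k, is a solution of the Neumann problem: (i) u satisfies Σ_{i=1}^m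 ∂²u/∂ξ_i² + Σ_{j=1}^n (2α_j/ξ_j) ∂u/∂ξ_j = 0 in Ω; (ii) for each k, lim_{ξ_k→0+} ξ_k^{2α_k} ∂u/∂ξ_k = ν_k(ξ̃_k) at every ξ̃_k with positive coordinates ξ_i > 0 (i ≤ n, i ≠ k); and (iii) u(ξ) → 0 as |ξ| → ∞. -/

import Mathlib

open MeasureTheory Real Filter Topology

/-- The Lauricella function `F_A` (in finitely many variables indexed by `ι`) defined
through its Euler-type integral representation. -/
noncomputable def lauricellaFA {ι : Type*} [Fintype ι] (a : ℝ) (b c x : ι → ℝ) : ℝ :=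
  (∏ i, Real.Gamma (c i) / (Real.Gamma (b i) * Real.Gamma (c i - b i))) *
    ∫ u in Set.univ.pi (fun _ : ι => Set.Icc (0 : ℝ) 1),
      (∏ i, u i ^ (b i - 1) * (1 - u i) ^ (c i - b i - 1)) * (1 - ∑ i, x i * u i) ^ (-a)

/-!
By the Euler integral, `q(x, ξ)` is `γ` times the mean of `A ^ (-β)`, where
`A = ∑ (xᵢ - ξᵢ)² + 4 ∑ xᵢ ξᵢ uᵢ` and the `uⱼ` are independent symmetric Beta(`αⱼ`, `αⱼ`) variables,
with `uᵢ = 0` in the regular coordinates. Differentiating twice in `ξ` produces the variances of the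
mirror images `± xⱼ`; integration by parts against the Beta law turns them into the singular drift
`2αⱼ / ξⱼ ∂ⱼ`, which gives the equation.

The subordination formula `Γ(β) A ^ (-β) = ∫ τ ^ (β - 1) exp (-τ A) dτ` reduces face integrals of
powers of `A` to products of one-dimensional integrals. The total mass of the weighted normal
derivative on a face is thereby computed, and `γ` normalises it to one, so that this kernel is an
approximate identity as `ξₖ → 0`. The same factorisation, retaining the decay of the density in a
single coordinate, shows that the potential vanishes at infinity.
-/

open scoped ENNReal

section ProductMeasures

theorem prod_indicator_eq_indicator_pi {ι : Type*} [Fintype ι] {X : ι → Type*}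
    (s : ∀ i, Set (X i)) (d : ∀ i, X i → ℝ≥0∞) (x : ∀ i, X i) :
    ∏ i, (s i).indicator (d i) (x i)
      = (Set.univ.pi s).indicator (fun x => ∏ i, d i (x i)) x := by
  by_cases hx : x ∈ Set.univ.pi s
  · rw [Set.indicator_of_mem hx]
    exact Finset.prod_congr rfl fun i _ => Set.indicator_of_mem (hx i trivial) _
  · rw [Set.indicator_of_notMem hx]
    obtain ⟨i, hi⟩ : ∃ i, x i ∉ s i := by simpa [Set.mem_pi] using hx
    exact Finset.prod_eq_zero (Finset.mem_univ i) (Set.indicator_of_notMem hi _)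

variable {ι : Type*} [Fintype ι] {X : ι → Type*} [∀ i, MeasurableSpace (X i)]

theorem lintegral_fin_prod_eq_prod {n : ℕ} {X : Fin n → Type*} [∀ i, MeasurableSpace (X i)]
    (μ : ∀ i, Measure (X i)) [∀ i, SigmaFinite (μ i)] {f : ∀ i, X i → ℝ≥0∞}
    (hf : ∀ i, Measurable (f i)) :
    ∫⁻ x, ∏ i, f i (x i) ∂Measure.pi μ = ∏ i, ∫⁻ x, f i x ∂μ i := by
  induction n with
  | zero => simp
  | succ n ih =>
    calc ∫⁻ x, ∏ i, f i (x i) ∂Measure.pi μ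
        = ∫⁻ x : X 0 × (∀ i : Fin n, X i.succ), f 0 x.1 * ∏ i : Fin n, f i.succ (x.2 i)
            ∂(μ 0).prod (Measure.pi fun i => μ i.succ) := by
          rw [← (measurePreserving_piFinSuccAbove μ 0).symm.lintegral_comp_emb
            (MeasurableEquiv.measurableEmbedding _)]
          simp_rw [MeasurableEquiv.piFinSuccAbove_symm_apply, Fin.insertNthEquiv,
            Fin.prod_univ_succ, Fin.insertNth_zero]
          rfl
      _ = (∫⁻ x, f 0 x ∂μ 0) * ∏ i : Fin n, ∫⁻ x, f i.succ x ∂μ i.succ := by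
          rw [← ih (fun i => μ i.succ) fun i => hf i.succ, ← lintegral_prod_mul]
          · exact (hf 0).aemeasurable
          · exact (Finset.measurable_prod _ fun i _ =>
              (hf i.succ).comp (measurable_pi_apply i)).aemeasurable
      _ = ∏ i, ∫⁻ x, f i x ∂μ i := by rw [Fin.prod_univ_succ]

theorem lintegral_fintype_prod_eq_prod (μ : ∀ i, Measure (X i)) [∀ i, SigmaFinite (μ i)]
    {f : ∀ i, X i → ℝ≥0∞} (hf : ∀ i, Measurable (f i)) :
    ∫⁻ x, ∏ i, f i (x i) ∂Measure.pi μ = ∏ i, ∫⁻ x, f i x ∂μ i := by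
  let e := (Fintype.equivFin ι).symm
  rw [← (measurePreserving_piCongrLeft _ e).lintegral_comp_emb
    (MeasurableEquiv.measurableEmbedding _)]
  simp_rw [← e.prod_comp, MeasurableEquiv.coe_piCongrLeft, Equiv.piCongrLeft_apply_apply]
  exact lintegral_fin_prod_eq_prod _ fun i => hf (e i)

theorem pi_withDensity (μ : ∀ i, Measure (X i)) [∀ i, SigmaFinite (μ i)]
    {d : ∀ i, X i → ℝ≥0∞} (hd : ∀ i, Measurable (d i))
    [∀ i, SigmaFinite ((μ i).withDensity (d i))] :
    Measure.pi (fun i => (μ i).withDensity (d i))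
      = (Measure.pi μ).withDensity fun x => ∏ i, d i (x i) := by
  refine Measure.pi_eq fun s hs => ?_
  rw [withDensity_apply _ (MeasurableSet.univ_pi hs),
    ← lintegral_indicator (MeasurableSet.univ_pi hs)]
  simp_rw [← prod_indicator_eq_indicator_pi, withDensity_apply _ (hs _),
    ← lintegral_indicator (hs _)]
  exact lintegral_fintype_prod_eq_prod μ fun i => (hd i).indicator (hs i)

theorem measurePreserving_update [DecidableEq ι] (κ : ∀ i, Measure (X i))
    [∀ i, IsProbabilityMeasure (κ i)] (j : ι) :
    MeasurePreserving (fun p : (∀ i, X i) × X j => Function.update p.1 j p.2)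
      ((Measure.pi κ).prod (κ j)) (Measure.pi κ) := by
  refine ⟨measurable_update', (Measure.pi_eq fun s hs => ?_).symm⟩
  have hpre : (fun p : (∀ i, X i) × X j => Function.update p.1 j p.2) ⁻¹' Set.univ.pi s
      = Set.univ.pi (Function.update s j Set.univ) ×ˢ s j := by
    ext ⟨u, t⟩
    simp only [Set.mem_preimage, Set.mem_univ_pi, Set.mem_prod]
    refine ⟨fun h => ⟨fun i => ?_, by simpa using h j⟩, fun h i => ?_⟩ <;>
    rcases eq_or_ne i j with rfl | hi
    · simp
    · simpa [hi] using h i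
    · simpa using h.2
    · simpa [hi] using h.1 i
  rw [Measure.map_apply (measurable_update') (MeasurableSet.univ_pi hs), hpre,
    Measure.prod_prod, Measure.pi_pi, ← Finset.prod_erase_mul _ _ (Finset.mem_univ j),
    ← Finset.prod_erase_mul _ (fun i => κ i (s i)) (Finset.mem_univ j)]
  simp only [Function.update_self, measure_univ, mul_one]
  congr 1
  exact Finset.prod_congr rfl fun i hi => by rw [Function.update_of_ne (Finset.ne_of_mem_erase hi)]

theorem measurePreserving_pi_subtype (κ : ∀ i, Measure (X i)) [∀ i, IsProbabilityMeasure (κ i)]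
    (p : ι → Prop) [DecidablePred p] :
    MeasurePreserving (fun (u : ∀ i, X i) (j : {i // p i}) => u j) (Measure.pi κ)
      (Measure.pi fun j : {i // p i} => κ j) :=
  (measurePreserving_fst (ν := Measure.pi fun j : {i // ¬ p i} => κ j)).comp
    (measurePreserving_piEquivPiSubtypeProd κ p)

end ProductMeasures

section OneDimensionalMeasures

theorem betaMeasure_eq_withDensity_restrict (α β : ℝ) :
    ProbabilityTheory.betaMeasure α β = (volume.restrict (Set.Ioo 0 1)).withDensity fun u =>
      ENNReal.ofReal (1 / ProbabilityTheory.beta α β * u ^ (α - 1) * (1 - u) ^ (β - 1)) := by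
  rw [← withDensity_indicator measurableSet_Ioo, ProbabilityTheory.betaMeasure]
  congr 1 with u
  rw [ProbabilityTheory.betaPDF_eq, Set.indicator_apply]
  simp only [Set.mem_Ioo, apply_ite ENNReal.ofReal, ENNReal.ofReal_zero]

/-- The mixing law of one coordinate: the Beta distribution `B(a, a)` for a singular coordinate
(`0 < a`). A regular coordinate has exponent `0` and needs no averaging; the Dirac mass at `0`
encodes this, so that both kinds of coordinates are treated alike. -/
noncomputable def symmBeta (a : ℝ) : Measure ℝ :=
  open Classical in if 0 < a then ProbabilityTheory.betaMeasure a a else Measure.dirac 0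

theorem symmBeta_of_pos {a : ℝ} (ha : 0 < a) :
    symmBeta a = ProbabilityTheory.betaMeasure a a := if_pos ha

theorem symmBeta_zero : symmBeta 0 = Measure.dirac 0 := if_neg (lt_irrefl 0)

instance (a : ℝ) : IsProbabilityMeasure (symmBeta a) := by
  unfold symmBeta
  split_ifs with ha
  · exact ProbabilityTheory.isProbabilityMeasureBeta ha ha
  · infer_instance

theorem ae_symmBeta_mem_Icc (a : ℝ) : ∀ᵐ u ∂symmBeta a, u ∈ Set.Icc 0 1 := by
  unfold symmBeta
  split_ifs with ha
  · rw [betaMeasure_eq_withDensity_restrict]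
    exact (withDensity_absolutelyContinuous _ _).ae_le
      ((ae_restrict_mem measurableSet_Ioo).mono fun u hu => Set.Ioo_subset_Icc_self hu)
  · exact (ae_dirac_iff measurableSet_Icc).2 (by simp)

/-- The range of one coordinate: the open half line if the coordinate is singular (`0 < a`), the
whole line otherwise. -/
def coordRange (a : ℝ) : Set ℝ := {y | 0 < a → 0 < y}

theorem coordRange_of_pos {a : ℝ} (ha : 0 < a) : coordRange a = Set.Ioi 0 := by
  ext; simp [coordRange, ha]

theorem coordRange_zero : coordRange 0 = Set.univ := by
  ext; simp [coordRange]

theorem isOpen_coordRange (a : ℝ) : IsOpen (coordRange a) := by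
  by_cases ha : 0 < a
  · exact coordRange_of_pos ha ▸ isOpen_Ioi
  · simp [coordRange, ha]

/-- The reference measure `y ^ (2a) dy` of one coordinate. -/
noncomputable def weightedLebesgue (a : ℝ) : Measure ℝ :=
  (volume.restrict (coordRange a)).withDensity fun y => ENNReal.ofReal (y ^ (2 * a))

instance (a : ℝ) : SigmaFinite (weightedLebesgue a) := by
  unfold weightedLebesgue; infer_instance

theorem weightedLebesgue_of_pos {a : ℝ} (ha : 0 < a) :
    weightedLebesgue a =
      (volume.restrict (Set.Ioi 0)).withDensity fun y => ENNReal.ofReal (y ^ (2 * a)) := by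
  rw [weightedLebesgue, coordRange_of_pos ha]

theorem weightedLebesgue_zero : weightedLebesgue 0 = volume := by
  simp only [weightedLebesgue, coordRange_zero, mul_zero, rpow_zero, ENNReal.ofReal_one,
    Measure.restrict_univ]
  exact withDensity_one

theorem ae_weightedLebesgue_mem (a : ℝ) : ∀ᵐ y ∂weightedLebesgue a, y ∈ coordRange a :=
  (withDensity_absolutelyContinuous _ _).ae_le (ae_restrict_mem (isOpen_coordRange a).measurableSet)

end OneDimensionalMeasures

section GaussianIntegrals

theorem lintegral_exp_neg_mul_sq_sub {τ : ℝ} (hτ : 0 < τ) (ξ : ℝ) :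
    ∫⁻ y, ENNReal.ofReal (exp (-(τ * (y - ξ) ^ 2))) = ENNReal.ofReal (√π * τ ^ (-(1 / 2) : ℝ)) := by
  rw [lintegral_sub_right_eq_self (fun y => ENNReal.ofReal (exp (-(τ * y ^ 2)))) ξ]
  simp only [← neg_mul]
  rw [← ofReal_integral_eq_lintegral_ofReal (integrable_exp_neg_mul_sq hτ)
    (Eventually.of_forall fun x => (exp_pos _).le), integral_gaussian, sqrt_div' _ hτ.le,
    rpow_neg hτ.le, ← sqrt_eq_rpow, div_eq_mul_inv]

theorem lintegral_Ioi_rpow_mul_exp_neg_mul_sq {τ a : ℝ} (hτ : 0 < τ) (ha : 0 < a) :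
    ∫⁻ y in Set.Ioi (0 : ℝ), ENNReal.ofReal (y ^ (2 * a - 1) * exp (-(τ * y ^ 2)))
      = ENNReal.ofReal (1 / 2 * Real.Gamma a * τ ^ (-a)) := by
  have hint := integrableOn_rpow_mul_exp_neg_mul_sq hτ (s := 2 * a - 1) (by linarith)
  have hval := integral_rpow_mul_exp_neg_mul_rpow (p := 2) (q := 2 * a - 1) (b := τ)
    two_pos (by linarith) hτ
  simp only [rpow_two] at hval
  simp only [← neg_mul]
  rw [← ofReal_integral_eq_lintegral_ofReal hint ((ae_restrict_iff' measurableSet_Ioi).2 <|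
    Eventually.of_forall fun x hx => mul_nonneg (rpow_nonneg (le_of_lt hx) _) (exp_pos _).le), hval,
    sub_add_cancel, mul_div_cancel_left₀ _ two_ne_zero, neg_div,
    mul_div_cancel_left₀ _ two_ne_zero]
  ring_nf

theorem lintegral_upperHalfPlane_polar {f : ℝ × ℝ → ℝ≥0∞} (hf : Measurable f) :
    ∫⁻ p in Set.univ ×ˢ Set.Ioi 0, f p
      = ∫⁻ r in Set.Ioi (0 : ℝ), ∫⁻ θ in Set.Ioo 0 π,
          ENNReal.ofReal r * f (r * cos θ, r * sin θ) := by
  have hS : MeasurableSet (Set.univ ×ˢ Set.Ioi (0 : ℝ) : Set (ℝ × ℝ)) :=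
    MeasurableSet.univ.prod measurableSet_Ioi
  have hpolar : Measurable fun p : ℝ × ℝ => polarCoord.symm p := by
    simp only [polarCoord_symm_apply]; fun_prop
  rw [← lintegral_indicator hS, ← lintegral_comp_polarCoord_symm, polarCoord_target,
    Measure.volume_eq_prod, ← Measure.prod_restrict, lintegral_prod]
  rotate_left
  · exact ((ENNReal.measurable_ofReal.comp measurable_fst).smul
      ((hf.indicator hS).comp hpolar)).aemeasurable
  refine setLIntegral_congr_fun measurableSet_Ioi fun r (hr : 0 < r) => ?_
  rw [← lintegral_indicator measurableSet_Ioo, ← lintegral_indicator measurableSet_Ioo]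
  refine lintegral_congr fun θ => ?_
  simp only [smul_eq_mul, polarCoord_symm_apply, Set.indicator_apply, Set.mem_prod, Set.mem_univ,
    Set.mem_Ioi, true_and]
  by_cases hθ : θ ∈ Set.Ioo 0 π
  · rw [if_pos hθ, if_pos ⟨by linarith [hθ.1, pi_pos], hθ.2⟩,
      if_pos (mul_pos hr (sin_pos_of_mem_Ioo hθ))]
  · rw [if_neg hθ, ite_eq_right_iff]
    intro hθ'
    have hsin : sin θ ≤ 0 :=
      sin_nonpos_of_nonpos_of_neg_pi_le (not_lt.1 fun h => hθ ⟨h, hθ'.2⟩) hθ'.1.le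
    rw [if_neg (not_lt.2 (mul_nonpos_of_nonneg_of_nonpos hr.le hsin)), mul_zero]

theorem image_one_sub_cos_div_two :
    (fun θ : ℝ => (1 - cos θ) / 2) '' Set.Ioo 0 π = Set.Ioo 0 1 := by
  ext u
  constructor
  · rintro ⟨θ, ⟨h0, hπ⟩, rfl⟩
    have h1 := strictAntiOn_cos (Set.left_mem_Icc.2 pi_pos.le) ⟨h0.le, hπ.le⟩ h0
    have h2 := strictAntiOn_cos ⟨h0.le, hπ.le⟩ (Set.right_mem_Icc.2 pi_pos.le) hπ
    rw [cos_zero] at h1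
    rw [cos_pi] at h2
    exact ⟨by simp only; linarith, by simp only; linarith⟩
  · rintro ⟨h0, h1⟩
    refine ⟨arccos (1 - 2 * u),
      ⟨arccos_pos.2 (by linarith), (arccos_le_pi _).lt_of_ne fun h => ?_⟩, ?_⟩
    · linarith [arccos_eq_pi.1 h]
    · simp only
      rw [cos_arccos (by linarith) (by linarith)]
      ring

theorem betaDensity_one_sub_cos_div_two (a : ℝ) {θ : ℝ} (hθ : θ ∈ Set.Ioo 0 π) :
    sin θ / 2 * (1 / ProbabilityTheory.beta a a * ((1 - cos θ) / 2) ^ (a - 1) *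
        (1 - (1 - cos θ) / 2) ^ (a - 1))
      = 2 ^ (1 - 2 * a) / ProbabilityTheory.beta a a * sin θ ^ (2 * a - 1) := by
  have hsin : 0 < sin θ := sin_pos_of_mem_Ioo hθ
  have hu : (1 - cos θ) / 2 ∈ Set.Ioo 0 1 := image_one_sub_cos_div_two ▸ Set.mem_image_of_mem _ hθ
  have hsq : (1 - cos θ) / 2 * (1 - (1 - cos θ) / 2) = (sin θ / 2) ^ (2 : ℝ) := by
    rw [rpow_two]; nlinarith [sin_sq_add_cos_sq θ]
  rw [mul_assoc (1 / _), ← mul_rpow hu.1.le (sub_nonneg.2 hu.2.le), hsq, ← rpow_mul (by positivity),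
    show 2 * (a - 1) = 2 * a - 1 - 1 by ring, rpow_sub_one (by positivity),
    div_rpow hsin.le zero_le_two, show 1 - 2 * a = -(2 * a - 1) by ring, rpow_neg zero_le_two]
  field_simp

theorem lintegral_betaMeasure_self (a : ℝ) {F : ℝ → ℝ≥0∞} (hF : Measurable F) :
    ∫⁻ u, F u ∂ProbabilityTheory.betaMeasure a a
      = ∫⁻ θ in Set.Ioo 0 π, ENNReal.ofReal (2 ^ (1 - 2 * a) / ProbabilityTheory.beta a a *
          sin θ ^ (2 * a - 1)) * F ((1 - cos θ) / 2) := by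
  rw [betaMeasure_eq_withDensity_restrict,
    lintegral_withDensity_eq_lintegral_mul _ (by fun_prop) hF, ← image_one_sub_cos_div_two,
    lintegral_image_eq_lintegral_abs_deriv_mul (f' := fun θ => sin θ / 2) measurableSet_Ioo]
  · refine setLIntegral_congr_fun measurableSet_Ioo fun θ hθ => ?_
    have hsin : 0 < sin θ := sin_pos_of_mem_Ioo hθ
    rw [← betaDensity_one_sub_cos_div_two a hθ, abs_of_pos (half_pos hsin), Pi.mul_apply,
      ← mul_assoc, ← ENNReal.ofReal_mul (half_pos hsin).le]
  · intro θ _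
    simpa using (((hasDerivAt_cos θ).const_sub 1).div_const 2).hasDerivWithinAt
  · intro x hx y hy hxy
    have hcos : cos x = cos y := by simp only at hxy; linarith
    exact injOn_cos ⟨hx.1.le, hx.2.le⟩ ⟨hy.1.le, hy.2.le⟩ hcos

theorem lintegral_polar_gaussian {a τ : ℝ} (ha : 0 < a) (hτ : 0 < τ) (ξ : ℝ) :
    ∫⁻ r in Set.Ioi (0 : ℝ), ∫⁻ θ in Set.Ioo 0 π, ENNReal.ofReal (r ^ (2 * a) *
        sin θ ^ (2 * a - 1) * exp (-(τ * (r ^ 2 + ξ ^ 2 - 2 * r * ξ * cos θ))))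
      = ENNReal.ofReal (√π * (1 / 2) * Real.Gamma a * τ ^ (-a - 1 / 2)) := by
  calc _ = ∫⁻ r in Set.Ioi (0 : ℝ), ∫⁻ θ in Set.Ioo 0 π, ENNReal.ofReal r *
            (ENNReal.ofReal (exp (-(τ * (r * cos θ - ξ) ^ 2))) *
              ENNReal.ofReal ((r * sin θ) ^ (2 * a - 1) * exp (-(τ * (r * sin θ) ^ 2)))) := by
        refine setLIntegral_congr_fun measurableSet_Ioi fun r (hr : 0 < r) => ?_
        refine setLIntegral_congr_fun measurableSet_Ioo fun θ hθ => ?_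
        have hsin : 0 < sin θ := sin_pos_of_mem_Ioo hθ
        have hexp : exp (-(τ * (r ^ 2 + ξ ^ 2 - 2 * r * ξ * cos θ)))
            = exp (-(τ * (r * cos θ - ξ) ^ 2)) * exp (-(τ * (r * sin θ) ^ 2)) := by
          rw [← exp_add, mul_pow r (sin θ), sin_sq]
          ring_nf
        have hpow : r ^ (2 * a) = r * r ^ (2 * a - 1) := by
          rw [rpow_sub_one hr.ne']; field_simp
        rw [← ENNReal.ofReal_mul (exp_pos _).le, ← ENNReal.ofReal_mul hr.le, hexp, hpow,
          mul_rpow hr.le hsin.le]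
        ring_nf
    _ = ∫⁻ p in Set.univ ×ˢ Set.Ioi 0, ENNReal.ofReal (exp (-(τ * (p.1 - ξ) ^ 2))) *
          ENNReal.ofReal (p.2 ^ (2 * a - 1) * exp (-(τ * p.2 ^ 2))) :=
        (lintegral_upperHalfPlane_polar (f := fun p : ℝ × ℝ =>
          ENNReal.ofReal (exp (-(τ * (p.1 - ξ) ^ 2))) *
            ENNReal.ofReal (p.2 ^ (2 * a - 1) * exp (-(τ * p.2 ^ 2)))) (by fun_prop)).symm
    _ = _ := by
        rw [Measure.volume_eq_prod, ← Measure.prod_restrict, lintegral_prod_mul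
          (f := fun x => ENNReal.ofReal (exp (-(τ * (x - ξ) ^ 2))))
          (g := fun y => ENNReal.ofReal (y ^ (2 * a - 1) * exp (-(τ * y ^ 2))))
          (by fun_prop) (by fun_prop), Measure.restrict_univ, lintegral_exp_neg_mul_sq_sub hτ,
          lintegral_Ioi_rpow_mul_exp_neg_mul_sq hτ ha, ← ENNReal.ofReal_mul (by positivity),
          show -a - 1 / 2 = -(1 / 2) + -a by ring, rpow_add hτ]
        ring_nf

end GaussianIntegrals

section HeatAverage

/-- The one-dimensional Gaussian `exp (-τ (y - ξ)²)` averaged over the mixing law of the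
coordinate: one factor of the Gamma-subordinated kernel. -/
noncomputable def heatAverage (a τ y ξ : ℝ) : ℝ≥0∞ :=
  ∫⁻ u, ENNReal.ofReal (exp (-(τ * ((y - ξ) ^ 2 + 4 * y * ξ * u)))) ∂symmBeta a

/-- The total mass of `heatAverage a 1` with respect to `weightedLebesgue a`. -/
noncomputable def heatMass (a : ℝ) : ℝ :=
  open Classical in if 0 < a then Real.Gamma (a + 1 / 2) / 2 else √π

theorem heatMass_of_pos {a : ℝ} (ha : 0 < a) : heatMass a = Real.Gamma (a + 1 / 2) / 2 := if_pos ha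

theorem heatMass_zero : heatMass 0 = √π := if_neg (lt_irrefl 0)

theorem heatMass_pos {a : ℝ} : 0 < heatMass a := by
  unfold heatMass
  split_ifs
  · have := Real.Gamma_pos_of_pos (show 0 < a + 1 / 2 by linarith)
    positivity
  · positivity

theorem heatMass_eq_beta {a : ℝ} (ha : 0 < a) :
    heatMass a
      = 2 ^ (1 - 2 * a) / ProbabilityTheory.beta a a * (√π * (1 / 2) * Real.Gamma a) := by
  have hΓ := (Real.Gamma_pos_of_pos ha).ne'
  have hΓ2 := (Real.Gamma_pos_of_pos (mul_pos two_pos ha)).ne'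
  have hdup : Real.Gamma (a + 1 / 2)
      = Real.Gamma (2 * a) * 2 ^ (1 - 2 * a) * √π / Real.Gamma a := by
    rw [← Real.Gamma_mul_Gamma_add_half a, mul_div_cancel_left₀ _ hΓ]
  rw [heatMass_of_pos ha, hdup, ProbabilityTheory.beta, ← two_mul]
  field_simp

theorem heatAverage_of_pos {a : ℝ} (ha : 0 < a) (τ y ξ : ℝ) :
    heatAverage a τ y ξ = ∫⁻ θ in Set.Ioo 0 π, ENNReal.ofReal (2 ^ (1 - 2 * a) /
      ProbabilityTheory.beta a a * sin θ ^ (2 * a - 1) *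
        exp (-(τ * (y ^ 2 + ξ ^ 2 - 2 * y * ξ * cos θ)))) := by
  have hB := ProbabilityTheory.beta_pos ha ha
  rw [heatAverage, symmBeta_of_pos ha, lintegral_betaMeasure_self a (by fun_prop)]
  refine setLIntegral_congr_fun measurableSet_Ioo fun θ hθ => ?_
  have hsin : 0 < sin θ := sin_pos_of_mem_Ioo hθ
  rw [← ENNReal.ofReal_mul (by positivity)]
  ring_nf

theorem heatAverage_zero (τ y ξ : ℝ) :
    heatAverage 0 τ y ξ = ENNReal.ofReal (exp (-(τ * (y - ξ) ^ 2))) := by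
  rw [heatAverage, symmBeta_zero, lintegral_dirac, mul_zero, add_zero]

theorem lintegral_heatAverage {a τ : ℝ} (ha : 0 ≤ a) (hτ : 0 < τ) (ξ : ℝ) :
    ∫⁻ y, heatAverage a τ y ξ ∂weightedLebesgue a
      = ENNReal.ofReal (heatMass a * τ ^ (-a - 1 / 2)) := by
  rcases ha.eq_or_lt with rfl | ha
  · simp only [heatAverage_zero, weightedLebesgue_zero, heatMass_zero,
      lintegral_exp_neg_mul_sq_sub hτ, neg_zero, zero_sub]
  · have hB := ProbabilityTheory.beta_pos ha ha
    rw [weightedLebesgue_of_pos ha, lintegral_withDensity_eq_lintegral_mul_non_measurable _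
      (by fun_prop) (Eventually.of_forall fun _ => ENNReal.ofReal_lt_top), heatMass_eq_beta ha,
      mul_assoc (_ / _), ENNReal.ofReal_mul (by positivity), ← lintegral_polar_gaussian ha hτ ξ,
      ← lintegral_const_mul' _ _ ENNReal.ofReal_ne_top]
    refine setLIntegral_congr_fun measurableSet_Ioi fun r (hr : 0 < r) => ?_
    simp only [Pi.mul_apply, heatAverage_of_pos ha]
    rw [← lintegral_const_mul' _ _ ENNReal.ofReal_ne_top,
      ← lintegral_const_mul' _ _ ENNReal.ofReal_ne_top]
    refine setLIntegral_congr_fun measurableSet_Ioo fun θ _ => ?_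
    rw [← ENNReal.ofReal_mul (by positivity), ← ENNReal.ofReal_mul (by positivity)]
    ring_nf

end HeatAverage

section BetaIntegrationByParts

theorem integrable_betaMeasure_of_continuousOn {α β : ℝ} (hα : 0 < α) (hβ : 0 < β) {f : ℝ → ℝ}
    (hf : ContinuousOn f (Set.Icc 0 1)) : Integrable f (ProbabilityTheory.betaMeasure α β) := by
  have := ProbabilityTheory.isProbabilityMeasureBeta hα hβ
  have hmem : ∀ᵐ u ∂ProbabilityTheory.betaMeasure α β, u ∈ Set.Icc 0 1 := by
    rw [betaMeasure_eq_withDensity_restrict]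
    exact (withDensity_absolutelyContinuous _ _).ae_le
      ((ae_restrict_mem measurableSet_Ioo).mono fun u hu => Set.Ioo_subset_Icc_self hu)
  rw [← Measure.restrict_eq_self_of_ae_mem hmem]
  exact hf.integrableOn_compact isCompact_Icc

theorem hasDerivAt_rpow_mul_one_sub_rpow_mul (α β : ℝ) {φ : ℝ → ℝ} {φ' u : ℝ}
    (hu : u ∈ Set.Ioo (0 : ℝ) 1) (hφ : HasDerivAt φ φ' u) :
    HasDerivAt (fun u => u ^ α * (1 - u) ^ β * φ u)
      (u ^ (α - 1) * (1 - u) ^ (β - 1) * ((α * (1 - u) - β * u) * φ u + u * (1 - u) * φ')) u := by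
  have hu0 : 0 < u := hu.1
  have hu1 : 0 < 1 - u := sub_pos.2 hu.2
  convert! (((hasDerivAt_id u).rpow_const (p := α) (Or.inl hu0.ne')).mul
    (((hasDerivAt_id u).const_sub 1).rpow_const (p := β) (Or.inl hu1.ne'))).mul hφ using 1
  simp only [id_eq, Pi.mul_apply, rpow_sub_one hu0.ne', rpow_sub_one hu1.ne']
  field_simp
  ring

theorem integral_betaMeasure_stein {α β : ℝ} (hα : 0 < α) (hβ : 0 < β) {φ φ' : ℝ → ℝ}
    (hφ : ContinuousOn φ (Set.Icc 0 1)) (hφ' : ContinuousOn φ' (Set.Icc 0 1))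
    (hderiv : ∀ u ∈ Set.Ioo 0 1, HasDerivAt φ (φ' u) u) :
    ∫ u, ((α * (1 - u) - β * u) * φ u + u * (1 - u) * φ' u)
      ∂ProbabilityTheory.betaMeasure α β = 0 := by
  set H : ℝ → ℝ := fun u => (α * (1 - u) - β * u) * φ u + u * (1 - u) * φ' u with hH
  have hHint : Integrable H (ProbabilityTheory.betaMeasure α β) :=
    integrable_betaMeasure_of_continuousOn hα hβ (by fun_prop)
  have hB := ProbabilityTheory.beta_pos hα hβ
  set d : ℝ → ℝ := fun u =>
    1 / ProbabilityTheory.beta α β * u ^ (α - 1) * (1 - u) ^ (β - 1) with hd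
  have hd_smul : ∀ u ∈ Set.Ioo (0 : ℝ) 1, (ENNReal.ofReal (d u)).toReal • H u = d u * H u := by
    intro u hu
    have hu0 : 0 < u := hu.1
    have hu1 : 0 < 1 - u := sub_pos.2 hu.2
    rw [ENNReal.toReal_ofReal (by positivity), smul_eq_mul]
  rw [betaMeasure_eq_withDensity_restrict] at hHint ⊢
  rw [integrable_withDensity_iff_integrable_smul' (by fun_prop)
    (Eventually.of_forall fun _ => ENNReal.ofReal_lt_top)] at hHint
  rw [integral_withDensity_eq_integral_toReal_smul (by fun_prop)
    (Eventually.of_forall fun _ => ENNReal.ofReal_lt_top),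
    setIntegral_congr_fun measurableSet_Ioo hd_smul, ← integral_Ioc_eq_integral_Ioo,
    ← intervalIntegral.integral_of_le zero_le_one,
    intervalIntegral.integral_eq_sub_of_hasDerivAt_of_le zero_le_one
      (f := fun u => 1 / ProbabilityTheory.beta α β * (u ^ α * (1 - u) ^ β * φ u))]
  · simp [zero_rpow hα.ne', zero_rpow hβ.ne']
  · have hpow : ContinuousOn (fun u : ℝ => u ^ α * (1 - u) ^ β) (Set.Icc 0 1) :=
      ((continuous_id.rpow_const fun _ => Or.inr hα.le).mul
        ((continuous_const.sub continuous_id).rpow_const fun _ => Or.inr hβ.le)).continuousOn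
    exact continuousOn_const.mul (hpow.mul hφ)
  · intro u hu
    exact ((hasDerivAt_rpow_mul_one_sub_rpow_mul α β hu (hderiv u hu)).const_mul
      (1 / ProbabilityTheory.beta α β)).congr_deriv (by simp only [hd, hH]; ring)
  · rw [intervalIntegrable_iff_integrableOn_Ioo_of_le zero_le_one]
    exact IntegrableOn.congr_fun hHint hd_smul measurableSet_Ioo

theorem integral_symmBeta_stein {a : ℝ} (ha : 0 ≤ a) {φ φ' : ℝ → ℝ}
    (hφ : ContinuousOn φ (Set.Icc 0 1)) (hφ' : ContinuousOn φ' (Set.Icc 0 1))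
    (hderiv : ∀ u ∈ Set.Ioo 0 1, HasDerivAt φ (φ' u) u) :
    ∫ u, (a * (1 - 2 * u) * φ u + u * (1 - u) * φ' u) ∂symmBeta a = 0 := by
  rcases ha.eq_or_lt with rfl | ha
  · simp [symmBeta_zero]
  · rw [symmBeta_of_pos ha, ← integral_betaMeasure_stein ha ha hφ hφ' hderiv]
    congr with u
    ring

end BetaIntegrationByParts

section WeightedHeatAverage

theorem sq_abs_sub_abs_le {y ξ u : ℝ} (hu : u ∈ Set.Icc (0 : ℝ) 1) :
    (|y| - |ξ|) ^ 2 ≤ (y - ξ) ^ 2 + 4 * y * ξ * u := by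
  have hcross : y * ξ * (1 - 2 * u) ≤ |y| * |ξ| :=
    calc y * ξ * (1 - 2 * u) ≤ |y * ξ| * |1 - 2 * u| := (le_abs_self _).trans (abs_mul _ _).le
      _ ≤ |y * ξ| * 1 := by
        gcongr
        exact abs_le.2 ⟨by linarith [hu.2], by linarith [hu.1]⟩
      _ = |y| * |ξ| := by rw [mul_one, abs_mul]
  nlinarith [sq_abs y, sq_abs ξ]

theorem one_add_sq_rpow_le_one {s : ℝ} (hs : 0 ≤ s) (y : ℝ) : (1 + y ^ 2) ^ (-s / 2) ≤ 1 :=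
  rpow_le_one_of_one_le_of_nonpos (by nlinarith [sq_nonneg y]) (by linarith)

theorem measurable_heatAverage (a : ℝ) :
    Measurable fun p : ℝ × ℝ × ℝ => heatAverage a p.1 p.2.1 p.2.2 := by
  refine Measurable.lintegral_prod_right (f := fun (p : ℝ × ℝ × ℝ) (u : ℝ) => _) ?_
  unfold Function.uncurry
  fun_prop

theorem heatAverage_le_one (a : ℝ) {τ : ℝ} (hτ : 0 < τ) (y ξ : ℝ) : heatAverage a τ y ξ ≤ 1 := by
  calc heatAverage a τ y ξ ≤ ∫⁻ _, 1 ∂symmBeta a := by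
        refine lintegral_mono_ae ((ae_symmBeta_mem_Icc a).mono fun u hu => ?_)
        rw [ENNReal.ofReal_le_one, exp_le_one_iff, neg_nonpos]
        exact mul_nonneg hτ.le ((sq_nonneg _).trans (sq_abs_sub_abs_le hu))
    _ = 1 := by simp

/-- The integral of `heatAverage a τ · ξ` against the weight `(1 + y²) ^ (-s/2)`. -/
noncomputable def weightedHeatAverage (a s τ ξ : ℝ) : ℝ≥0∞ :=
  ∫⁻ y, ENNReal.ofReal ((1 + y ^ 2) ^ (-s / 2)) * heatAverage a τ y ξ ∂weightedLebesgue a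

theorem measurable_weightedHeatAverage (a s : ℝ) :
    Measurable fun p : ℝ × ℝ => weightedHeatAverage a s p.1 p.2 := by
  refine Measurable.lintegral_prod_right (f := fun (p : ℝ × ℝ) (y : ℝ) => _) ?_
  unfold Function.uncurry
  exact Measurable.mul (by fun_prop) ((measurable_heatAverage a).comp
    (by fun_prop : Measurable fun q : (ℝ × ℝ) × ℝ => (q.1.1, q.2, q.1.2)))

theorem weightedHeatAverage_le {a s τ : ℝ} (ha : 0 ≤ a) (hs : 0 ≤ s) (hτ : 0 < τ) (ξ : ℝ) :
    weightedHeatAverage a s τ ξ ≤ ENNReal.ofReal (heatMass a * τ ^ (-a - 1 / 2)) := by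
  rw [← lintegral_heatAverage ha hτ ξ]
  exact lintegral_mono fun y =>
    mul_le_of_le_one_left' (ENNReal.ofReal_le_one.2 (one_add_sq_rpow_le_one hs y))

theorem lintegral_comp_abs (f : ℝ → ℝ≥0∞) : ∫⁻ y, f |y| = 2 * ∫⁻ y in Set.Ioi 0, f y := by
  have hpos : ∫⁻ y in Set.Ioi 0, f |y| = ∫⁻ y in Set.Ioi 0, f y :=
    setLIntegral_congr_fun measurableSet_Ioi fun y hy => by rw [abs_of_pos hy]
  have hneg : ∫⁻ y in Set.Iio 0, f |y| = ∫⁻ y in Set.Ioi 0, f |y| := by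
    rw [← (Measure.measurePreserving_neg (volume : Measure ℝ)).setLIntegral_comp_preimage_emb
      (MeasurableEquiv.neg ℝ).measurableEmbedding]
    simp only [abs_neg, Set.neg_preimage, Set.neg_Iio, neg_zero]
  rw [← lintegral_add_compl _ measurableSet_Ioi, Set.compl_Ioi, ← restrict_Iio_eq_restrict_Iic,
    hneg, hpos, two_mul]

theorem setLIntegral_abs_rpow {p ρ : ℝ} (hp : -1 < p) (hρ : 0 < ρ) :
    ∫⁻ y in {y : ℝ | |y| < ρ}, ENNReal.ofReal (|y| ^ p)
      = ENNReal.ofReal (2 / (p + 1) * ρ ^ (p + 1)) := by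
  have hval : ∫⁻ y in Set.Ioo 0 ρ, ENNReal.ofReal (y ^ p)
      = ENNReal.ofReal (ρ ^ (p + 1) / (p + 1)) := by
    rw [restrict_Ioo_eq_restrict_Ioc, ← ofReal_integral_eq_lintegral_ofReal
      ((intervalIntegrable_iff_integrableOn_Ioc_of_le hρ.le).1
        (intervalIntegral.intervalIntegrable_rpow' hp))
      ((ae_restrict_iff' measurableSet_Ioc).2 <| Eventually.of_forall fun y hy =>
        rpow_nonneg hy.1.le p),
      ← intervalIntegral.integral_of_le hρ.le, integral_rpow (Or.inl hp),
      zero_rpow (by linarith), sub_zero]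
  calc _ = ∫⁻ y, (Set.Iio ρ).indicator (fun y => ENNReal.ofReal (y ^ p)) |y| :=
        (lintegral_indicator (measurableSet_lt measurable_abs measurable_const) _).symm
    _ = 2 * ∫⁻ y in Set.Ioo 0 ρ, ENNReal.ofReal (y ^ p) := by
        rw [lintegral_comp_abs, setLIntegral_indicator measurableSet_Iio, Set.Iio_inter_Ioi]
    _ = ENNReal.ofReal (2 / (p + 1) * ρ ^ (p + 1)) := by
        rw [hval, ← ENNReal.ofReal_ofNat 2, ← ENNReal.ofReal_mul zero_le_two]
        ring_nf

theorem weightedLebesgue_le (a : ℝ) :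
    weightedLebesgue a ≤ volume.withDensity fun y => ENNReal.ofReal (|y| ^ (2 * a)) := by
  rw [weightedLebesgue, ← restrict_withDensity (isOpen_coordRange a).measurableSet]
  exact Measure.restrict_le_self.trans <| withDensity_mono <| Eventually.of_forall fun y =>
    ENNReal.ofReal_le_ofReal <| (le_abs_self _).trans (abs_rpow_le_abs_rpow _ _)

theorem setLIntegral_one_add_sq_rpow_le {a s ρ : ℝ} (hs : 0 ≤ s) (has : s < 2 * a + 1)
    (hρ : 0 < ρ) :
    ∫⁻ y in {y : ℝ | |y| < ρ}, ENNReal.ofReal ((1 + y ^ 2) ^ (-s / 2)) ∂weightedLebesgue a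
      ≤ ENNReal.ofReal (2 / (2 * a + 1 - s) * ρ ^ (2 * a + 1 - s)) := by
  calc _ ≤ ∫⁻ y in {y : ℝ | |y| < ρ}, ENNReal.ofReal ((1 + y ^ 2) ^ (-s / 2))
            ∂volume.withDensity fun y => ENNReal.ofReal (|y| ^ (2 * a)) :=
        lintegral_mono' (Measure.restrict_mono_measure (weightedLebesgue_le a) _) le_rfl
    _ = ∫⁻ y in {y : ℝ | |y| < ρ}, ENNReal.ofReal (|y| ^ (2 * a))
          * ENNReal.ofReal ((1 + y ^ 2) ^ (-s / 2)) := by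
        rw [restrict_withDensity (measurableSet_lt measurable_abs measurable_const),
          lintegral_withDensity_eq_lintegral_mul _ (by fun_prop) (by fun_prop)]
        rfl
    _ ≤ ∫⁻ y in {y : ℝ | |y| < ρ}, ENNReal.ofReal (|y| ^ (2 * a - s)) := by
        refine lintegral_mono_ae (ae_restrict_of_ae ?_)
        filter_upwards [Measure.ae_ne volume 0] with y hy
        have hy' : 0 < |y| := abs_pos.2 hy
        have hweight : (1 + y ^ 2) ^ (-s / 2) ≤ |y| ^ (-s) := by
          rw [show -s = 2 * (-s / 2) by ring, rpow_mul hy'.le, rpow_two, sq_abs,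
            mul_div_cancel_left₀ _ two_ne_zero]
          exact rpow_le_rpow_of_nonpos (by positivity) (by linarith) (by linarith)
        rw [← ENNReal.ofReal_mul (by positivity), sub_eq_add_neg, rpow_add hy']
        gcongr
    _ = _ := by
        rw [setLIntegral_abs_rpow (by linarith) hρ, show 2 * a - s + 1 = 2 * a + 1 - s by ring]

/-- Split at the diffusive scale `|y| = τ ^ (-1/2)`: inside, the weight is integrated and the kernel
is at most one; outside, the weight is at most `τ ^ (s/2)` and the kernel is integrated. -/
theorem weightedHeatAverage_le_rpow {a s τ : ℝ} (ha : 0 ≤ a) (hs : 0 ≤ s) (has : s < 2 * a + 1)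
    (hτ : 0 < τ) (ξ : ℝ) :
    weightedHeatAverage a s τ ξ
      ≤ ENNReal.ofReal ((2 / (2 * a + 1 - s) + heatMass a) * τ ^ (-a - 1 / 2 + s / 2)) := by
  set ρ := τ ^ (-(1 / 2) : ℝ) with hρdef
  have hρ : 0 < ρ := rpow_pos_of_pos hτ _
  have hpos : 0 < 2 * a + 1 - s := by linarith
  have hmass := heatMass_pos (a := a)
  have hρpow : ρ ^ (2 * a + 1 - s) = τ ^ (-a - 1 / 2 + s / 2) := by
    rw [hρdef, ← rpow_mul hτ.le]; ring_nf
  have hinside := setLIntegral_one_add_sq_rpow_le hs has hρ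
  have hms : MeasurableSet {y : ℝ | |y| < ρ} := measurableSet_lt measurable_abs measurable_const
  rw [weightedHeatAverage, ← lintegral_add_compl _ hms, add_mul,
    ENNReal.ofReal_add (mul_nonneg (div_pos two_pos hpos).le (by positivity)) (by positivity),
    ← hρpow]
  refine add_le_add (le_trans ?_ hinside) ?_
  · exact lintegral_mono fun y => mul_le_of_le_one_right' (heatAverage_le_one a hτ y ξ)
  · have hsplit : heatMass a * ρ ^ (2 * a + 1 - s)
        = τ ^ (s / 2) * (heatMass a * τ ^ (-a - 1 / 2)) := by
      rw [hρpow, rpow_add hτ]; ring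
    have hτs : τ ^ (s / 2) = (ρ ^ 2) ^ (-s / 2) := by
      rw [hρdef, ← rpow_natCast, ← rpow_mul hτ.le, ← rpow_mul hτ.le]; congr 1; push_cast; ring
    rw [hsplit, ENNReal.ofReal_mul (by positivity), ← lintegral_heatAverage ha hτ ξ,
      ← lintegral_const_mul' _ _ ENNReal.ofReal_ne_top]
    refine (setLIntegral_mono' hms.compl fun y hy => ?_).trans (setLIntegral_le_lintegral _ _)
    have hy : ρ ^ 2 ≤ |y| ^ 2 := by gcongr; exact not_lt.1 hy
    rw [sq_abs] at hy
    rw [hτs]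
    gcongr ENNReal.ofReal ?_ * _
    exact rpow_le_rpow_of_nonpos (by positivity) (by linarith) (by linarith)

end WeightedHeatAverage

section WeightedHeatAverageLimit

theorem tendsto_sq_cocompact_atTop : Tendsto (fun x : ℝ => x ^ 2) (cocompact ℝ) atTop := by
  simpa only [Function.comp_def, norm_eq_abs, sq_abs] using
    (tendsto_pow_atTop two_ne_zero).comp (tendsto_norm_cocompact_atTop (E := ℝ))

theorem tendsto_exp_neg_mul_sq_cocompact {τ : ℝ} (hτ : 0 < τ) :
    Tendsto (fun x : ℝ => exp (-(τ * x ^ 2))) (cocompact ℝ) (𝓝 0) :=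
  tendsto_exp_neg_atTop_nhds_zero.comp (tendsto_sq_cocompact_atTop.const_mul_atTop hτ)

theorem heatAverage_le_exp_mul (a : ℝ) {τ y ξ : ℝ} (hτ : 0 < τ) (hy : |y| ≤ |ξ| / 2) :
    heatAverage a τ y ξ
      ≤ ENNReal.ofReal (exp (-(τ / 8 * ξ ^ 2))) * heatAverage a (τ / 2) y ξ := by
  rw [heatAverage, heatAverage, ← lintegral_const_mul' _ _ ENNReal.ofReal_ne_top]
  refine lintegral_mono_ae ((ae_symmBeta_mem_Icc a).mono fun u hu => ?_)
  have hfar : (|ξ| / 2) ^ 2 ≤ (|ξ| - |y|) ^ 2 := by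
    gcongr
    linarith
  have hdist := sq_abs_sub_abs_le (y := y) (ξ := ξ) hu
  rw [div_pow, sq_abs] at hfar
  rw [← ENNReal.ofReal_mul (exp_pos _).le, ← exp_add]
  gcongr
  nlinarith

theorem weightedHeatAverage_le_add {a s τ : ℝ} (ha : 0 ≤ a) (hs : 0 ≤ s) (hτ : 0 < τ) (ξ : ℝ) :
    weightedHeatAverage a s τ ξ
      ≤ ENNReal.ofReal ((1 + ξ ^ 2 / 4) ^ (-s / 2)) *
          ENNReal.ofReal (heatMass a * τ ^ (-a - 1 / 2))
        + ENNReal.ofReal (exp (-(τ / 8 * ξ ^ 2))) *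
          ENNReal.ofReal (heatMass a * (τ / 2) ^ (-a - 1 / 2)) := by
  have hmeas : Measurable fun y => heatAverage a τ y ξ :=
    (measurable_heatAverage a).comp (by fun_prop : Measurable fun y : ℝ => (τ, y, ξ))
  rw [← lintegral_heatAverage ha hτ ξ, ← lintegral_heatAverage ha (half_pos hτ) ξ,
    ← lintegral_const_mul' _ _ ENNReal.ofReal_ne_top,
    ← lintegral_const_mul' _ _ ENNReal.ofReal_ne_top, ← lintegral_add_left (hmeas.const_mul _)]
  refine lintegral_mono fun y => ?_
  rcases le_total (|ξ| / 2) |y| with hy | hy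
  · refine le_add_right ?_
    have hsq : (|ξ| / 2) ^ 2 ≤ |y| ^ 2 := by gcongr
    rw [div_pow, sq_abs, sq_abs] at hsq
    gcongr ENNReal.ofReal ?_ * _
    exact rpow_le_rpow_of_nonpos (by positivity) (by linarith) (by linarith)
  · exact le_add_left <| (mul_le_of_le_one_left' (ENNReal.ofReal_le_one.2
      (one_add_sq_rpow_le_one hs y))).trans (heatAverage_le_exp_mul a hτ hy)

theorem tendsto_weightedHeatAverage {a s τ : ℝ} (ha : 0 ≤ a) (hs : 0 < s) (hτ : 0 < τ) :
    Tendsto (weightedHeatAverage a s τ) (cocompact ℝ) (𝓝 0) := by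
  have hweight : Tendsto (fun ξ : ℝ => (1 + ξ ^ 2 / 4) ^ (-s / 2)) (cocompact ℝ) (𝓝 0) := by
    rw [neg_div]
    exact (tendsto_rpow_neg_atTop (half_pos hs)).comp <| tendsto_atTop_add_const_left _ _ <|
      tendsto_sq_cocompact_atTop.atTop_div_const (by norm_num)
  have hexp := tendsto_exp_neg_mul_sq_cocompact (show 0 < τ / 8 by positivity)
  refine tendsto_of_tendsto_of_tendsto_of_le_of_le tendsto_const_nhds ?_ (fun _ => zero_le)
    (weightedHeatAverage_le_add ha hs.le hτ)
  simpa only [ENNReal.ofReal_zero, zero_mul, add_zero] using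
    (ENNReal.Tendsto.mul_const (ENNReal.tendsto_ofReal hweight) (Or.inr ENNReal.ofReal_ne_top)).add
      (ENNReal.Tendsto.mul_const (ENNReal.tendsto_ofReal hexp) (Or.inr ENNReal.ofReal_ne_top))

end WeightedHeatAverageLimit

section SubordinatedHeatAverage

theorem integrableOn_Ioi_min_rpow {p q : ℝ} (hp : p < -1) (hq : -1 < q) :
    IntegrableOn (fun t : ℝ => min (t ^ p) (t ^ q)) (Set.Ioi 0) := by
  have hmeas : Measurable fun t : ℝ => min (t ^ p) (t ^ q) := by fun_prop
  have hbound : ∀ {r t : ℝ}, 0 < t → min (t ^ p) (t ^ q) ≤ t ^ r →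
      ‖min (t ^ p) (t ^ q)‖ ≤ t ^ r := fun ht h => by
    rwa [norm_of_nonneg (le_min (rpow_nonneg ht.le p) (rpow_nonneg ht.le q))]
  rw [← Set.Ioc_union_Ioi_eq_Ioi zero_le_one, integrableOn_union]
  constructor
  · refine ((intervalIntegrable_iff_integrableOn_Ioc_of_le zero_le_one).1
      (intervalIntegral.intervalIntegrable_rpow' hq)).mono' hmeas.aestronglyMeasurable ?_
    filter_upwards [ae_restrict_mem measurableSet_Ioc] with t ht
    exact hbound ht.1 (min_le_right _ _)
  · refine (integrableOn_Ioi_rpow_of_lt hp one_pos).mono' hmeas.aestronglyMeasurable ?_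
    filter_upwards [ae_restrict_mem measurableSet_Ioi] with t ht
    exact hbound (zero_lt_one.trans ht) (min_le_left _ _)

/-- The potential, at height `η` above a face of exponent `b`, of the weight `(1 + y²) ^ (-s/2)` in
one tangential coordinate of exponent `a`, in its Gamma-subordinated form; every other tangential
coordinate only contributes a power of `τ`, and those powers cancel. -/
noncomputable def subordinatedHeatAverage (b a s η ξ : ℝ) : ℝ≥0∞ :=
  ∫⁻ τ in Set.Ioi (0 : ℝ),
    ENNReal.ofReal (τ ^ (b + a - 1) * exp (-(τ * η ^ 2))) * weightedHeatAverage a s τ ξ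

theorem rpow_mul_weightedHeatAverage_le {a b s τ : ℝ} (ha : 0 ≤ a) (hs : 0 ≤ s)
    (has : s < 2 * a + 1) (hτ : 0 < τ) (ξ : ℝ) :
    ENNReal.ofReal (τ ^ (b + a - 1)) * weightedHeatAverage a s τ ξ
      ≤ ENNReal.ofReal ((2 / (2 * a + 1 - s) + heatMass a) *
          min (τ ^ (b - 3 / 2)) (τ ^ (b - 3 / 2 + s / 2))) := by
  have hC : 0 ≤ 2 / (2 * a + 1 - s) := div_nonneg zero_le_two (by linarith)
  have hmass := heatMass_pos (a := a)
  rw [mul_min_of_nonneg _ _ (by positivity), ENNReal.ofReal_min]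
  refine le_min ?_ ?_
  · refine (mul_le_mul_right (weightedHeatAverage_le ha hs hτ ξ) _).trans ?_
    rw [← ENNReal.ofReal_mul (by positivity), mul_left_comm, ← rpow_add hτ,
      show b + a - 1 + (-a - 1 / 2) = b - 3 / 2 by ring]
    gcongr
    linarith
  · refine (mul_le_mul_right (weightedHeatAverage_le_rpow ha hs has hτ ξ) _).trans ?_
    rw [← ENNReal.ofReal_mul (by positivity), mul_left_comm, ← rpow_add hτ,
      show b + a - 1 + (-a - 1 / 2 + s / 2) = b - 3 / 2 + s / 2 by ring]

theorem tendsto_exp_mul_weightedHeatAverage {a s τ : ℝ} (ha : 0 ≤ a) (hs : 0 < s) (hτ : 0 < τ) :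
    Tendsto (fun p : ℝ × ℝ => ENNReal.ofReal (exp (-(τ * p.1 ^ 2))) *
      weightedHeatAverage a s τ p.2) (cocompact (ℝ × ℝ)) (𝓝 0) := by
  rw [← coprod_cocompact, Filter.coprod]
  refine Tendsto.sup ?_ ?_
  · have hexp := ENNReal.Tendsto.mul_const
      (ENNReal.tendsto_ofReal ((tendsto_exp_neg_mul_sq_cocompact hτ).comp
        (tendsto_comap (f := Prod.fst (β := ℝ)))))
      (Or.inr (ENNReal.ofReal_ne_top (r := heatMass a * τ ^ (-a - 1 / 2))))
    rw [ENNReal.ofReal_zero, zero_mul] at hexp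
    exact tendsto_of_tendsto_of_tendsto_of_le_of_le tendsto_const_nhds hexp (fun _ => zero_le)
      fun p => mul_le_mul_right (weightedHeatAverage_le ha hs.le hτ p.2) _
  · refine tendsto_of_tendsto_of_tendsto_of_le_of_le tendsto_const_nhds
      ((tendsto_weightedHeatAverage ha hs hτ).comp tendsto_comap) (fun _ => zero_le) fun p => ?_
    refine mul_le_of_le_one_left' (ENNReal.ofReal_le_one.2 (exp_le_one_iff.2 ?_))
    nlinarith [sq_nonneg p.1]

theorem tendsto_subordinatedHeatAverage {a b s : ℝ} (ha : 0 ≤ a) (hb : b < 1 / 2)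
    (hs : 0 < s) (has : s < 2 * a + 1) (hbs : 1 - 2 * b < s) :
    Tendsto (fun p : ℝ × ℝ => subordinatedHeatAverage b a s p.1 p.2) (cocompact (ℝ × ℝ))
      (𝓝 0) := by
  have hsplit : ∀ (τ : ℝ) (p : ℝ × ℝ),
      ENNReal.ofReal (τ ^ (b + a - 1) * exp (-(τ * p.1 ^ 2))) * weightedHeatAverage a s τ p.2
        = ENNReal.ofReal (τ ^ (b + a - 1)) *
          (ENNReal.ofReal (exp (-(τ * p.1 ^ 2))) * weightedHeatAverage a s τ p.2) := fun τ p => by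
    rw [ENNReal.ofReal_mul' (exp_pos _).le, mul_assoc]
  have : (cocompact (ℝ × ℝ)).IsCountablyGenerated := by
    rw [← Metric.cobounded_eq_cocompact, ← comap_norm_atTop]
    infer_instance
  rw [← lintegral_zero (μ := volume.restrict (Set.Ioi (0 : ℝ)))]
  refine tendsto_lintegral_filter_of_dominated_convergence
    (fun τ => ENNReal.ofReal ((2 / (2 * a + 1 - s) + heatMass a) *
          min (τ ^ (b - 3 / 2)) (τ ^ (b - 3 / 2 + s / 2))))
    (Eventually.of_forall fun p => ?_) (Eventually.of_forall fun p => ?_) ?_ ?_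
  · exact Measurable.mul (by fun_prop) ((measurable_weightedHeatAverage a s).comp
      (by fun_prop : Measurable fun τ : ℝ => (τ, p.2)))
  · filter_upwards [ae_restrict_mem measurableSet_Ioi] with τ (hτ : 0 < τ)
    rw [hsplit]
    refine (mul_le_mul_right (mul_le_of_le_one_left' ?_) _).trans
      (rpow_mul_weightedHeatAverage_le ha hs.le has hτ p.2)
    exact ENNReal.ofReal_le_one.2 (exp_le_one_iff.2 (by nlinarith [sq_nonneg p.1]))
  · exact ((integrableOn_Ioi_min_rpow (by linarith) (by linarith)).const_mul _).lintegral_lt_top.ne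
  · filter_upwards [ae_restrict_mem measurableSet_Ioi] with τ (hτ : 0 < τ)
    simp only [hsplit]
    simpa only [mul_zero] using ENNReal.Tendsto.const_mul
      (tendsto_exp_mul_weightedHeatAverage ha hs hτ) (Or.inr ENNReal.ofReal_ne_top)

end SubordinatedHeatAverage

section QuadForm

variable {ι : Type*} [Fintype ι]

/-- The joint mixing law of all coordinates. -/
noncomputable def mixingMeasure (a : ι → ℝ) : Measure (ι → ℝ) :=
  Measure.pi fun i => symmBeta (a i)

instance (a : ι → ℝ) : IsProbabilityMeasure (mixingMeasure a) := by
  unfold mixingMeasure; infer_instance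

theorem ae_mixingMeasure_mem_Icc (a : ι → ℝ) :
    ∀ᵐ u ∂mixingMeasure a, ∀ i, u i ∈ Set.Icc (0 : ℝ) 1 :=
  ae_all_iff.2 fun i => (Measure.quasiMeasurePreserving_eval (fun i => symmBeta (a i)) i).ae
    (ae_symmBeta_mem_Icc (a i))

theorem ae_mixingMeasure_eq_zero (a : ι → ℝ) : ∀ᵐ u ∂mixingMeasure a, ∀ i, a i = 0 → u i = 0 := by
  refine ae_all_iff.2 fun i => ?_
  refine (Measure.quasiMeasurePreserving_eval (fun i => symmBeta (a i)) i).ae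
    (p := fun t => a i = 0 → t = 0) ?_
  rcases eq_or_ne (a i) 0 with hi | hi
  · rw [hi, symmBeta_zero]
    exact (ae_dirac_iff (by simp)).2 fun _ => rfl
  · exact ae_of_all _ fun _ h => absurd h hi

/-- The quadratic form `|x - ξ|² + 4 ∑ xᵢ ξᵢ uᵢ`. For `u ∈ {0, 1}^ι` it is the squared distance
from `ξ` to one of the mirror images of `x` in the coordinate hyperplanes. -/
def quadForm (x u ξ : ι → ℝ) : ℝ := ∑ i, ((x i - ξ i) ^ 2 + 4 * x i * ξ i * u i)

theorem measurable_quadForm (ξ : ι → ℝ) :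
    Measurable fun z : (ι → ℝ) × (ι → ℝ) => quadForm z.1 z.2 ξ := by
  unfold quadForm; fun_prop

theorem sum_sq_abs_sub_abs_le_quadForm {u : ι → ℝ} (hu : ∀ i, u i ∈ Set.Icc (0 : ℝ) 1)
    (x ξ : ι → ℝ) : ∑ i, (|x i| - |ξ i|) ^ 2 ≤ quadForm x u ξ :=
  Finset.sum_le_sum fun i _ => sq_abs_sub_abs_le (hu i)

theorem sq_le_quadForm {k : ι} {x u : ι → ℝ} (hx : x k = 0) (hu : ∀ i, u i ∈ Set.Icc (0 : ℝ) 1)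
    (ξ : ι → ℝ) : ξ k ^ 2 ≤ quadForm x u ξ :=
  calc ξ k ^ 2 = (|x k| - |ξ k|) ^ 2 := by simp [hx]
    _ ≤ ∑ i, (|x i| - |ξ i|) ^ 2 :=
      Finset.single_le_sum (f := fun i => (|x i| - |ξ i|) ^ 2) (fun i _ => sq_nonneg _)
        (Finset.mem_univ k)
    _ ≤ quadForm x u ξ := sum_sq_abs_sub_abs_le_quadForm hu x ξ

theorem sum_sq_le_quadForm {u : ι → ℝ} (hu : ∀ i, u i ∈ Set.Icc (0 : ℝ) 1) (x ξ : ι → ℝ) :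
    ∑ i, x i ^ 2 ≤ 2 * quadForm x u ξ + 2 * ∑ i, ξ i ^ 2 :=
  calc ∑ i, x i ^ 2 ≤ ∑ i, (2 * (|x i| - |ξ i|) ^ 2 + 2 * ξ i ^ 2) :=
        Finset.sum_le_sum fun i _ => by
          nlinarith [sq_nonneg (|x i| - 2 * |ξ i|), sq_abs (x i), sq_abs (ξ i)]
    _ = 2 * ∑ i, (|x i| - |ξ i|) ^ 2 + 2 * ∑ i, ξ i ^ 2 := by
        rw [Finset.sum_add_distrib, Finset.mul_sum, Finset.mul_sum]
    _ ≤ _ := by gcongr; exact sum_sq_abs_sub_abs_le_quadForm hu x ξ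

theorem inv_mul_one_add_le {d R s Q : ℝ} (hd : 0 < d) (hR : 0 ≤ R) (hdQ : d ≤ Q)
    (hs : s ≤ 2 * Q + 2 * R) : (2 + (1 + 2 * R) / d)⁻¹ * (1 + s) ≤ Q := by
  rw [inv_mul_le_iff₀ (by positivity)]
  calc 1 + s ≤ 2 * Q + (1 + 2 * R) / d * d := by rw [div_mul_cancel₀ _ hd.ne']; linarith
    _ ≤ (2 + (1 + 2 * R) / d) * Q := by rw [add_mul]; gcongr

theorem exists_eventually_le_quadForm {k : ι} {ξ : ι → ℝ} (hξ : ξ k ≠ 0) :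
    ∃ κ > 0, ∀ᶠ η in 𝓝 ξ, ∀ x u : ι → ℝ, x k = 0 → (∀ i, u i ∈ Set.Icc (0 : ℝ) 1) →
      κ * (1 + ∑ i, x i ^ 2) ≤ quadForm x u η := by
  set d := ξ k ^ 2 / 2
  set R := ∑ i, ξ i ^ 2 + 1
  have hd : 0 < d := by positivity
  have hR : 0 ≤ R := by positivity
  have hnear : ∀ᶠ η in 𝓝 ξ, d < η k ^ 2 ∧ ∑ i, η i ^ 2 < R := by
    refine .and ?_ ?_
    · exact (show Continuous fun η : ι → ℝ => η k ^ 2 by fun_prop).continuousAt.eventually_const_lt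
        (half_lt_self (by positivity))
    · exact (show Continuous fun η : ι → ℝ => ∑ i, η i ^ 2 by
        fun_prop).continuousAt.eventually_lt_const (lt_add_one _)
  refine ⟨(2 + (1 + 2 * R) / d)⁻¹, by positivity, hnear.mono fun η hη x u hx hu => ?_⟩
  exact inv_mul_one_add_le hd hR (hη.1.le.trans (sq_le_quadForm hx hu η))
    (by linarith [sum_sq_le_quadForm hu x η, hη.2])

theorem eventually_quadForm_pos {k : ι} {ξ : ι → ℝ} (hξ : ξ k ≠ 0) :
    ∀ᶠ η in 𝓝 ξ, ∀ x u : ι → ℝ, x k = 0 → (∀ i, u i ∈ Set.Icc (0 : ℝ) 1) → 0 < quadForm x u η :=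
  ((continuous_apply k).continuousAt.eventually_ne hξ).mono fun _ hη _ _ hx hu =>
    (sq_pos_of_ne_zero hη).trans_le (sq_le_quadForm hx hu _)

theorem prod_ofReal_exp_eq_ofReal_exp_quadForm (τ : ℝ) (x u ξ : ι → ℝ) :
    ∏ i, ENNReal.ofReal (exp (-(τ * ((x i - ξ i) ^ 2 + 4 * x i * ξ i * u i))))
      = ENNReal.ofReal (exp (-(τ * quadForm x u ξ))) := by
  rw [← ENNReal.ofReal_prod_of_nonneg fun _ _ => (exp_pos _).le, ← exp_sum, quadForm,
    Finset.mul_sum, Finset.sum_neg_distrib]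

end QuadForm

section Subordination

variable {ι : Type*} [Fintype ι]

theorem lintegral_prod_mul_exp_neg_mul_quadForm (a : ι → ℝ) (κ : ι → Measure ℝ)
    [∀ i, SigmaFinite (κ i)] {f : ι → ℝ → ℝ≥0∞} (hf : ∀ i, Measurable (f i)) (τ : ℝ) (ξ : ι → ℝ) :
    ∫⁻ z, (∏ i, f i (z.1 i)) * ENNReal.ofReal (exp (-(τ * quadForm z.1 z.2 ξ)))
        ∂(Measure.pi κ).prod (mixingMeasure a)
      = ∏ i, ∫⁻ y, f i y * heatAverage (a i) τ y (ξ i) ∂κ i := by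
  have hQ := measurable_quadForm ξ
  have hmix (x : ι → ℝ) : ∫⁻ u, ENNReal.ofReal (exp (-(τ * quadForm x u ξ))) ∂mixingMeasure a
      = ∏ i, heatAverage (a i) τ (x i) (ξ i) := by
    simp_rw [← prod_ofReal_exp_eq_ofReal_exp_quadForm]
    exact lintegral_fintype_prod_eq_prod (fun i => symmBeta (a i))
      (f := fun i v => ENNReal.ofReal (exp (-(τ * ((x i - ξ i) ^ 2 + 4 * x i * ξ i * v)))))
      fun i => by fun_prop
  have hmeas : Measurable fun z : (ι → ℝ) × (ι → ℝ) =>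
      (∏ i, f i (z.1 i)) * ENNReal.ofReal (exp (-(τ * quadForm z.1 z.2 ξ))) :=
    (Finset.measurable_prod _ fun i _ => (hf i).comp (by fun_prop)).mul (by fun_prop)
  rw [lintegral_prod _ hmeas.aemeasurable]
  have hslice (x : ι → ℝ) : Measurable fun u => ENNReal.ofReal (exp (-(τ * quadForm x u ξ))) := by
    unfold quadForm; fun_prop
  simp_rw [lintegral_const_mul _ (hslice _), hmix, ← Finset.prod_mul_distrib]
  exact lintegral_fintype_prod_eq_prod κ fun i => (hf i).mul
    ((measurable_heatAverage (a i)).comp (by fun_prop : Measurable fun y => (τ, y, ξ i)))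

theorem lintegral_Ioi_rpow_mul_exp_neg_mul {A p : ℝ} (hA : 0 < A) (hp : 0 < p) :
    ∫⁻ τ in Set.Ioi (0 : ℝ), ENNReal.ofReal (τ ^ (p - 1)) * ENNReal.ofReal (exp (-(τ * A)))
      = ENNReal.ofReal (Real.Gamma p * A ^ (-p)) := by
  have hint : IntegrableOn (fun τ : ℝ => τ ^ (p - 1) * exp (-(A * τ))) (Set.Ioi 0) := by
    simpa using
      integrableOn_rpow_mul_exp_neg_mul_rpow (p := 1) (s := p - 1) (by linarith) one_pos hA
  have hnonneg : 0 ≤ᵐ[volume.restrict (Set.Ioi 0)] fun τ : ℝ => τ ^ (p - 1) * exp (-(A * τ)) :=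
    ae_restrict_of_forall_mem measurableSet_Ioi fun τ hτ =>
      mul_nonneg (rpow_nonneg (le_of_lt hτ) _) (exp_pos _).le
  rw [rpow_neg hA.le, ← inv_rpow hA.le, ← one_div, mul_comm,
    ← integral_rpow_mul_exp_neg_mul_Ioi hp hA, ofReal_integral_eq_lintegral_ofReal hint hnonneg]
  refine setLIntegral_congr_fun measurableSet_Ioi fun τ hτ => ?_
  rw [← ENNReal.ofReal_mul (rpow_nonneg (le_of_lt hτ) _), mul_comm A]

theorem lintegral_prod_mul_quadForm_rpow (a : ι → ℝ) (κ : ι → Measure ℝ) [∀ i, SigmaFinite (κ i)]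
    {f : ι → ℝ → ℝ≥0∞} (hf : ∀ i, Measurable (f i)) {p : ℝ} (hp : 0 < p) {ξ : ι → ℝ}
    (hpos : ∀ᵐ z ∂(Measure.pi κ).prod (mixingMeasure a), 0 < quadForm z.1 z.2 ξ) :
    ENNReal.ofReal (Real.Gamma p) * ∫⁻ z, (∏ i, f i (z.1 i)) *
        ENNReal.ofReal (quadForm z.1 z.2 ξ ^ (-p)) ∂(Measure.pi κ).prod (mixingMeasure a)
      = ∫⁻ τ in Set.Ioi (0 : ℝ), ENNReal.ofReal (τ ^ (p - 1)) *
          ∏ i, ∫⁻ y, f i y * heatAverage (a i) τ y (ξ i) ∂κ i := by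
  have hf' : Measurable fun z : (ι → ℝ) × (ι → ℝ) => ∏ i, f i (z.1 i) :=
    Finset.measurable_prod _ fun i _ => (hf i).comp (by fun_prop)
  have hQ := measurable_quadForm ξ
  have hQ' : Measurable fun q : ℝ × ((ι → ℝ) × (ι → ℝ)) => quadForm q.2.1 q.2.2 ξ :=
    hQ.comp measurable_snd
  have hslice (τ : ℝ) : Measurable fun z : (ι → ℝ) × (ι → ℝ) =>
      (∏ i, f i (z.1 i)) * ENNReal.ofReal (exp (-(τ * quadForm z.1 z.2 ξ))) :=
    hf'.mul (by fun_prop)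
  simp_rw [← lintegral_prod_mul_exp_neg_mul_quadForm a κ hf, ← lintegral_const_mul _ (hslice _)]
  rw [← lintegral_const_mul' _ _ ENNReal.ofReal_ne_top, lintegral_lintegral_swap]
  · refine lintegral_congr_ae (hpos.mono fun z hz => ?_)
    dsimp only
    rw [mul_left_comm, ← ENNReal.ofReal_mul (Gamma_pos_of_pos hp).le,
      ← lintegral_Ioi_rpow_mul_exp_neg_mul hz hp, ← lintegral_const_mul _ (by fun_prop)]
    exact lintegral_congr fun τ => mul_left_comm _ _ _
  · exact (Measurable.mul (by fun_prop)
      ((hf'.comp measurable_snd).mul (by fun_prop))).aemeasurable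

end Subordination

section FaceFactor

variable {ι : Type*} [DecidableEq ι]

/-- The one-dimensional factors of `faceMeasure`. -/
noncomputable def faceFactor (a : ι → ℝ) (k : ι) : ι → Measure ℝ :=
  Function.update (fun i => weightedLebesgue (a i)) k (Measure.dirac 0)

theorem faceFactor_self (a : ι → ℝ) (k : ι) : faceFactor a k k = Measure.dirac 0 :=
  Function.update_self ..

theorem faceFactor_of_ne (a : ι → ℝ) {i k : ι} (h : i ≠ k) :
    faceFactor a k i = weightedLebesgue (a i) :=
  Function.update_of_ne h ..

instance (a : ι → ℝ) (k i : ι) : SigmaFinite (faceFactor a k i) := by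
  rcases eq_or_ne i k with rfl | h
  · rw [faceFactor_self]; infer_instance
  · rw [faceFactor_of_ne a h]; infer_instance

end FaceFactor

section FaceMeasure

theorem lintegral_one_add_sq_rpow_lt_top {a p : ℝ} (ha : 0 ≤ a) (hp : 1 + 2 * a < p) :
    ∫⁻ y, ENNReal.ofReal ((1 + y ^ 2) ^ (-p / 2)) ∂weightedLebesgue a < ∞ := by
  have hint : Integrable fun y : ℝ => (1 + ‖y‖ ^ 2) ^ (-(p - 2 * a) / 2) :=
    integrable_rpow_neg_one_add_norm_sq (by simp only [Module.finrank_self, Nat.cast_one]; linarith)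
  refine lt_of_le_of_lt ?_ hint.lintegral_lt_top
  refine (lintegral_mono' (weightedLebesgue_le a) le_rfl).trans ?_
  rw [lintegral_withDensity_eq_lintegral_mul _ (by fun_prop) (by fun_prop)]
  refine lintegral_mono fun y => ?_
  have hpos : 0 < 1 + y ^ 2 := by positivity
  rw [Pi.mul_apply, ← ENNReal.ofReal_mul (by positivity)]
  refine ENNReal.ofReal_le_ofReal ?_
  calc |y| ^ (2 * a) * (1 + y ^ 2) ^ (-p / 2)
      = (y ^ 2) ^ a * (1 + y ^ 2) ^ (-p / 2) := by
        rw [rpow_mul (abs_nonneg y), rpow_two, sq_abs]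
    _ ≤ (1 + y ^ 2) ^ a * (1 + y ^ 2) ^ (-p / 2) := by gcongr; linarith
    _ = (1 + ‖y‖ ^ 2) ^ (-(p - 2 * a) / 2) := by
        rw [← rpow_add hpos, norm_eq_abs, sq_abs]; congr 1; ring

variable {ι : Type*} [Fintype ι]

theorem one_add_sum_sq_rpow_le_prod {p : ι → ℝ} (hp : ∀ i, 0 ≤ p i) (x : ι → ℝ) :
    (1 + ∑ i, x i ^ 2) ^ (-(∑ i, p i) / 2) ≤ ∏ i, (1 + x i ^ 2) ^ (-p i / 2) :=
  calc (1 + ∑ i, x i ^ 2) ^ (-(∑ i, p i) / 2) = ∏ i, (1 + ∑ i, x i ^ 2) ^ (-p i / 2) := by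
        rw [← rpow_sum_of_pos (by positivity), ← Finset.sum_div, Finset.sum_neg_distrib]
    _ ≤ ∏ i, (1 + x i ^ 2) ^ (-p i / 2) := by
        refine Finset.prod_le_prod (fun i _ => by positivity) fun i _ => ?_
        refine rpow_le_rpow_of_nonpos (by positivity) ?_ (by linarith [hp i])
        gcongr
        exact Finset.single_le_sum (f := fun i => x i ^ 2) (fun i _ => sq_nonneg _)
          (Finset.mem_univ i)

variable [DecidableEq ι]

/-- The measure `∏_{i ≠ k} xᵢ ^ (2aᵢ) dxᵢ` on the face `x k = 0` of the orthant, regarded as a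
measure on the whole space. -/
noncomputable def faceMeasure (a : ι → ℝ) (k : ι) : Measure (ι → ℝ) :=
  Measure.pi (faceFactor a k)

instance (a : ι → ℝ) (k : ι) : SigmaFinite (faceMeasure a k) := by
  unfold faceMeasure; infer_instance

theorem ae_faceMeasure_mem (a : ι → ℝ) (k : ι) :
    ∀ᵐ x ∂faceMeasure a k, x k = 0 ∧ ∀ i, i ≠ k → x i ∈ coordRange (a i) := by
  have heval (i : ι) : Measure.QuasiMeasurePreserving (Function.eval i) (faceMeasure a k)
      (faceFactor a k i) := Measure.quasiMeasurePreserving_eval _ i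
  refine .and ((heval k).ae (p := fun y => y = 0) ?_) (ae_all_iff.2 fun i => ?_)
  · rw [faceFactor_self, ae_dirac_eq]; rfl
  · by_cases h : i = k
    · exact ae_of_all _ fun _ hi => absurd h hi
    · refine ((heval i).ae (p := fun y => y ∈ coordRange (a i)) ?_).mono fun x hx _ => hx
      rw [faceFactor_of_ne a h]
      exact ae_weightedLebesgue_mem (a i)

theorem ae_faceMeasure_eq_zero (a : ι → ℝ) (k : ι) : ∀ᵐ x ∂faceMeasure a k, x k = 0 :=
  (ae_faceMeasure_mem a k).mono fun _ h => h.1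

theorem prod_lintegral_faceFactor (a : ι → ℝ) (k : ι) {f : ι → ℝ → ℝ≥0∞} :
    ∏ i, ∫⁻ y, f i y ∂faceFactor a k i
      = f k 0 * ∏ i ∈ Finset.univ.erase k, ∫⁻ y, f i y ∂weightedLebesgue (a i) := by
  rw [← Finset.mul_prod_erase _ _ (Finset.mem_univ k), faceFactor_self, lintegral_dirac]
  congr 1
  exact Finset.prod_congr rfl fun i hi => by rw [faceFactor_of_ne a (Finset.ne_of_mem_erase hi)]

theorem integrable_one_add_sum_sq_rpow_faceMeasure {a : ι → ℝ} (ha : ∀ i, 0 ≤ a i) {k : ι} {p : ℝ}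
    (hp : ∑ i ∈ Finset.univ.erase k, (1 + 2 * a i) < p) :
    Integrable (fun x => (1 + ∑ i, x i ^ 2) ^ (-p / 2)) (faceMeasure a k) := by
  set e := p - ∑ i ∈ Finset.univ.erase k, (1 + 2 * a i)
  set N : ℝ := (Finset.univ.erase k).card + 1
  have he : 0 < e := sub_pos.2 hp
  have hN : 0 < N := by positivity
  let q : ι → ℝ := fun i => if i = k then e / N else 1 + 2 * a i + e / N
  have hq : ∀ i, 0 ≤ q i := fun i => by
    have := ha i
    simp only [q]; split_ifs <;> positivity
  have hsum : ∑ i, q i = p := by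
    rw [← Finset.add_sum_erase _ _ (Finset.mem_univ k),
      Finset.sum_congr rfl fun i hi => if_neg (Finset.ne_of_mem_erase hi),
      Finset.sum_add_distrib, Finset.sum_const, nsmul_eq_mul]
    simp only [q, if_true]
    linear_combination mul_div_cancel₀ e hN.ne'
  refine ⟨(by fun_prop : Measurable _).aestronglyMeasurable, ?_⟩
  rw [hasFiniteIntegral_iff_ofReal (ae_of_all _ fun x => by positivity)]
  calc ∫⁻ x, ENNReal.ofReal ((1 + ∑ i, x i ^ 2) ^ (-p / 2)) ∂faceMeasure a k
      ≤ ∫⁻ x, ∏ i, ENNReal.ofReal ((1 + x i ^ 2) ^ (-q i / 2)) ∂faceMeasure a k := by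
        refine lintegral_mono fun x => ?_
        rw [← ENNReal.ofReal_prod_of_nonneg fun i _ => by positivity, ← hsum]
        exact ENNReal.ofReal_le_ofReal (one_add_sum_sq_rpow_le_prod hq x)
    _ = ∏ i, ∫⁻ y, ENNReal.ofReal ((1 + y ^ 2) ^ (-q i / 2)) ∂faceFactor a k i :=
        lintegral_fintype_prod_eq_prod (faceFactor a k)
          (f := fun i y => ENNReal.ofReal ((1 + y ^ 2) ^ (-q i / 2))) fun i => by fun_prop
    _ < ∞ := by
        rw [prod_lintegral_faceFactor]
        refine ENNReal.mul_lt_top ENNReal.ofReal_lt_top (ENNReal.prod_lt_top fun i hi => ?_)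
        rw [show q i = 1 + 2 * a i + e / N from if_neg (Finset.ne_of_mem_erase hi)]
        exact lintegral_one_add_sq_rpow_lt_top (ha i) (by linarith [div_pos he hN])

end FaceMeasure

section FaceSubordination

theorem heatAverage_at_zero (a τ ξ : ℝ) :
    heatAverage a τ 0 ξ = ENNReal.ofReal (exp (-(τ * ξ ^ 2))) := by
  simp [heatAverage]

theorem prod_lintegral_heatAverage {ι : Type*} {a : ι → ℝ} (ha : ∀ i, 0 ≤ a i) {τ : ℝ}
    (hτ : 0 < τ) (s : Finset ι) (ξ : ι → ℝ) :
    ∏ i ∈ s, ∫⁻ y, heatAverage (a i) τ y (ξ i) ∂weightedLebesgue (a i)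
      = ENNReal.ofReal ((∏ i ∈ s, heatMass (a i)) * τ ^ (-∑ i ∈ s, (a i + 1 / 2))) := by
  simp_rw [lintegral_heatAverage (ha _) hτ]
  rw [← ENNReal.ofReal_prod_of_nonneg fun i _ => mul_nonneg heatMass_pos.le (rpow_nonneg hτ.le _),
    Finset.prod_mul_distrib, ← rpow_sum_of_pos hτ, ← Finset.sum_neg_distrib]
  simp_rw [neg_add, ← sub_eq_add_neg]

variable {ι : Type*} [Fintype ι] {a : ι → ℝ} {k : ι} {ξ : ι → ℝ}

theorem ae_prod_mixingMeasure {μ : Measure (ι → ℝ)} [SFinite μ] (hμ : ∀ᵐ x ∂μ, x k = 0) :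
    ∀ᵐ z ∂μ.prod (mixingMeasure a), z.1 k = 0 ∧ ∀ i, z.2 i ∈ Set.Icc (0 : ℝ) 1 :=
  (Measure.quasiMeasurePreserving_fst.ae hμ).and
    (Measure.quasiMeasurePreserving_snd.ae (ae_mixingMeasure_mem_Icc a))

theorem ae_quadForm_pos {μ : Measure (ι → ℝ)} [SFinite μ] (hμ : ∀ᵐ x ∂μ, x k = 0)
    (hξ : ξ k ≠ 0) : ∀ᵐ z ∂μ.prod (mixingMeasure a), 0 < quadForm z.1 z.2 ξ :=
  (ae_prod_mixingMeasure hμ).mono fun _ hz =>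
    (by positivity : 0 < ξ k ^ 2).trans_le (sq_le_quadForm hz.1 hz.2 ξ)

theorem sum_add_half_pos (ha : ∀ i, 0 ≤ a i) (k : ι) : 0 < ∑ i, (a i + 1 / 2) :=
  Finset.sum_pos (fun i _ => by linarith [ha i]) ⟨k, Finset.mem_univ k⟩

variable [DecidableEq ι]

/-- The constant `K` in the formula `∫ quadForm ^ (-∑ (aᵢ + 1/2)) = K ξₖ ^ (-(2aₖ + 1))` for the
integral over the `k`-th face. -/
noncomputable def faceMass (a : ι → ℝ) (k : ι) : ℝ :=
  (∏ i ∈ Finset.univ.erase k, heatMass (a i)) * Real.Gamma (a k + 1 / 2)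
    / Real.Gamma (∑ i, (a i + 1 / 2))

theorem lintegral_quadForm_rpow_faceMeasure (ha : ∀ i, 0 ≤ a i) (hξ : 0 < ξ k) :
    ∫⁻ z, ENNReal.ofReal (quadForm z.1 z.2 ξ ^ (-∑ i, (a i + 1 / 2)))
        ∂(faceMeasure a k).prod (mixingMeasure a)
      = ENNReal.ofReal (faceMass a k * ξ k ^ (-(2 * a k + 1))) := by
  set p := ∑ i, (a i + 1 / 2)
  have hp : 0 < p := sum_add_half_pos ha k
  have hpk : a k + 1 / 2 + ∑ i ∈ Finset.univ.erase k, (a i + 1 / 2) = p :=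
    Finset.add_sum_erase _ (fun i => a i + 1 / 2) (Finset.mem_univ k)
  set C := ∏ i ∈ Finset.univ.erase k, heatMass (a i)
  have hC : 0 ≤ C := Finset.prod_nonneg fun i _ => heatMass_pos.le
  have hK : Real.Gamma p * faceMass a k = C * Real.Gamma (a k + 1 / 2) :=
    mul_div_cancel₀ _ (Gamma_pos_of_pos hp).ne'
  have hak := ha k
  have hsub := lintegral_prod_mul_quadForm_rpow a (faceFactor a k) (f := fun _ _ => 1)
    (fun _ => measurable_const) hp
    (ae_quadForm_pos (ae_faceMeasure_eq_zero a k) hξ.ne')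
  simp only [Finset.prod_const_one, one_mul, prod_lintegral_faceFactor] at hsub
  rw [← ENNReal.mul_right_inj (ENNReal.ofReal_pos.2 (Gamma_pos_of_pos hp)).ne'
    ENNReal.ofReal_ne_top, faceMeasure, hsub, ← ENNReal.ofReal_mul (Gamma_pos_of_pos hp).le]
  calc _ = ∫⁻ τ in Set.Ioi (0 : ℝ), ENNReal.ofReal C *
          (ENNReal.ofReal (τ ^ (a k + 1 / 2 - 1)) * ENNReal.ofReal (exp (-(τ * ξ k ^ 2)))) := by
        refine setLIntegral_congr_fun measurableSet_Ioi fun τ hτ => ?_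
        have hτ : 0 < τ := hτ
        rw [heatAverage_at_zero, prod_lintegral_heatAverage ha hτ,
          show a k + 1 / 2 - 1 = p - 1 + -∑ i ∈ Finset.univ.erase k, (a i + 1 / 2) by
            linarith, rpow_add hτ, ENNReal.ofReal_mul hC,
          ENNReal.ofReal_mul (rpow_nonneg hτ.le _)]
        ring
    _ = ENNReal.ofReal (Real.Gamma p * (faceMass a k * ξ k ^ (-(2 * a k + 1)))) := by
        rw [lintegral_const_mul _ (by fun_prop),
          lintegral_Ioi_rpow_mul_exp_neg_mul (by positivity) (by positivity),
          ← ENNReal.ofReal_mul hC, ← rpow_natCast, ← rpow_mul hξ.le, ← mul_assoc, ← mul_assoc, hK,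
          show ((2 : ℕ) : ℝ) * -(a k + 1 / 2) = -(2 * a k + 1) by push_cast; ring]

theorem lintegral_one_add_sq_rpow_mul_quadForm_rpow_faceMeasure (ha : ∀ i, 0 ≤ a i) {β : ℝ}
    (hβ : 0 < β) (hdim : ∑ i, (a i + 1 / 2) = β + 1) (hξ : ξ k ≠ 0) {j : ι} (hj : j ≠ k) (s : ℝ) :
    ENNReal.ofReal (Real.Gamma β) * ∫⁻ z, ENNReal.ofReal ((1 + z.1 j ^ 2) ^ (-s / 2)) *
        ENNReal.ofReal (quadForm z.1 z.2 ξ ^ (-β)) ∂(faceMeasure a k).prod (mixingMeasure a)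
      = ENNReal.ofReal (∏ i ∈ (Finset.univ.erase k).erase j, heatMass (a i)) *
          subordinatedHeatAverage (a k) (a j) s (ξ k) (ξ j) := by
  set C := ∏ i ∈ (Finset.univ.erase k).erase j, heatMass (a i)
  have hC : 0 ≤ C := Finset.prod_nonneg fun i _ => heatMass_pos.le
  have hjk : j ∈ Finset.univ.erase k := Finset.mem_erase.2 ⟨hj, Finset.mem_univ j⟩
  rw [← Finset.add_sum_erase _ _ (Finset.mem_univ k), ← Finset.add_sum_erase _ _ hjk] at hdim
  let f : ι → ℝ → ℝ≥0∞ := fun i y => if i = j then ENNReal.ofReal ((1 + y ^ 2) ^ (-s / 2)) else 1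
  have hf : ∀ i, Measurable (f i) := fun i => by
    by_cases hi : i = j <;> simp only [f, hi, if_true, if_false] <;> fun_prop
  have hsub := lintegral_prod_mul_quadForm_rpow a (faceFactor a k) hf hβ
    (ae_quadForm_pos (ae_faceMeasure_eq_zero a k) hξ)
  simp only [f, Finset.prod_ite_eq', Finset.mem_univ, if_true, prod_lintegral_faceFactor,
    if_neg hj.symm, one_mul, heatAverage_at_zero] at hsub
  rw [faceMeasure, hsub, subordinatedHeatAverage, ← lintegral_const_mul' _ _ ENNReal.ofReal_ne_top]
  refine setLIntegral_congr_fun measurableSet_Ioi fun τ hτ => ?_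
  have hτ : 0 < τ := hτ
  have hrest : ∏ i ∈ (Finset.univ.erase k).erase j,
      ∫⁻ y, (if i = j then ENNReal.ofReal ((1 + y ^ 2) ^ (-s / 2)) else 1) *
        heatAverage (a i) τ y (ξ i) ∂weightedLebesgue (a i)
      = ENNReal.ofReal (C * τ ^ (-∑ i ∈ (Finset.univ.erase k).erase j, (a i + 1 / 2))) := by
    rw [← prod_lintegral_heatAverage ha hτ _ ξ]
    exact Finset.prod_congr rfl fun i hi => by
      simp only [if_neg (Finset.ne_of_mem_erase hi), one_mul]
  rw [← Finset.mul_prod_erase _ _ hjk, hrest]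
  simp only [↓reduceIte]
  rw [← weightedHeatAverage,
    show a k + a j - 1 = β - 1 + -∑ i ∈ (Finset.univ.erase k).erase j, (a i + 1 / 2) by linarith,
    rpow_add hτ, ENNReal.ofReal_mul hC, ENNReal.ofReal_mul (by positivity),
    ENNReal.ofReal_mul (by positivity)]
  ring

end FaceSubordination

section CompletingTheSquare

variable {ι : Type*}

/-- The mean `xᵢ (1 - 2uᵢ)` of the two mirror images `± xᵢ` of a coordinate, taken with weights
`1 - uᵢ` and `uᵢ`. As a function of `ξ`, `quadForm x u ξ` is centred there. -/
def mirrorMean (z : (ι → ℝ) × (ι → ℝ)) (i : ι) : ℝ := z.1 i * (1 - 2 * z.2 i)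

/-- The variance of the two mirror images averaged by `mirrorMean`. -/
def mirrorVar (z : (ι → ℝ) × (ι → ℝ)) (i : ι) : ℝ := 4 * z.1 i ^ 2 * (z.2 i * (1 - z.2 i))

theorem mirrorVar_nonneg {z : (ι → ℝ) × (ι → ℝ)} (hz : ∀ i, z.2 i ∈ Set.Icc (0 : ℝ) 1) (i : ι) :
    0 ≤ mirrorVar z i :=
  mul_nonneg (by positivity) (mul_nonneg (hz i).1 (sub_nonneg.2 (hz i).2))

variable [Fintype ι]

theorem quadForm_eq_sum (z : (ι → ℝ) × (ι → ℝ)) (ξ : ι → ℝ) :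
    quadForm z.1 z.2 ξ = ∑ i, ((ξ i - mirrorMean z i) ^ 2 + mirrorVar z i) :=
  Finset.sum_congr rfl fun i _ => by rw [mirrorMean, mirrorVar]; ring

theorem sq_sub_mirrorMean_add_mirrorVar_le_quadForm {z : (ι → ℝ) × (ι → ℝ)}
    (hz : ∀ i, z.2 i ∈ Set.Icc (0 : ℝ) 1) (ξ : ι → ℝ) (i : ι) :
    (ξ i - mirrorMean z i) ^ 2 + mirrorVar z i ≤ quadForm z.1 z.2 ξ := by
  rw [quadForm_eq_sum]
  exact Finset.single_le_sum (f := fun i => (ξ i - mirrorMean z i) ^ 2 + mirrorVar z i)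
    (fun j _ => add_nonneg (sq_nonneg _) (mirrorVar_nonneg hz j)) (Finset.mem_univ i)

theorem abs_sub_mirrorMean_pow_le {z : (ι → ℝ) × (ι → ℝ)} (hz : ∀ i, z.2 i ∈ Set.Icc (0 : ℝ) 1)
    (ξ : ι → ℝ) (i : ι) (n : ℕ) :
    |(ξ i - mirrorMean z i) ^ n| ≤ quadForm z.1 z.2 ξ ^ ((n : ℝ) / 2) :=
  calc |(ξ i - mirrorMean z i) ^ n| = ((ξ i - mirrorMean z i) ^ 2) ^ ((n : ℝ) / 2) := by
        rw [abs_pow, ← sq_abs, ← rpow_natCast, ← rpow_natCast, ← rpow_mul (abs_nonneg _)]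
        congr 1; push_cast; ring
    _ ≤ _ := by
        gcongr
        linarith [sq_sub_mirrorMean_add_mirrorVar_le_quadForm hz ξ i, mirrorVar_nonneg hz i]

variable [DecidableEq ι]

theorem quadForm_update (z : (ι → ℝ) × (ι → ℝ)) (ξ : ι → ℝ) (i : ι) (t : ℝ) :
    quadForm z.1 z.2 (Function.update ξ i t)
      = (t - mirrorMean z i) ^ 2 + (quadForm z.1 z.2 ξ - (ξ i - mirrorMean z i) ^ 2) := by
  have hrest : ∀ j ∈ Finset.univ.erase i, Function.update ξ i t j = ξ j := fun j hj =>
    Function.update_of_ne (Finset.ne_of_mem_erase hj) ..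
  rw [quadForm_eq_sum, quadForm_eq_sum, ← Finset.add_sum_erase _ _ (Finset.mem_univ i),
    ← Finset.add_sum_erase _ (fun i => (ξ i - mirrorMean z i) ^ 2 + _) (Finset.mem_univ i),
    Function.update_self, Finset.sum_congr rfl fun j hj => by rw [hrest j hj]]
  ring

theorem quadForm_update_mixing (x u ξ : ι → ℝ) (i : ι) (t : ℝ) :
    quadForm x (Function.update u i t) ξ = quadForm x u ξ + 4 * x i * ξ i * (t - u i) := by
  have hrest : ∀ j ∈ Finset.univ.erase i, Function.update u i t j = u j := fun j hj =>
    Function.update_of_ne (Finset.ne_of_mem_erase hj) ..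
  rw [quadForm, quadForm, ← Finset.add_sum_erase _ _ (Finset.mem_univ i),
    ← Finset.add_sum_erase _ (fun i => (x i - ξ i) ^ 2 + _) (Finset.mem_univ i),
    Function.update_self, Finset.sum_congr rfl fun j hj => by rw [hrest j hj]]
  ring

end CompletingTheSquare

section PotentialMoment

theorem tendsto_update_nhds_self {ι : Type*} [DecidableEq ι] (ξ : ι → ℝ) (i : ι) :
    Tendsto (Function.update ξ i) (𝓝 (ξ i)) (𝓝 ξ) :=
  (continuous_const.update i continuous_id).tendsto' (ξ i) ξ (Function.update_eq_self i ξ)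

theorem abs_mul_rpow_le {κ β q r w Q T : ℝ} (hκ : 0 < κ) (hT : 1 ≤ T) (hQ : κ * T ≤ Q)
    (hw : |w| ≤ Q ^ r) (hβ : 0 ≤ β) (hr : r ≤ q - β) :
    |w * Q ^ (-q)| ≤ κ ^ (r - q) * T ^ (-β) := by
  have hκT : 0 < κ * T := by positivity
  have hQ0 : 0 < Q := hκT.trans_le hQ
  calc |w * Q ^ (-q)| ≤ Q ^ r * Q ^ (-q) := by
        rw [abs_mul, abs_of_pos (rpow_pos_of_pos hQ0 _)]; gcongr
    _ = Q ^ (r - q) := by rw [← rpow_add hQ0, sub_eq_add_neg]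
    _ ≤ (κ * T) ^ (r - q) := rpow_le_rpow_of_nonpos hκT hQ (by linarith)
    _ = κ ^ (r - q) * T ^ (r - q) := mul_rpow hκ.le (by positivity)
    _ ≤ κ ^ (r - q) * T ^ (-β) := by gcongr; linarith

variable {ι : Type*} [Fintype ι]

/-- The layer potential `∫ f(x) quadForm ^ (-β)` of a density `f` with respect to `μ`, averaged
over the mixing law. -/
noncomputable def layerPotential (a : ι → ℝ) (μ : Measure (ι → ℝ)) (f : (ι → ℝ) → ℝ) (β : ℝ)
    (ξ : ι → ℝ) : ℝ :=
  ∫ z, f z.1 * quadForm z.1 z.2 ξ ^ (-β) ∂μ.prod (mixingMeasure a)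

/-- The integrand of `potentialMoment`. -/
noncomputable def momentIntegrand (f : (ι → ℝ) → ℝ) (i : ι) (n : ℕ) (q : ℝ) (ξ : ι → ℝ)
    (z : (ι → ℝ) × (ι → ℝ)) : ℝ :=
  f z.1 * ((ξ i - mirrorMean z i) ^ n * quadForm z.1 z.2 ξ ^ (-q))

/-- The `n`-th moment of `ξᵢ - mirrorMean` against `f(x) quadForm ^ (-q)`. Derivatives of layer
potentials are combinations of such moments. -/
noncomputable def potentialMoment (a : ι → ℝ) (μ : Measure (ι → ℝ)) (f : (ι → ℝ) → ℝ) (i : ι)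
    (n : ℕ) (q : ℝ) (ξ : ι → ℝ) : ℝ :=
  ∫ z, momentIntegrand f i n q ξ z ∂μ.prod (mixingMeasure a)

theorem potentialMoment_zero (a : ι → ℝ) (μ : Measure (ι → ℝ)) (f : (ι → ℝ) → ℝ) (i : ι) (q : ℝ) :
    potentialMoment a μ f i 0 q = layerPotential a μ f q := by
  ext ξ
  simp only [potentialMoment, momentIntegrand, layerPotential, pow_zero, one_mul]

theorem aestronglyMeasurable_of_mul_one_add_sum_sq_rpow {μ : Measure (ι → ℝ)} {f : (ι → ℝ) → ℝ}
    {β : ℝ} (hf : AEStronglyMeasurable (fun x => f x * (1 + ∑ i, x i ^ 2) ^ (-β)) μ) :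
    AEStronglyMeasurable f μ := by
  refine (hf.mul (by fun_prop : Measurable fun x : ι → ℝ =>
    (1 + ∑ i, x i ^ 2) ^ β).aestronglyMeasurable).congr (ae_of_all _ fun x => ?_)
  rw [Pi.mul_apply, mul_assoc, ← rpow_add (by positivity), neg_add_cancel, rpow_zero, mul_one]

variable {a : ι → ℝ} {μ : Measure (ι → ℝ)} {f : (ι → ℝ) → ℝ} {k : ι} {β : ℝ} {ξ : ι → ℝ}

theorem aestronglyMeasurable_mul_quadForm_rpow
    (hf : Integrable (fun x => f x * (1 + ∑ i, x i ^ 2) ^ (-β)) μ)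
    {w : (ι → ℝ) × (ι → ℝ) → ℝ} (hw : Measurable w) (q : ℝ) (ξ : ι → ℝ) :
    AEStronglyMeasurable (fun z => f z.1 * (w z * quadForm z.1 z.2 ξ ^ (-q)))
      (μ.prod (mixingMeasure a)) :=
  (aestronglyMeasurable_of_mul_one_add_sum_sq_rpow hf.aestronglyMeasurable).comp_fst.mul
    (hw.mul ((measurable_quadForm ξ).pow_const _)).aestronglyMeasurable

theorem aestronglyMeasurable_momentIntegrand
    (hf : Integrable (fun x => f x * (1 + ∑ i, x i ^ 2) ^ (-β)) μ) (i : ι) (n : ℕ) (q : ℝ)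
    (ξ : ι → ℝ) :
    AEStronglyMeasurable (momentIntegrand f i n q ξ) (μ.prod (mixingMeasure a)) :=
  aestronglyMeasurable_mul_quadForm_rpow hf (by unfold mirrorMean; fun_prop) q ξ

theorem exists_eventually_norm_mul_quadForm_rpow_le (f : (ι → ℝ) → ℝ) (hβ : 0 ≤ β) (hξ : ξ k ≠ 0)
    {q r : ℝ} (hr : r ≤ q - β) :
    ∃ C, ∀ᶠ η in 𝓝 ξ, ∀ z : (ι → ℝ) × (ι → ℝ), z.1 k = 0 → (∀ i, z.2 i ∈ Set.Icc (0 : ℝ) 1) →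
      ∀ w, |w| ≤ quadForm z.1 z.2 η ^ r →
        ‖f z.1 * (w * quadForm z.1 z.2 η ^ (-q))‖
          ≤ C * ‖f z.1 * (1 + ∑ i, z.1 i ^ 2) ^ (-β)‖ := by
  obtain ⟨κ, hκ, hnear⟩ := exists_eventually_le_quadForm hξ
  refine ⟨κ ^ (r - q), hnear.mono fun η hη z hx hu w hw => ?_⟩
  rw [norm_mul, norm_eq_abs, norm_eq_abs, norm_mul, norm_eq_abs, norm_eq_abs,
    abs_of_nonneg (by positivity : 0 ≤ (1 + ∑ i, z.1 i ^ 2) ^ (-β)), mul_left_comm]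
  gcongr
  exact abs_mul_rpow_le hκ (le_add_of_nonneg_right (by positivity)) (hη z.1 z.2 hx hu) hw hβ hr

variable [SFinite μ]

theorem integrable_mul_quadForm_rpow (hμ : ∀ᵐ x ∂μ, x k = 0)
    (hf : Integrable (fun x => f x * (1 + ∑ i, x i ^ 2) ^ (-β)) μ) (hβ : 0 ≤ β) (hξ : ξ k ≠ 0)
    {w : (ι → ℝ) × (ι → ℝ) → ℝ} (hw : Measurable w) {q r : ℝ}
    (hle : ∀ z : (ι → ℝ) × (ι → ℝ), (∀ i, z.2 i ∈ Set.Icc (0 : ℝ) 1) →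
      |w z| ≤ quadForm z.1 z.2 ξ ^ r) (hr : r ≤ q - β) :
    Integrable (fun z => f z.1 * (w z * quadForm z.1 z.2 ξ ^ (-q))) (μ.prod (mixingMeasure a)) := by
  obtain ⟨C, hC⟩ := exists_eventually_norm_mul_quadForm_rpow_le f hβ hξ hr
  exact ((hf.comp_fst (mixingMeasure a)).norm.const_mul C).mono'
    (aestronglyMeasurable_mul_quadForm_rpow hf hw q ξ)
    ((ae_prod_mixingMeasure hμ).mono fun z hz =>
      hC.self_of_nhds z hz.1 hz.2 _ (hle z hz.2))

theorem integrable_momentIntegrand (hμ : ∀ᵐ x ∂μ, x k = 0)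
    (hf : Integrable (fun x => f x * (1 + ∑ i, x i ^ 2) ^ (-β)) μ) (hβ : 0 ≤ β) (hξ : ξ k ≠ 0)
    (i : ι) {n : ℕ} {q : ℝ} (hn : (n : ℝ) / 2 ≤ q - β) :
    Integrable (momentIntegrand f i n q ξ) (μ.prod (mixingMeasure a)) :=
  integrable_mul_quadForm_rpow hμ hf hβ hξ (by unfold mirrorMean; fun_prop)
    (fun _ hz => abs_sub_mirrorMean_pow_le hz ξ i n) hn

theorem exists_eventually_abs_potentialMoment_le (hμ : ∀ᵐ x ∂μ, x k = 0)
    (hf : Integrable (fun x => f x * (1 + ∑ i, x i ^ 2) ^ (-β)) μ) (hβ : 0 ≤ β) (hξ : ξ k ≠ 0)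
    (i : ι) {n : ℕ} {q : ℝ} (hn : (n : ℝ) / 2 ≤ q - β) :
    ∃ C, ∀ᶠ η in 𝓝 ξ, |potentialMoment a μ f i n q η| ≤ C := by
  obtain ⟨C, hC⟩ := exists_eventually_norm_mul_quadForm_rpow_le f hβ hξ hn
  refine ⟨∫ z, C * ‖f z.1 * (1 + ∑ i, z.1 i ^ 2) ^ (-β)‖ ∂μ.prod (mixingMeasure a),
    hC.mono fun η hη => ?_⟩
  rw [potentialMoment, ← norm_eq_abs]
  exact norm_integral_le_of_norm_le ((hf.comp_fst (mixingMeasure a)).norm.const_mul C)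
    ((ae_prod_mixingMeasure hμ).mono fun z hz =>
      hη z hz.1 hz.2 _ (abs_sub_mirrorMean_pow_le hz.2 η i n))

variable [DecidableEq ι]

theorem hasDerivAt_momentIntegrand {z : (ι → ℝ) × (ι → ℝ)} {i : ι} {t : ℝ}
    (hpos : 0 < quadForm z.1 z.2 (Function.update ξ i t)) (n : ℕ) (q : ℝ) :
    HasDerivAt (fun s => momentIntegrand f i n q (Function.update ξ i s) z)
      (n * momentIntegrand f i (n - 1) q (Function.update ξ i t) z
        - 2 * q * momentIntegrand f i (n + 1) (q + 1) (Function.update ξ i t) z) t := by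
  have hsub : HasDerivAt (fun s => s - mirrorMean z i) 1 t := (hasDerivAt_id t).sub_const _
  simp only [momentIntegrand, Function.update_self, quadForm_update] at hpos ⊢
  refine (((hsub.pow n).mul (((hsub.pow 2).add_const
    (quadForm z.1 z.2 ξ - (ξ i - mirrorMean z i) ^ 2)).rpow_const
      (p := -q) (.inl hpos.ne'))).const_mul _).congr_deriv ?_
  rw [neg_add' q 1]
  simp only [Pi.pow_apply]
  push_cast
  ring

theorem hasDerivAt_potentialMoment (hμ : ∀ᵐ x ∂μ, x k = 0)
    (hf : Integrable (fun x => f x * (1 + ∑ i, x i ^ 2) ^ (-β)) μ) (hβ : 0 ≤ β) (hξ : ξ k ≠ 0)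
    (i : ι) {n : ℕ} {q : ℝ} (hn : (n : ℝ) / 2 ≤ q - β) :
    HasDerivAt (fun t => potentialMoment a μ f i n q (Function.update ξ i t))
      (n * potentialMoment a μ f i (n - 1) q ξ
        - 2 * q * potentialMoment a μ f i (n + 1) (q + 1) ξ) (ξ i) := by
  have hn₁ : ((n - 1 : ℕ) : ℝ) / 2 ≤ q - β :=
    (by gcongr; exact n.sub_le 1 : ((n - 1 : ℕ) : ℝ) / 2 ≤ n / 2).trans hn
  have hn₂ : ((n + 1 : ℕ) : ℝ) / 2 ≤ q + 1 - β := by push_cast; linarith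
  obtain ⟨C₁, hC₁⟩ := exists_eventually_norm_mul_quadForm_rpow_le f hβ hξ hn₁
  obtain ⟨C₂, hC₂⟩ := exists_eventually_norm_mul_quadForm_rpow_le f hβ hξ hn₂
  obtain ⟨s, hs, hnear⟩ := ((hC₁.and hC₂).and (eventually_quadForm_pos hξ)).exists_mem
  have hint {n : ℕ} {q : ℝ} (hn : (n : ℝ) / 2 ≤ q - β) :
      Integrable (momentIntegrand f i n q ξ) (μ.prod (mixingMeasure a)) :=
    integrable_momentIntegrand hμ hf hβ hξ i hn
  have hbound : ∀ᵐ z ∂μ.prod (mixingMeasure a), ∀ t ∈ Function.update ξ i ⁻¹' s,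
      ‖n * momentIntegrand f i (n - 1) q (Function.update ξ i t) z
        - 2 * q * momentIntegrand f i (n + 1) (q + 1) (Function.update ξ i t) z‖
        ≤ (‖(n : ℝ)‖ * C₁ + ‖2 * q‖ * C₂) * ‖f z.1 * (1 + ∑ i, z.1 i ^ 2) ^ (-β)‖ := by
    filter_upwards [ae_prod_mixingMeasure hμ] with z hz t ht
    have h₁ := (hnear _ ht).1.1 z hz.1 hz.2 _ (abs_sub_mirrorMean_pow_le hz.2 _ i _)
    have h₂ := (hnear _ ht).1.2 z hz.1 hz.2 _ (abs_sub_mirrorMean_pow_le hz.2 _ i _)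
    refine (norm_sub_le _ _).trans ?_
    rw [norm_mul (n : ℝ), norm_mul (2 * q), add_mul, mul_assoc, mul_assoc]
    gcongr
    · exact h₁
    · exact h₂
  have hderiv := (ae_prod_mixingMeasure (a := a) hμ).mono
    fun z hz t (ht : t ∈ Function.update ξ i ⁻¹' s) =>
      hasDerivAt_momentIntegrand (f := f) ((hnear _ ht).2 z.1 z.2 hz.1 hz.2) n q
  refine (hasDerivAt_integral_of_dominated_loc_of_deriv_le ((tendsto_update_nhds_self ξ i) hs)
    (.of_forall fun t => aestronglyMeasurable_momentIntegrand hf ..)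
    (by simpa only [Function.update_eq_self] using hint hn)
    (((aestronglyMeasurable_momentIntegrand hf ..).const_mul _).sub
      ((aestronglyMeasurable_momentIntegrand hf ..).const_mul _))
    hbound ((hf.comp_fst (mixingMeasure a)).norm.const_mul _) hderiv).2.congr_deriv ?_
  simp only [Function.update_eq_self]
  rw [integral_sub ((hint hn₁).const_mul _) ((hint hn₂).const_mul _), integral_const_mul,
    integral_const_mul, potentialMoment, potentialMoment]

end PotentialMoment

section Laplacian

variable {ι : Type*} [Fintype ι]

/-- The mirror variance of the `i`-th coordinate integrated against `f(x) quadForm ^ (-q)`. -/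
noncomputable def varianceMoment (a : ι → ℝ) (μ : Measure (ι → ℝ)) (f : (ι → ℝ) → ℝ) (i : ι)
    (q : ℝ) (ξ : ι → ℝ) : ℝ :=
  ∫ z, f z.1 * (mirrorVar z i * quadForm z.1 z.2 ξ ^ (-q)) ∂μ.prod (mixingMeasure a)

variable {a : ι → ℝ} {μ : Measure (ι → ℝ)} [SFinite μ] {f : (ι → ℝ) → ℝ} {k : ι} {β : ℝ}
  {ξ : ι → ℝ}

theorem integrable_varianceMoment (hμ : ∀ᵐ x ∂μ, x k = 0)
    (hf : Integrable (fun x => f x * (1 + ∑ i, x i ^ 2) ^ (-β)) μ) (hβ : 0 ≤ β) (hξ : ξ k ≠ 0)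
    (i : ι) {q : ℝ} (hq : 1 ≤ q - β) :
    Integrable (fun z => f z.1 * (mirrorVar z i * quadForm z.1 z.2 ξ ^ (-q)))
      (μ.prod (mixingMeasure a)) := by
  refine integrable_mul_quadForm_rpow hμ hf hβ hξ (by unfold mirrorVar; fun_prop)
    (fun z hz => ?_) hq
  rw [rpow_one, abs_of_nonneg (mirrorVar_nonneg hz i)]
  linarith [sq_sub_mirrorMean_add_mirrorVar_le_quadForm hz ξ i, sq_nonneg (ξ i - mirrorMean z i)]

theorem varianceMoment_eq_zero (μ : Measure (ι → ℝ)) (f : (ι → ℝ) → ℝ) {j : ι} (hj : a j = 0)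
    (q : ℝ) (ξ : ι → ℝ) : varianceMoment a μ f j q ξ = 0 := by
  have hz : ∀ᵐ z ∂μ.prod (mixingMeasure a), ∀ i, a i = 0 → z.2 i = 0 :=
    Measure.quasiMeasurePreserving_snd.ae (ae_mixingMeasure_eq_zero a)
  refine integral_eq_zero_of_ae (hz.mono fun z hz => ?_)
  simp only [mirrorVar, hz j hj, zero_mul, mul_zero, Pi.zero_apply]

theorem sum_potentialMoment_add_varianceMoment (hμ : ∀ᵐ x ∂μ, x k = 0)
    (hf : Integrable (fun x => f x * (1 + ∑ i, x i ^ 2) ^ (-β)) μ) (hβ : 0 ≤ β) (hξ : ξ k ≠ 0)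
    {q : ℝ} (hq : β ≤ q) :
    ∑ i, (potentialMoment a μ f i 2 (q + 1) ξ + varianceMoment a μ f i (q + 1) ξ)
      = layerPotential a μ f q ξ := by
  have h2 (i : ι) := integrable_momentIntegrand (a := a) hμ hf hβ hξ i (n := 2) (q := q + 1)
    (by push_cast; linarith)
  have hvar (i : ι) := integrable_varianceMoment (a := a) hμ hf hβ hξ i (q := q + 1) (by linarith)
  calc ∑ i, (potentialMoment a μ f i 2 (q + 1) ξ + varianceMoment a μ f i (q + 1) ξ)
      = ∫ z, ∑ i, (momentIntegrand f i 2 (q + 1) ξ z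
          + f z.1 * (mirrorVar z i * quadForm z.1 z.2 ξ ^ (-(q + 1))))
            ∂μ.prod (mixingMeasure a) := by
        refine .trans ?_ (integral_finsetSum _ fun i _ => (h2 i).add (hvar i)).symm
        exact Finset.sum_congr rfl fun i _ => (integral_add (h2 i) (hvar i)).symm
    _ = layerPotential a μ f q ξ := integral_congr_ae ?_
  filter_upwards [ae_quadForm_pos hμ hξ] with z hz
  simp only [momentIntegrand]
  rw [show -q = -(q + 1) + 1 by ring, rpow_add_one hz.ne', quadForm_eq_sum, Finset.mul_sum,
    Finset.mul_sum]
  exact Finset.sum_congr rfl fun i _ => by ring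

theorem integral_pi_eq_zero_of_integral_update [DecidableEq ι] {E : Type*}
    [NormedAddCommGroup E] [NormedSpace ℝ E] {α : ι → Type*} [∀ i, MeasurableSpace (α i)]
    {κ : ∀ i, Measure (α i)} [∀ i, IsProbabilityMeasure (κ i)] {g : (∀ i, α i) → E}
    (hg : Integrable g (Measure.pi κ)) (j : ι)
    (h : ∀ᵐ u ∂Measure.pi κ, ∫ t, g (Function.update u j t) ∂κ j = 0) :
    ∫ u, g u ∂Measure.pi κ = 0 := by
  have hupd := measurePreserving_update κ j
  calc ∫ u, g u ∂Measure.pi κ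
      = ∫ p, g (Function.update p.1 j p.2) ∂(Measure.pi κ).prod (κ j) := by
        conv_lhs => rw [← hupd.map_eq]
        exact integral_map hupd.aemeasurable (by rw [hupd.map_eq]; exact hg.aestronglyMeasurable)
    _ = ∫ u, ∫ t, g (Function.update u j t) ∂κ j ∂Measure.pi κ :=
        integral_prod _ (hupd.integrable_comp_of_integrable hg)
    _ = 0 := integral_eq_zero_of_ae h

theorem integral_symmBeta_mirror [DecidableEq ι] {a : ℝ} (ha : 0 ≤ a) {x u ξ : ι → ℝ} {j : ι}
    (hpos : ∀ t ∈ Set.Icc (0 : ℝ) 1, 0 < quadForm x (Function.update u j t) ξ) (q : ℝ) :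
    ∫ t, (a * (mirrorMean (x, Function.update u j t) j *
          quadForm x (Function.update u j t) ξ ^ (-q))
        - q * ξ j * (mirrorVar (x, Function.update u j t) j *
          quadForm x (Function.update u j t) ξ ^ (-(q + 1)))) ∂symmBeta a = 0 := by
  have hQ (t : ℝ) :
      HasDerivAt (fun t => quadForm x (Function.update u j t) ξ) (4 * x j * ξ j) t := by
    simp only [quadForm_update_mixing]
    simpa using (((hasDerivAt_id t).sub_const (u j)).const_mul (4 * x j * ξ j)).const_add
      (quadForm x u ξ)
  have hcont : Continuous fun t => quadForm x (Function.update u j t) ξ :=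
    continuous_iff_continuousAt.2 fun t => (hQ t).continuousAt
  have hpow (p : ℝ) : ContinuousOn (fun t => quadForm x (Function.update u j t) ξ ^ p)
      (Set.Icc 0 1) :=
    hcont.continuousOn.rpow_const fun t ht => .inl (hpos t ht).ne'
  rw [← integral_symmBeta_stein ha ((hpow (-q)).const_mul (x j))
    (((hpow (-q - 1)).const_mul (4 * x j * ξ j * -q)).const_mul (x j))
    fun t ht =>
      ((hQ t).rpow_const (.inl (hpos t (Set.Ioo_subset_Icc_self ht)).ne')).const_mul (x j)]
  refine integral_congr_ae (ae_of_all _ fun t => ?_)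
  simp only [mirrorMean, mirrorVar, Function.update_self, neg_add']
  ring

theorem mul_varianceMoment (ha : ∀ i, 0 ≤ a i) (hμ : ∀ᵐ x ∂μ, x k = 0)
    (hf : Integrable (fun x => f x * (1 + ∑ i, x i ^ 2) ^ (-β)) μ) (hβ : 0 ≤ β) (hξ : ξ k ≠ 0)
    (j : ι) {q : ℝ} (hq : 1 / 2 ≤ q - β) :
    q * ξ j * varianceMoment a μ f j (q + 1) ξ
      = a j * (ξ j * layerPotential a μ f q ξ - potentialMoment a μ f j 1 q ξ) := by
  classical
  have h0 := integrable_momentIntegrand (a := a) hμ hf hβ hξ j (n := 0) (q := q)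
    (by push_cast; linarith)
  have h1 := integrable_momentIntegrand (a := a) hμ hf hβ hξ j (n := 1) (q := q)
    (by push_cast; linarith)
  have hmean : Integrable
      (fun z => a j * (ξ j * momentIntegrand f j 0 q ξ z - momentIntegrand f j 1 q ξ z))
      (μ.prod (mixingMeasure a)) := ((h0.const_mul _).sub h1).const_mul _
  have hvar := (integrable_varianceMoment (a := a) hμ hf hβ hξ j
    (q := q + 1) (by linarith)).const_mul (q * ξ j)
  have hzero := integral_prod _ (hmean.sub hvar)
  rw [integral_eq_zero_of_ae (f := fun x => ∫ u, _ ∂mixingMeasure a), integral_sub' hmean hvar,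
    integral_const_mul, integral_const_mul, integral_sub (h0.const_mul _) h1,
    integral_const_mul] at hzero
  · rw [← potentialMoment_zero]
    exact (sub_eq_zero.1 hzero).symm
  filter_upwards [(hmean.sub hvar).prod_right_ae, hμ] with x hx hxk
  refine integral_pi_eq_zero_of_integral_update hx j ?_
  filter_upwards [ae_mixingMeasure_mem_Icc a] with u hu
  have hpos (t) (ht : t ∈ Set.Icc (0 : ℝ) 1) : 0 < quadForm x (Function.update u j t) ξ :=
    (by positivity : 0 < ξ k ^ 2).trans_le (sq_le_quadForm hxk
      ((Function.forall_update_iff u fun _ v => v ∈ Set.Icc (0 : ℝ) 1).2 ⟨ht, fun i _ => hu i⟩) ξ)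
  rw [← mul_zero (f x), ← integral_symmBeta_mirror (ha j) hpos q, ← integral_const_mul]
  refine integral_congr_ae (ae_of_all _ fun t => ?_)
  simp only [momentIntegrand, Pi.sub_apply]
  ring

/-- The second derivatives of a layer potential of exponent `β` are `-2 * β` times the terms of the
first sum; its first derivatives are `-2 * β` times the moments in the second. -/
theorem sum_moments_eq_zero (ha : ∀ i, 0 ≤ a i) (hμ : ∀ᵐ x ∂μ, x k = 0)
    (hf : Integrable (fun x => f x * (1 + ∑ i, x i ^ 2) ^ (-β)) μ) (hβ : 0 ≤ β)
    (hdim : ∑ i, (a i + 1 / 2) = β + 1) (hξ : ξ k ≠ 0) (hsing : ∀ i, 0 < a i → ξ i ≠ 0) :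
    ∑ i, (layerPotential a μ f (β + 1) ξ - 2 * (β + 1) * potentialMoment a μ f i 2 (β + 2) ξ)
      + ∑ i, 2 * a i / ξ i * potentialMoment a μ f i 1 (β + 1) ξ = 0 := by
  have hV (i : ι) : (β + 1) * varianceMoment a μ f i (β + 2) ξ
      = a i * layerPotential a μ f (β + 1) ξ
        - a i / ξ i * potentialMoment a μ f i 1 (β + 1) ξ := by
    rcases (ha i).eq_or_lt' with hi | hi
    · rw [varianceMoment_eq_zero μ f hi]; simp only [hi]; ring
    · have h := mul_varianceMoment ha hμ hf hβ hξ i (q := β + 1) (by linarith)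
      have hξi := hsing i hi
      rw [show β + 1 + 1 = β + 2 by ring] at h
      field_simp
      linarith
  have hsum := sum_potentialMoment_add_varianceMoment (a := a) hμ hf hβ hξ (q := β + 1)
    (by linarith)
  rw [show β + 1 + 1 = β + 2 by ring] at hsum
  have hterms := Finset.sum_congr (s₁ := Finset.univ) rfl fun i _ => hV i
  simp only [Finset.sum_add_distrib, Finset.sum_sub_distrib, ← Finset.mul_sum, ← Finset.sum_mul,
    Finset.sum_const, Finset.card_univ, nsmul_eq_mul, mul_div_assoc, mul_assoc] at *
  linear_combination
    (2 : ℝ) * hterms - 2 * (β + 1) * hsum + 2 * layerPotential a μ f (β + 1) ξ * hdim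

end Laplacian

section BoundaryLimit

theorem tendsto_integral_zero_of_norm_le_peak {α E ι : Type*} [MeasurableSpace α]
    [NormedAddCommGroup E] [NormedSpace ℝ E] {μ : Measure α} {l : Filter ι} {F : ι → α → E}
    {φ : ι → α → ℝ} {r : ι → ℝ} {K : ℝ} (hφ : ∀ᶠ t in l, Integrable (φ t) μ)
    (hK : ∀ᶠ t in l, ∫ z, φ t z ∂μ ≤ K) (hr : Tendsto r l (𝓝 0))
    (hF : ∀ ε > 0, ∃ B, Integrable B μ ∧ ∀ᶠ t in l, ∀ᵐ z ∂μ, ‖F t z‖ ≤ ε * φ t z + r t * B z) :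
    Tendsto (fun t => ∫ z, F t z ∂μ) l (𝓝 0) := by
  refine Metric.tendsto_nhds.2 fun η hη => ?_
  set ε := η / (2 * (|K| + 1))
  have hε : 0 < ε := by positivity
  have hεK : ε * K ≤ η / 2 :=
    calc ε * K ≤ ε * (|K| + 1) := by gcongr; linarith [le_abs_self K]
      _ = η / 2 := by simp only [ε]; field_simp
  obtain ⟨B, hB, hbound⟩ := hF ε hε
  have hsmall : ∀ᶠ t in l, r t * ∫ z, B z ∂μ < η / 2 :=
    (show Tendsto (fun t => r t * ∫ z, B z ∂μ) l (𝓝 0) by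
      simpa only [zero_mul] using hr.mul_const _).eventually_lt_const (by positivity)
  filter_upwards [hφ, hK, hbound, hsmall] with t hφt hKt hFt hrt
  rw [dist_zero_right]
  calc ‖∫ z, F t z ∂μ‖ ≤ ∫ z, (ε * φ t z + r t * B z) ∂μ :=
        norm_integral_le_of_norm_le ((hφt.const_mul _).add (hB.const_mul _)) hFt
    _ = ε * ∫ z, φ t z ∂μ + r t * ∫ z, B z ∂μ := by
        rw [integral_add (hφt.const_mul _) (hB.const_mul _), integral_const_mul,
          integral_const_mul]
    _ ≤ ε * K + r t * ∫ z, B z ∂μ := by gcongr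
    _ < η := by linarith

variable {ι : Type*} [Fintype ι]

theorem exists_mul_one_add_sum_sq_le_sum_sq_sub {δ : ℝ} (hδ : 0 < δ) (ξ : ι → ℝ) :
    ∃ κ > 0, ∀ x, δ ≤ dist x ξ → κ * (1 + ∑ i, x i ^ 2) ≤ ∑ i, (x i - ξ i) ^ 2 := by
  have hR : 0 ≤ ∑ i, ξ i ^ 2 := by positivity
  refine ⟨(2 + (1 + 2 * ∑ i, ξ i ^ 2) / δ ^ 2)⁻¹, by positivity, fun x hx =>
    inv_mul_one_add_le (by positivity) hR ?_ ?_⟩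
  · by_contra! hlt
    refine hx.not_gt ((dist_pi_lt_iff hδ).2 fun i => abs_lt_of_sq_lt_sq ?_ hδ.le)
    exact (Finset.single_le_sum (f := fun i => (x i - ξ i) ^ 2) (fun i _ => sq_nonneg _)
      (Finset.mem_univ i)).trans_lt hlt
  · rw [Finset.mul_sum, Finset.mul_sum, ← Finset.sum_add_distrib]
    exact Finset.sum_le_sum fun i _ => by nlinarith [sq_nonneg (x i - 2 * ξ i)]

variable [DecidableEq ι] {a : ι → ℝ} {f : (ι → ℝ) → ℝ} {k : ι} {β : ℝ} {ξ : ι → ℝ}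

theorem ae_sum_sq_sub_le_quadForm (ha : ∀ i, 0 ≤ a i) (hξ : ∀ i, i ≠ k → 0 < a i → 0 ≤ ξ i) :
    ∀ᵐ z ∂(faceMeasure a k).prod (mixingMeasure a), ∀ t,
      ∑ i, (z.1 i - Function.update ξ k 0 i) ^ 2
        ≤ quadForm z.1 z.2 (Function.update ξ k t) := by
  filter_upwards [Measure.quasiMeasurePreserving_fst.ae (ae_faceMeasure_mem a k),
    Measure.quasiMeasurePreserving_snd.ae (ae_mixingMeasure_mem_Icc a),
    Measure.quasiMeasurePreserving_snd.ae (ae_mixingMeasure_eq_zero a)] with z hx hu hu0 t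
  refine Finset.sum_le_sum fun i _ => ?_
  rcases eq_or_ne i k with rfl | hi
  · simp only [hx.1, Function.update_self]
    nlinarith [sq_nonneg t]
  · rw [Function.update_of_ne hi, Function.update_of_ne hi, le_add_iff_nonneg_right]
    rcases (ha i).eq_or_lt' with h0 | hpos
    · rw [hu0 i h0, mul_zero]
    · have hxi : 0 < z.1 i := hx.2 i hi hpos
      exact mul_nonneg (mul_nonneg (by positivity) (hξ i hi hpos)) (hu i).1

theorem integrable_quadForm_rpow_faceMeasure (ha : ∀ i, 0 ≤ a i) (hξ : 0 < ξ k) :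
    Integrable (fun z => quadForm z.1 z.2 ξ ^ (-∑ i, (a i + 1 / 2)))
      ((faceMeasure a k).prod (mixingMeasure a)) := by
  have hpos := ae_quadForm_pos (a := a) (ae_faceMeasure_eq_zero a k) hξ.ne'
  refine ⟨((measurable_quadForm ξ).pow_const _).aestronglyMeasurable, ?_⟩
  rw [hasFiniteIntegral_iff_ofReal (hpos.mono fun z hz => rpow_nonneg hz.le _),
    lintegral_quadForm_rpow_faceMeasure ha hξ]
  exact ENNReal.ofReal_lt_top

theorem faceMass_pos (ha : ∀ i, 0 ≤ a i) (k : ι) : 0 < faceMass a k :=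
  div_pos (mul_pos (Finset.prod_pos fun _ _ => heatMass_pos)
    (Gamma_pos_of_pos (by linarith [ha k]))) (Gamma_pos_of_pos (sum_add_half_pos ha k))

theorem integral_quadForm_rpow_faceMeasure (ha : ∀ i, 0 ≤ a i) (hξ : 0 < ξ k) :
    ∫ z, quadForm z.1 z.2 ξ ^ (-∑ i, (a i + 1 / 2)) ∂(faceMeasure a k).prod (mixingMeasure a)
      = faceMass a k * ξ k ^ (-(2 * a k + 1)) := by
  have hpos := ae_quadForm_pos (a := a) (ae_faceMeasure_eq_zero a k) hξ.ne'
  rw [integral_eq_lintegral_of_nonneg_ae (hpos.mono fun z hz => rpow_nonneg hz.le _)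
    ((measurable_quadForm ξ).pow_const _).aestronglyMeasurable,
    lintegral_quadForm_rpow_faceMeasure ha hξ,
    ENNReal.toReal_ofReal (mul_nonneg (faceMass_pos ha k).le (rpow_nonneg hξ.le _))]

theorem integral_rpow_mul_quadForm_rpow_update (ha : ∀ i, 0 ≤ a i)
    (hdim : ∑ i, (a i + 1 / 2) = β + 1) (ξ : ι → ℝ) {t : ℝ} (ht : 0 < t) :
    ∫ z, t ^ (2 * a k + 1) * quadForm z.1 z.2 (Function.update ξ k t) ^ (-(β + 1))
      ∂(faceMeasure a k).prod (mixingMeasure a) = faceMass a k := by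
  have hupd : 0 < Function.update ξ k t k := by rwa [Function.update_self]
  rw [integral_const_mul, ← hdim, integral_quadForm_rpow_faceMeasure ha hupd,
    Function.update_self, mul_left_comm, ← rpow_add ht, add_neg_cancel, rpow_zero, mul_one]

theorem integrable_sub_const_mul_one_add_sum_sq_rpow (ha : ∀ i, 0 ≤ a i)
    (hf : Integrable (fun x => f x * (1 + ∑ i, x i ^ 2) ^ (-β)) (faceMeasure a k))
    (hdim : ∑ i, (a i + 1 / 2) = β + 1) (c : ℝ) :
    Integrable (fun x => (f x - c) * (1 + ∑ i, x i ^ 2) ^ (-(β + 1))) (faceMeasure a k) := by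
  have hdim' : ∑ i ∈ Finset.univ.erase k, (1 + 2 * a i) < 2 * (β + 1) := by
    rw [← hdim, ← Finset.add_sum_erase _ _ (Finset.mem_univ k), mul_add, Finset.mul_sum,
      Finset.sum_congr rfl fun i _ => (by ring : 1 + 2 * a i = 2 * (a i + 1 / 2))]
    linarith [ha k]
  have hconst := (integrable_one_add_sum_sq_rpow_faceMeasure ha hdim').const_mul c
  have hmain : Integrable (fun x => f x * (1 + ∑ i, x i ^ 2) ^ (-(β + 1))) (faceMeasure a k) := by
    refine hf.mono ((aestronglyMeasurable_of_mul_one_add_sum_sq_rpow hf.aestronglyMeasurable).mul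
      (by fun_prop : Measurable _).aestronglyMeasurable) (ae_of_all _ fun x => ?_)
    have hx : 1 ≤ 1 + ∑ i, x i ^ 2 := le_add_of_nonneg_right (by positivity)
    have hw (q : ℝ) : 0 ≤ (1 + ∑ i, x i ^ 2) ^ q := by positivity
    rw [norm_mul, norm_mul, norm_of_nonneg (hw _), norm_of_nonneg (hw _)]
    gcongr
    exact (lt_add_one β).le
  refine (hmain.sub hconst).congr (ae_of_all _ fun x => ?_)
  simp only [Pi.sub_apply, sub_mul, show -(2 * (β + 1)) / 2 = -(β + 1) by ring]

theorem tendsto_rpow_nhdsGT_zero {p : ℝ} (hp : 0 < p) :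
    Tendsto (fun t : ℝ => t ^ p) (𝓝[>] 0) (𝓝 0) :=
  ((continuousAt_rpow_const 0 p (.inr hp.le)).tendsto.mono_left nhdsWithin_le_nhds).trans_eq
    (by rw [zero_rpow hp.ne'])

theorem tendsto_integral_sub_mul_quadForm_rpow (ha : ∀ i, 0 ≤ a i)
    (hf : Integrable (fun x => f x * (1 + ∑ i, x i ^ 2) ^ (-β)) (faceMeasure a k)) (hβ : 0 ≤ β)
    (hdim : ∑ i, (a i + 1 / 2) = β + 1) (hξ : ∀ i, i ≠ k → 0 < a i → 0 ≤ ξ i)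
    (hcont : ContinuousAt f (Function.update ξ k 0)) :
    Tendsto (fun t => ∫ z, (f z.1 - f (Function.update ξ k 0)) *
        (t ^ (2 * a k + 1) * quadForm z.1 z.2 (Function.update ξ k t) ^ (-(β + 1)))
        ∂(faceMeasure a k).prod (mixingMeasure a)) (𝓝[>] 0) (𝓝 0) := by
  have hupd {t : ℝ} (ht : 0 < t) : 0 < Function.update ξ k t k := by rwa [Function.update_self]
  refine tendsto_integral_zero_of_norm_le_peak
    (φ := fun t z => t ^ (2 * a k + 1) * quadForm z.1 z.2 (Function.update ξ k t) ^ (-(β + 1)))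
    (K := faceMass a k) (eventually_mem_nhdsWithin.mono fun t ht => ?_)
    (eventually_mem_nhdsWithin.mono fun t ht =>
      (integral_rpow_mul_quadForm_rpow_update ha hdim ξ ht).le)
    (tendsto_rpow_nhdsGT_zero (by linarith [ha k] : 0 < 2 * a k + 1)) fun ε hε => ?_
  · exact hdim ▸ (integrable_quadForm_rpow_faceMeasure ha (hupd ht)).const_mul _
  set c := f (Function.update ξ k 0)
  obtain ⟨δ, hδ, hclose⟩ := Metric.continuousAt_iff.1 hcont ε hε
  obtain ⟨κ, hκ, hfar⟩ := exists_mul_one_add_sum_sq_le_sum_sq_sub hδ (Function.update ξ k 0)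
  refine ⟨fun z => κ ^ (-(β + 1)) * ‖(f z.1 - c) * (1 + ∑ i, z.1 i ^ 2) ^ (-(β + 1))‖,
    (((integrable_sub_const_mul_one_add_sum_sq_rpow ha hf hdim c).comp_fst _).norm.const_mul _),
    eventually_mem_nhdsWithin.mono fun t (ht : 0 < t) => ?_⟩
  filter_upwards [ae_sum_sq_sub_le_quadForm ha hξ,
    ae_quadForm_pos (ae_faceMeasure_eq_zero a k) (hupd ht).ne'] with z hz hQ
  have hw (q : ℝ) : 0 ≤ (1 + ∑ i, z.1 i ^ 2) ^ q := by positivity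
  rw [norm_mul, norm_of_nonneg (by positivity : 0 ≤ t ^ (2 * a k + 1) *
    quadForm z.1 z.2 (Function.update ξ k t) ^ (-(β + 1))), norm_mul, norm_of_nonneg (hw _)]
  rcases lt_or_ge (dist z.1 (Function.update ξ k 0)) δ with hnear | haway
  · refine le_add_of_le_of_nonneg ?_ (by have := hw (-(β + 1)); positivity)
    gcongr
    exact (dist_eq_norm (f z.1) c ▸ hclose hnear).le
  · refine le_add_of_nonneg_of_le (by positivity) ?_
    calc ‖f z.1 - c‖ * (t ^ (2 * a k + 1) * quadForm z.1 z.2 (Function.update ξ k t) ^ (-(β + 1)))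
        ≤ ‖f z.1 - c‖ * (t ^ (2 * a k + 1) * (κ * (1 + ∑ i, z.1 i ^ 2)) ^ (-(β + 1))) := by
          gcongr ?_ * (?_ * ?_)
          exact rpow_le_rpow_of_nonpos (by positivity) ((hfar _ haway).trans (hz t)) (by linarith)
      _ = _ := by rw [mul_rpow hκ.le (by positivity)]; ring

theorem tendsto_rpow_mul_layerPotential (ha : ∀ i, 0 ≤ a i)
    (hf : Integrable (fun x => f x * (1 + ∑ i, x i ^ 2) ^ (-β)) (faceMeasure a k)) (hβ : 0 ≤ β)
    (hdim : ∑ i, (a i + 1 / 2) = β + 1) (hξ : ∀ i, i ≠ k → 0 < a i → 0 ≤ ξ i)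
    (hcont : ContinuousAt f (Function.update ξ k 0)) :
    Tendsto (fun t => t ^ (2 * a k + 1) *
        layerPotential a (faceMeasure a k) f (β + 1) (Function.update ξ k t)) (𝓝[>] 0)
      (𝓝 (faceMass a k * f (Function.update ξ k 0))) := by
  set c := f (Function.update ξ k 0)
  refine ((tendsto_integral_sub_mul_quadForm_rpow ha hf hβ hdim hξ hcont).add_const
    (faceMass a k * c)).congr' (eventually_mem_nhdsWithin.mono fun t (ht : 0 < t) => ?_) |>.trans_eq
    (by rw [zero_add])
  have hupd : 0 < Function.update ξ k t k := by rwa [Function.update_self]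
  have hint : Integrable (fun z => f z.1 * quadForm z.1 z.2 (Function.update ξ k t) ^ (-(β + 1)))
      ((faceMeasure a k).prod (mixingMeasure a)) := by
    simpa only [one_mul] using integrable_mul_quadForm_rpow (ae_faceMeasure_eq_zero a k) hf hβ
      hupd.ne' (w := fun _ => 1) (r := 0) measurable_const (by simp) (by linarith)
  have hmass := hdim ▸ (integrable_quadForm_rpow_faceMeasure ha hupd).const_mul (t ^ (2 * a k + 1))
  simp_rw [sub_mul, fun z : (ι → ℝ) × (ι → ℝ) => mul_left_comm (f z.1) (t ^ (2 * a k + 1))]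
  rw [integral_sub (hint.const_mul _) (hmass.const_mul c), integral_const_mul, integral_const_mul c,
    integral_rpow_mul_quadForm_rpow_update ha hdim ξ ht, layerPotential]
  ring

end BoundaryLimit

section NeumannPotential

variable {ι : Type*} [Fintype ι]

theorem potentialMoment_one_of_ae_eq_zero {a : ι → ℝ} {μ : Measure (ι → ℝ)} [SFinite μ] {k : ι}
    (hμ : ∀ᵐ x ∂μ, x k = 0) (f : (ι → ℝ) → ℝ) (q : ℝ) (ξ : ι → ℝ) :
    potentialMoment a μ f k 1 q ξ = ξ k * layerPotential a μ f q ξ := by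
  rw [potentialMoment, layerPotential, ← integral_const_mul]
  refine integral_congr_ae ((ae_prod_mixingMeasure hμ).mono fun z hz => ?_)
  simp only [momentIntegrand, mirrorMean, hz.1]
  ring

variable [DecidableEq ι]

/-- The superposition of the layer potentials of densities `f k` on the faces `k ∈ s`, with the
sign and the normalising factor `γ` of the solution of the Neumann problem. -/
noncomputable def neumannPotential (a : ι → ℝ) (s : Finset ι) (f : ι → (ι → ℝ) → ℝ) (β γ : ℝ)
    (ξ : ι → ℝ) : ℝ :=
  -(γ * ∑ k ∈ s, layerPotential a (faceMeasure a k) (f k) β ξ)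

/-- The partial derivative of `neumannPotential` in the `i`-th coordinate. -/
noncomputable def neumannGradient (a : ι → ℝ) (s : Finset ι) (f : ι → (ι → ℝ) → ℝ) (β γ : ℝ)
    (i : ι) (ξ : ι → ℝ) : ℝ :=
  2 * β * γ * ∑ k ∈ s, potentialMoment a (faceMeasure a k) (f k) i 1 (β + 1) ξ

variable {a : ι → ℝ} {s : Finset ι} {f : ι → (ι → ℝ) → ℝ} {β : ℝ} {ξ : ι → ℝ}

theorem hasDerivAt_neumannPotential
    (hf : ∀ k ∈ s, Integrable (fun x => f k x * (1 + ∑ i, x i ^ 2) ^ (-β)) (faceMeasure a k))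
    (hβ : 0 ≤ β) (γ : ℝ) (hξ : ∀ k ∈ s, ξ k ≠ 0) (i : ι) :
    HasDerivAt (fun t => neumannPotential a s f β γ (Function.update ξ i t))
      (neumannGradient a s f β γ i ξ) (ξ i) := by
  have hterm : ∀ k ∈ s, HasDerivAt
      (fun t => layerPotential a (faceMeasure a k) (f k) β (Function.update ξ i t))
      (-(2 * β) * potentialMoment a (faceMeasure a k) (f k) i 1 (β + 1) ξ) (ξ i) := fun k hk => by
    refine (potentialMoment_zero a _ (f k) i β ▸ hasDerivAt_potentialMoment
      (ae_faceMeasure_eq_zero a k) (hf k hk) hβ (hξ k hk) i (by simp)).congr_deriv ?_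
    push_cast
    ring
  refine ((HasDerivAt.fun_sum hterm).const_mul γ).neg.congr_deriv ?_
  rw [neumannGradient, ← Finset.mul_sum]
  ring

theorem hasDerivAt_neumannGradient
    (hf : ∀ k ∈ s, Integrable (fun x => f k x * (1 + ∑ i, x i ^ 2) ^ (-β)) (faceMeasure a k))
    (hβ : 0 ≤ β) (γ : ℝ) (hξ : ∀ k ∈ s, ξ k ≠ 0) (i : ι) :
    HasDerivAt (fun t => neumannGradient a s f β γ i (Function.update ξ i t))
      (2 * β * γ * ∑ k ∈ s, (layerPotential a (faceMeasure a k) (f k) (β + 1) ξ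
        - 2 * (β + 1) * potentialMoment a (faceMeasure a k) (f k) i 2 (β + 2) ξ)) (ξ i) := by
  refine (HasDerivAt.fun_sum fun k hk => ?_).const_mul _
  refine (hasDerivAt_potentialMoment (ae_faceMeasure_eq_zero a k) (hf k hk) hβ (hξ k hk) i
    (n := 1) (by push_cast; linarith)).congr_deriv ?_
  rw [Nat.sub_self, potentialMoment_zero, Nat.cast_one, one_mul, add_assoc,
    (one_add_one_eq_two : (1 : ℝ) + 1 = 2)]

theorem eventuallyEq_deriv_neumannPotential
    (hf : ∀ k ∈ s, Integrable (fun x => f k x * (1 + ∑ i, x i ^ 2) ^ (-β)) (faceMeasure a k))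
    (hβ : 0 ≤ β) (γ : ℝ) (hξ : ∀ k ∈ s, ξ k ≠ 0) (i : ι) :
    (deriv fun t => neumannPotential a s f β γ (Function.update ξ i t))
      =ᶠ[𝓝 (ξ i)] fun t => neumannGradient a s f β γ i (Function.update ξ i t) := by
  have hnear : ∀ᶠ η in 𝓝 ξ, ∀ k ∈ s, η k ≠ 0 := (Filter.eventually_all_finset s).2 fun k hk =>
    (continuous_apply k).continuousAt.eventually_ne (hξ k hk)
  filter_upwards [(tendsto_update_nhds_self ξ i).eventually hnear] with t ht
  simpa only [Function.update_idem, Function.update_self] using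
    (hasDerivAt_neumannPotential hf hβ γ ht i).deriv

theorem neumannPotential_pde (ha : ∀ i, 0 ≤ a i)
    (hf : ∀ k ∈ s, Integrable (fun x => f k x * (1 + ∑ i, x i ^ 2) ^ (-β)) (faceMeasure a k))
    (hβ : 0 ≤ β) (hdim : ∑ i, (a i + 1 / 2) = β + 1) (γ : ℝ) (hξ : ∀ k ∈ s, ξ k ≠ 0)
    (hsing : ∀ i, 0 < a i → ξ i ≠ 0) :
    ∑ i, deriv (deriv fun t => neumannPotential a s f β γ (Function.update ξ i t)) (ξ i)
      + ∑ i, 2 * a i / ξ i *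
        deriv (fun t => neumannPotential a s f β γ (Function.update ξ i t)) (ξ i) = 0 := by
  have hsum : ∀ k ∈ s, ∑ i, (layerPotential a (faceMeasure a k) (f k) (β + 1) ξ
      - 2 * (β + 1) * potentialMoment a (faceMeasure a k) (f k) i 2 (β + 2) ξ)
      + ∑ i, 2 * a i / ξ i * potentialMoment a (faceMeasure a k) (f k) i 1 (β + 1) ξ = 0 :=
    fun k hk => sum_moments_eq_zero ha (ae_faceMeasure_eq_zero a k) (hf k hk) hβ hdim (hξ k hk)
      hsing
  simp_rw [fun i => (eventuallyEq_deriv_neumannPotential hf hβ γ hξ i).deriv_eq,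
    fun i => (hasDerivAt_neumannPotential hf hβ γ hξ i).deriv,
    fun i => (hasDerivAt_neumannGradient hf hβ γ hξ i).deriv, neumannGradient,
    mul_left_comm _ (2 * β * γ), ← Finset.mul_sum, ← mul_add]
  simp only [Finset.mul_sum (_ : Finset ι) _ (2 * a _ / ξ _)]
  rw [Finset.sum_comm, Finset.sum_comm (s := .univ) (t := s), ← Finset.sum_add_distrib,
    Finset.sum_eq_zero hsum, mul_zero]

theorem tendsto_rpow_mul_neumannGradient (ha : ∀ i, 0 ≤ a i) (has : ∀ k ∈ s, 0 < a k)
    (hf : ∀ k ∈ s, Integrable (fun x => f k x * (1 + ∑ i, x i ^ 2) ^ (-β)) (faceMeasure a k))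
    (hβ : 0 ≤ β) (hdim : ∑ i, (a i + 1 / 2) = β + 1) (γ : ℝ) {k : ι} (hk : k ∈ s)
    (hξ : ∀ i, i ≠ k → 0 < a i → 0 < ξ i)
    (hcont : ContinuousAt (f k) (Function.update ξ k 0)) :
    Tendsto (fun t => t ^ (2 * a k) * neumannGradient a s f β γ k (Function.update ξ k t)) (𝓝[>] 0)
      (𝓝 (2 * β * γ * (faceMass a k * f k (Function.update ξ k 0)))) := by
  have hterm : ∀ l ∈ s, Tendsto (fun t => t ^ (2 * a k) *
      potentialMoment a (faceMeasure a l) (f l) k 1 (β + 1) (Function.update ξ k t)) (𝓝[>] 0)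
      (𝓝 (if l = k then faceMass a k * f k (Function.update ξ k 0) else 0)) := fun l hl => by
    split_ifs with hlk
    · subst hlk
      refine (tendsto_rpow_mul_layerPotential ha (hf l hk) hβ hdim
        (fun i hi hai => (hξ i hi hai).le) hcont).congr'
        (eventually_mem_nhdsWithin.mono fun t (ht : 0 < t) => ?_)
      beta_reduce
      rw [potentialMoment_one_of_ae_eq_zero (ae_faceMeasure_eq_zero a l), Function.update_self,
        rpow_add_one ht.ne', mul_assoc]
    · have hξl : Function.update ξ k 0 l ≠ 0 := by
        rw [Function.update_of_ne hlk]; exact (hξ l hlk (has l hl)).ne'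
      obtain ⟨C, hC⟩ := exists_eventually_abs_potentialMoment_le (a := a)
        (ae_faceMeasure_eq_zero a l) (hf l hl) hβ hξl k (n := 1) (q := β + 1)
        (by push_cast; linarith)
      have hline : Tendsto (Function.update ξ k) (𝓝[>] 0) (𝓝 (Function.update ξ k 0)) :=
        ((continuous_const.update k continuous_id).tendsto _).mono_left nhdsWithin_le_nhds
      exact (tendsto_rpow_nhdsGT_zero (mul_pos two_pos (has k hk))).zero_mul_isBoundedUnder_le
        ⟨C, eventually_map.2 (hline.eventually hC)⟩
  have hsum := (tendsto_finsetSum s hterm).const_mul (2 * β * γ)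
  rw [Finset.sum_ite_eq' s k, if_pos hk] at hsum
  refine hsum.congr fun t => ?_
  rw [neumannGradient, ← Finset.mul_sum, mul_left_comm]

end NeumannPotential

section Decay

theorem exists_forall_lt_imp_abs_lt {X : Type*} [TopologicalSpace X] {F N : X → ℝ} {S : Set X}
    (hF : Tendsto F (cocompact X ⊓ 𝓟 S) (𝓝 0)) (hN : Continuous N) {δ : ℝ} (hδ : 0 < δ) :
    ∃ R, ∀ x ∈ S, R < N x → |F x| < δ := by
  have hsmall : ∀ᶠ x in cocompact X, x ∈ S → |F x| < δ := by
    rw [← eventually_inf_principal]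
    simpa only [dist_zero_right, norm_eq_abs] using (tendsto_order.1 hF.abs).2 δ (by simpa using hδ)
  obtain ⟨t, ht, hts⟩ := mem_cocompact.1 hsmall
  obtain ⟨R, hR⟩ := (ht.image hN).bddAbove
  exact ⟨R, fun x hxS hx =>
    hts (fun hxt => hx.not_ge (hR (Set.mem_image_of_mem N hxt))) hxS⟩

theorem tendsto_pair_comap_eval_cocompact {ι : Type*} {i j k : ι} (hi : i = j ∨ i = k) :
    Tendsto (fun ξ : ι → ℝ => (ξ k, ξ j)) (comap (Function.eval i) (cocompact ℝ))
      (cocompact (ℝ × ℝ)) := by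
  rw [← coprod_cocompact, Filter.coprod]
  rcases hi with rfl | rfl
  · exact (tendsto_comap_iff.2 tendsto_comap).mono_right le_sup_right
  · exact (tendsto_comap_iff.2 tendsto_comap).mono_right le_sup_left

theorem nontrivial_of_lt_half {ι : Type*} [Fintype ι] {a : ι → ℝ} {k : ι} {β : ℝ} (hβ : 0 < β)
    (hdim : ∑ i, (a i + 1 / 2) = β + 1) (hk : a k < 1 / 2) : Nontrivial ι := by
  by_contra h
  have : Subsingleton ι := not_nontrivial_iff_subsingleton.1 h
  rw [Fintype.sum_subsingleton _ k] at hdim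
  linarith

variable {ι : Type*} [Fintype ι] [DecidableEq ι] {a : ι → ℝ} {k : ι} {f : (ι → ℝ) → ℝ}
  {β c s : ℝ}

theorem enorm_gamma_mul_layerPotential_le (ha : ∀ i, 0 ≤ a i) (hβ : 0 < β)
    (hdim : ∑ i, (a i + 1 / 2) = β + 1) (hc : 0 ≤ c) (hs : 0 ≤ s)
    (hbound : ∀ᵐ x ∂faceMeasure a k, |f x| ≤ c * (1 + ∑ i, x i ^ 2) ^ (-s / 2)) {ξ : ι → ℝ}
    (hξ : ξ k ≠ 0) {j : ι} (hj : j ≠ k) :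
    ‖Real.Gamma β * layerPotential a (faceMeasure a k) f β ξ‖ₑ
      ≤ ENNReal.ofReal (c * ∏ i ∈ (Finset.univ.erase k).erase j, heatMass (a i)) *
          subordinatedHeatAverage (a k) (a j) s (ξ k) (ξ j) := by
  rw [enorm_mul, Real.enorm_of_nonneg (Gamma_pos_of_pos hβ).le, ENNReal.ofReal_mul hc, mul_assoc,
    ← lintegral_one_add_sq_rpow_mul_quadForm_rpow_faceMeasure ha hβ hdim hξ hj,
    mul_left_comm (ENNReal.ofReal c)]
  gcongr
  rw [← lintegral_const_mul' _ _ ENNReal.ofReal_ne_top]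
  refine (enorm_integral_le_lintegral_enorm _).trans (lintegral_mono_ae ?_)
  filter_upwards [ae_quadForm_pos (a := a) (ae_faceMeasure_eq_zero a k) hξ,
    Measure.quasiMeasurePreserving_fst.ae hbound] with z hQ hz
  have hweight : (1 + ∑ i, z.1 i ^ 2) ^ (-s / 2) ≤ (1 + z.1 j ^ 2) ^ (-s / 2) := by
    refine rpow_le_rpow_of_nonpos (by positivity) ?_ (by linarith)
    gcongr
    exact Finset.single_le_sum (f := fun i => z.1 i ^ 2) (fun i _ => sq_nonneg _)
      (Finset.mem_univ j)
  rw [enorm_mul, Real.enorm_of_nonneg (rpow_nonneg hQ.le _), ← mul_assoc, ← ENNReal.ofReal_mul hc,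
    Real.enorm_eq_ofReal_abs]
  gcongr
  exact hz.trans (by gcongr)

theorem tendsto_layerPotential_cocompact (ha : ∀ i, 0 ≤ a i) (hβ : 0 < β)
    (hdim : ∑ i, (a i + 1 / 2) = β + 1) (hk : 0 < a k) (hk' : a k < 1 / 2)
    (hs : 1 - 2 * a k < s)
    (hbound : ∀ᵐ x ∂faceMeasure a k, |f x| ≤ c * (1 + ∑ i, x i ^ 2) ^ (-s / 2)) :
    Tendsto (layerPotential a (faceMeasure a k) f β) (cocompact (ι → ℝ) ⊓ 𝓟 {ξ | ξ k ≠ 0})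
      (𝓝 0) := by
  have hnontrivial := nontrivial_of_lt_half hβ hdim hk'
  have hΓ : Real.Gamma β ≠ 0 := (Gamma_pos_of_pos hβ).ne'
  -- `tendsto_subordinatedHeatAverage` needs a weight exponent below `2 * a j + 1`.
  obtain ⟨r, hr, hr'⟩ := exists_between (lt_min hs (show 1 - 2 * a k < 1 by linarith))
  have hr0 : 0 < r := by linarith
  have hbound' : ∀ᵐ x ∂faceMeasure a k, |f x| ≤ |c| * (1 + ∑ i, x i ^ 2) ^ (-r / 2) :=
    hbound.mono fun x hx => hx.trans <| by
      have h1 : 1 ≤ 1 + ∑ i, x i ^ 2 := le_add_of_nonneg_right (by positivity)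
      gcongr
      · exact le_abs_self c
      · exact hr'.le.trans (min_le_left _ _)
  suffices h : Tendsto (fun ξ => Real.Gamma β * layerPotential a (faceMeasure a k) f β ξ)
      (cocompact (ι → ℝ) ⊓ 𝓟 {ξ | ξ k ≠ 0}) (𝓝 0) by
    simpa only [inv_mul_cancel_left₀ hΓ, mul_zero] using h.const_mul (Real.Gamma β)⁻¹
  rw [← coprodᵢ_cocompact, Filter.coprodᵢ, ← iSup_inf_principal, tendsto_iSup]
  intro i
  obtain ⟨j, hj, hij⟩ : ∃ j, j ≠ k ∧ (i = j ∨ i = k) := by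
    rcases eq_or_ne i k with rfl | hik
    · exact (exists_ne i).imp fun j hj => ⟨hj, .inr rfl⟩
    · exact ⟨i, hik, .inl rfl⟩
  have hlim := ENNReal.Tendsto.const_mul ((tendsto_subordinatedHeatAverage (ha j) hk' hr0
    (by linarith [min_le_right s 1, ha j]) hr).comp (tendsto_pair_comap_eval_cocompact hij))
    (a := ENNReal.ofReal (|c| * ∏ i ∈ (Finset.univ.erase k).erase j, heatMass (a i)))
    (Or.inr ENNReal.ofReal_ne_top)
  rw [mul_zero] at hlim
  refine tendsto_zero_iff_enorm_tendsto_zero.2 (tendsto_of_tendsto_of_tendsto_of_le_of_le'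
    tendsto_const_nhds (hlim.mono_left inf_le_left) (.of_forall fun _ => zero_le) ?_)
  exact eventually_inf_principal.2 (.of_forall fun ξ hξ =>
    enorm_gamma_mul_layerPotential_le ha hβ hdim (abs_nonneg c) hr0.le hbound' hξ hj)

theorem tendsto_neumannPotential_cocompact {t : Finset ι} {f : ι → (ι → ℝ) → ℝ} {c s : ι → ℝ}
    (ha : ∀ i, 0 ≤ a i) (hβ : 0 < β) (hdim : ∑ i, (a i + 1 / 2) = β + 1) (γ : ℝ)
    (ht : ∀ k ∈ t, 0 < a k ∧ a k < 1 / 2) (hs : ∀ k ∈ t, 1 - 2 * a k < s k)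
    (hbound : ∀ k ∈ t, ∀ᵐ x ∂faceMeasure a k, |f k x| ≤ c k * (1 + ∑ i, x i ^ 2) ^ (-s k / 2)) :
    Tendsto (neumannPotential a t f β γ) (cocompact (ι → ℝ) ⊓ 𝓟 {ξ | ∀ k ∈ t, ξ k ≠ 0})
      (𝓝 0) := by
  have hsum := tendsto_finsetSum t fun k hk => (tendsto_layerPotential_cocompact ha hβ hdim
    (ht k hk).1 (ht k hk).2 (hs k hk) (hbound k hk)).mono_left
      (inf_le_inf_left _ (principal_mono.2 fun ξ (hξ : ∀ k ∈ t, ξ k ≠ 0) => hξ k hk))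
  rw [Finset.sum_const_zero] at hsum
  exact (hsum.const_mul γ).neg.trans_eq (by rw [mul_zero, neg_zero])

end Decay

section Faces

/-- The orthant on which the weights `xᵢ ^ (2 aᵢ)` live: coordinates with positive exponent are
positive and the others are unrestricted. -/
def orthant {ι : Type*} (a : ι → ℝ) : Set (ι → ℝ) := {x | ∀ i, 0 < a i → 0 < x i}

theorem orthant_eq_pi {ι : Type*} (a : ι → ℝ) :
    orthant a = Set.univ.pi fun i => coordRange (a i) :=
  Set.ext fun _ => (Set.mem_univ_pi (t := fun i => coordRange (a i))).symm

theorem isOpen_orthant {ι : Type*} [Finite ι] (a : ι → ℝ) : IsOpen (orthant a) :=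
  orthant_eq_pi a ▸ isOpen_set_pi Set.finite_univ fun i _ => isOpen_coordRange (a i)

theorem pi_weightedLebesgue {ι : Type*} [Fintype ι] (a : ι → ℝ) :
    Measure.pi (fun i => weightedLebesgue (a i))
      = (volume.restrict (orthant a)).withDensity fun y =>
          ∏ i, ENNReal.ofReal (y i ^ (2 * a i)) := by
  have (i : ι) : SigmaFinite ((volume.restrict (coordRange (a i))).withDensity fun y =>
      ENNReal.ofReal (y ^ (2 * a i))) :=
    inferInstanceAs (SigmaFinite (weightedLebesgue (a i)))
  rw [orthant_eq_pi, volume_pi, Measure.restrict_pi_pi]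
  exact pi_withDensity (fun i => volume.restrict (coordRange (a i)))
    (d := fun i y => ENNReal.ofReal (y ^ (2 * a i))) fun i => by fun_prop

theorem integral_pi_weightedLebesgue {ι : Type*} [Fintype ι] {a : ι → ℝ} (ha : ∀ i, 0 ≤ a i)
    (f : (ι → ℝ) → ℝ) :
    ∫ y, f y ∂Measure.pi (fun i => weightedLebesgue (a i))
      = ∫ y in orthant a, (∏ i, y i ^ (2 * a i)) * f y := by
  rw [pi_weightedLebesgue, integral_withDensity_eq_integral_toReal_smul (by fun_prop)
    (ae_of_all _ fun y => ENNReal.prod_lt_top fun i _ => ENNReal.ofReal_lt_top)]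
  refine setIntegral_congr_fun (isOpen_orthant a).measurableSet fun y hy => ?_
  simp only [ENNReal.toReal_prod, smul_eq_mul]
  congr 1
  refine Finset.prod_congr rfl fun i _ => ENNReal.toReal_ofReal ?_
  rcases (ha i).eq_or_lt with h | h
  · rw [← h, mul_zero, rpow_zero]; exact zero_le_one
  · exact rpow_nonneg (hy i h).le _

variable {ι : Type*} [DecidableEq ι]

/-- The point `x_k⁰` of the face `x k = 0` with the remaining coordinates given by `y`. -/
def extendZero (k : ι) (y : {i // i ≠ k} → ℝ) (i : ι) : ℝ := if h : i = k then 0 else y ⟨i, h⟩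

theorem extendZero_self (k : ι) (y : {i // i ≠ k} → ℝ) : extendZero k y k = 0 := dif_pos rfl

theorem extendZero_coe (k : ι) (y : {i // i ≠ k} → ℝ) (i : {i // i ≠ k}) :
    extendZero k y i = y i := dif_neg i.2

theorem extendZero_mem_univ_pi {k : ι} {y : {i // i ≠ k} → ℝ} {s : ι → Set ℝ} :
    extendZero k y ∈ Set.univ.pi s ↔ 0 ∈ s k ∧ ∀ i : {i // i ≠ k}, y i ∈ s i := by
  rw [Set.mem_univ_pi]
  refine ⟨fun h => ⟨extendZero_self k y ▸ h k, fun i => extendZero_coe k y i ▸ h i⟩,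
    fun h i => ?_⟩
  rcases eq_or_ne i k with rfl | hi
  · exact (extendZero_self i y).symm ▸ h.1
  · exact (extendZero_coe k y ⟨i, hi⟩).symm ▸ h.2 ⟨i, hi⟩

theorem measurableEmbedding_extendZero [Countable ι] (k : ι) :
    MeasurableEmbedding (extendZero k) := by
  have hinv : Function.LeftInverse (fun (x : ι → ℝ) (i : {i // i ≠ k}) => x i) (extendZero k) :=
    fun y => funext (extendZero_coe k y)
  refine (hinv.isClosedEmbedding (by fun_prop) (continuous_pi fun i => ?_)).measurableEmbedding
  by_cases h : i = k
  · simp only [extendZero, dif_pos h]; exact continuous_const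
  · simp only [extendZero, dif_neg h]; exact continuous_apply _

variable [Fintype ι]

theorem measurePreserving_extendZero {κ : ι → Measure ℝ} [∀ i, SigmaFinite (κ i)] {k : ι}
    (hk : κ k = Measure.dirac 0) :
    MeasurePreserving (extendZero k) (Measure.pi fun i : {i // i ≠ k} => κ i) (Measure.pi κ) := by
  refine ⟨(measurableEmbedding_extendZero k).measurable, (Measure.pi_eq fun s hs => ?_).symm⟩
  rw [Measure.map_apply (measurableEmbedding_extendZero k).measurable (MeasurableSet.univ_pi hs),
    Fintype.prod_eq_mul_prod_subtype_ne _ k, hk, Measure.dirac_apply' _ (hs k)]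
  by_cases h0 : (0 : ℝ) ∈ s k
  · rw [Set.indicator_of_mem h0, Pi.one_apply, one_mul, ← Measure.pi_pi]
    congr 1
    ext y
    rw [Set.mem_preimage, extendZero_mem_univ_pi, Set.mem_univ_pi, and_iff_right h0]
  · rw [Set.indicator_of_notMem h0, zero_mul,
      Set.preimage_eq_empty (Set.disjoint_left.2 ?_), measure_empty]
    rintro _ hx ⟨y, rfl⟩
    exact h0 (extendZero_mem_univ_pi.1 hx).1

theorem measurePreserving_extendZero_faceMeasure (a : ι → ℝ) (k : ι) :
    MeasurePreserving (extendZero k) (Measure.pi fun i : {i // i ≠ k} => weightedLebesgue (a i))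
      (faceMeasure a k) := by
  have h := measurePreserving_extendZero (faceFactor_self a k)
  simp only [fun i : {i // i ≠ k} => faceFactor_of_ne a i.2] at h
  exact h

theorem integral_faceMeasure {a : ι → ℝ} (ha : ∀ i, 0 ≤ a i) (k : ι) (f : (ι → ℝ) → ℝ) :
    ∫ x, f x ∂faceMeasure a k
      = ∫ y in orthant fun i : {i // i ≠ k} => a i,
          (∏ i, y i ^ (2 * a i)) * f (extendZero k y) := by
  rw [← (measurePreserving_extendZero_faceMeasure a k).integral_comp
    (measurableEmbedding_extendZero k),
    integral_pi_weightedLebesgue (a := fun i : {i // i ≠ k} => a i) fun i => ha i]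

end Faces

section Lauricella

open ProbabilityTheory

theorem lauricellaFA_eq_integral_betaMeasure {ι : Type*} [Fintype ι] (β : ℝ) {b c : ι → ℝ}
    (hb : ∀ i, 0 < b i) (hc : ∀ i, b i < c i) (x : ι → ℝ) :
    lauricellaFA β b c x
      = ∫ u, (1 - ∑ i, x i * u i) ^ (-β)
          ∂Measure.pi fun i => betaMeasure (b i) (c i - b i) := by
  have hprob (i : ι) : IsProbabilityMeasure (betaMeasure (b i) (c i - b i)) :=
    isProbabilityMeasureBeta (hb i) (sub_pos.2 (hc i))
  simp only [betaMeasure_eq_withDensity_restrict] at hprob ⊢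
  rw [pi_withDensity _ fun i => by fun_prop, ← Measure.restrict_pi_pi,
    Measure.restrict_congr_set (Measure.univ_pi_Ioo_ae_eq_Icc (f := fun _ => 0) (g := fun _ => 1)),
    ← Set.pi_univ_Icc, ← volume_pi,
    integral_withDensity_eq_integral_toReal_smul (by fun_prop)
      (ae_of_all _ fun u => ENNReal.prod_lt_top fun i _ => ENNReal.ofReal_lt_top),
    lauricellaFA, ← integral_const_mul]
  refine setIntegral_congr_fun (MeasurableSet.univ_pi fun _ => measurableSet_Icc) fun u hu => ?_
  rw [← mul_assoc, ← Finset.prod_mul_distrib, ENNReal.toReal_prod, smul_eq_mul]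
  congr 1
  refine Finset.prod_congr rfl fun i _ => ?_
  have hu₀ : 0 ≤ u i := (hu i trivial).1
  have hu₁ : 0 ≤ 1 - u i := sub_nonneg.2 (hu i trivial).2
  have hbeta := beta_pos (hb i) (sub_pos.2 (hc i))
  rw [ENNReal.toReal_ofReal (by positivity), beta, add_sub_cancel, one_div_div, mul_assoc]

theorem rpow_mul_lauricellaFA {ι : Type*} [Fintype ι] {a : ι → ℝ} {p : ι → Prop} [DecidablePred p]
    (ha : ∀ i, 0 ≤ a i) (hp : ∀ i, p i ↔ 0 < a i) (β : ℝ) {x ξ : ι → ℝ}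
    (hr : 0 < ∑ i, (x i - ξ i) ^ 2) :
    (∑ i, (x i - ξ i) ^ 2) ^ (-β) * lauricellaFA β (fun j : {i // p i} => a j)
        (fun j => 2 * a j) (fun j => -4 * x j * ξ j / ∑ i, (x i - ξ i) ^ 2)
      = ∫ u, quadForm x u ξ ^ (-β) ∂mixingMeasure a := by
  have hpos (j : {i // p i}) : 0 < a j := (hp j).1 j.2
  have hmp := measurePreserving_pi_subtype (fun i => symmBeta (a i)) p
  simp only [fun j : {i // p i} => symmBeta_of_pos (hpos j)] at hmp
  rw [lauricellaFA_eq_integral_betaMeasure β hpos fun j => by linarith [hpos j]]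
  simp only [fun j : {i // p i} => (by ring : 2 * a j - a j = a j)]
  rw [← hmp.map_eq, integral_map hmp.aemeasurable
    (by fun_prop : Measurable _).aestronglyMeasurable, ← integral_const_mul]
  refine integral_congr_ae ?_
  filter_upwards [ae_mixingMeasure_mem_Icc a, ae_mixingMeasure_eq_zero a] with u hu hu0
  have hQ : 0 ≤ quadForm x u ξ :=
    (Finset.sum_nonneg fun i _ => sq_nonneg _).trans (sum_sq_abs_sub_abs_le_quadForm hu x ξ)
  have hsub : ∑ j : {i // p i}, 4 * x j * ξ j * u j = ∑ i, 4 * x i * ξ i * u i := by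
    rw [← Fintype.sum_subtype_add_sum_subtype p, left_eq_add]
    refine Finset.sum_eq_zero fun j _ => ?_
    rw [hu0 j ((ha j).eq_or_lt'.resolve_right (j.2 ∘ (hp j).2)), mul_zero]
  have hbase : 1 - ∑ j : {i // p i}, -4 * x j * ξ j / (∑ i, (x i - ξ i) ^ 2) * u j
      = quadForm x u ξ / ∑ i, (x i - ξ i) ^ 2 := by
    rw [quadForm, Finset.sum_add_distrib, ← hsub, add_div, div_self hr.ne', Finset.sum_div,
      sub_eq_add_neg, ← Finset.sum_neg_distrib]
    congr 1
    exact Finset.sum_congr rfl fun j _ => by ring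
  rw [hbase, ← mul_rpow hr.le (by positivity), mul_div_cancel₀ _ hr.ne']

end Lauricella

section Normalisation

theorem gamma_div_gamma_two_mul_mul_heatMass {a : ℝ} (ha : 0 < a) :
    Real.Gamma a / Real.Gamma (2 * a) * heatMass a = 2 ^ (-(2 * a)) * √π := by
  have hΓ : Real.Gamma (2 * a) ≠ 0 := (Gamma_pos_of_pos (by positivity)).ne'
  rw [heatMass_of_pos ha, div_mul_div_comm, Real.Gamma_mul_Gamma_add_half, mul_assoc,
    mul_div_mul_left _ _ hΓ, show 1 - 2 * a = -(2 * a) + 1 by ring, rpow_add_one two_ne_zero]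
  ring

variable {ι : Type*} [Fintype ι] {a : ι → ℝ} {t : Finset ι}

theorem prod_gamma_div_gamma_mul_prod_heatMass (ha : ∀ i, 0 ≤ a i) (ht : ∀ i, i ∈ t ↔ 0 < a i) :
    (∏ i ∈ t, Real.Gamma (a i) / Real.Gamma (2 * a i)) * ∏ i, heatMass (a i)
      = 2 ^ (-(2 * ∑ i, a i)) * π ^ ((Fintype.card ι : ℝ) / 2) := by
  classical
  have hfactor (i : ι) : (if i ∈ t then Real.Gamma (a i) / Real.Gamma (2 * a i) else 1) *
      heatMass (a i) = 2 ^ (-(2 * a i)) * √π := by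
    split_ifs with hi
    · exact gamma_div_gamma_two_mul_mul_heatMass ((ht i).1 hi)
    · rw [← (ha i).eq_or_lt.resolve_right (hi ∘ (ht i).2), heatMass_zero]; simp
  rw [← Finset.prod_ite_mem_eq, ← Finset.prod_mul_distrib,
    Finset.prod_congr rfl fun i _ => hfactor i, Finset.prod_mul_distrib,
    ← rpow_sum_of_pos two_pos, Finset.sum_neg_distrib, ← Finset.mul_sum,
    Finset.prod_const, Finset.card_univ, sqrt_eq_rpow, ← rpow_mul_natCast pi_pos.le]
  congr 2
  ring

theorem two_mul_gamma_factor_mul_faceMass [DecidableEq ι] (ha : ∀ i, 0 ≤ a i)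
    (ht : ∀ i, i ∈ t ↔ 0 < a i) {β : ℝ} (hβ : 0 < β) (hdim : ∑ i, (a i + 1 / 2) = β + 1)
    {k : ι} (hk : 0 < a k) :
    2 * β * (2 ^ (2 * β - Fintype.card ι) * Real.Gamma β / π ^ ((Fintype.card ι : ℝ) / 2) *
      ∏ i ∈ t, Real.Gamma (a i) / Real.Gamma (2 * a i)) * faceMass a k = 1 := by
  have hΓ : 0 < Real.Gamma β := Gamma_pos_of_pos hβ
  have hmass : (∏ i ∈ Finset.univ.erase k, heatMass (a i)) * Real.Gamma (a k + 1 / 2)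
      = 2 * ∏ i, heatMass (a i) := by
    rw [← Finset.mul_prod_erase _ _ (Finset.mem_univ k), heatMass_of_pos hk]
    ring
  have hexp : 2 * β - Fintype.card ι = -2 + 2 * ∑ i, a i := by
    rw [Finset.sum_add_distrib, Finset.sum_const, Finset.card_univ, nsmul_eq_mul] at hdim
    linarith
  rw [faceMass, hmass, hdim, Real.Gamma_add_one hβ.ne', hexp, rpow_add two_pos]
  have hprod := prod_gamma_div_gamma_mul_prod_heatMass ha ht
  rw [rpow_neg two_pos.le] at hprod
  have h2 : (2 : ℝ) ^ (-2 : ℝ) = 1 / 4 := by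
    rw [rpow_neg two_pos.le]; norm_num
  calc _ = 2 ^ (2 * ∑ i, a i) / π ^ ((Fintype.card ι : ℝ) / 2) *
        ((∏ i ∈ t, Real.Gamma (a i) / Real.Gamma (2 * a i)) * ∏ i, heatMass (a i)) := by
        rw [h2]; field_simp; ring
    _ = 1 := by rw [hprod]; field_simp

end Normalisation

section FaceDensity

variable {ι : Type*} [Fintype ι] [DecidableEq ι]

/-- The density `ν k` on the face `x k = 0`, read as a function of all coordinates of the ambient
space. -/
def faceDensity {ι : Type*} (ν : (k : ι) → ({i // i ≠ k} → ℝ) → ℝ) (k : ι) (x : ι → ℝ) : ℝ :=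
  ν k fun i => x i

variable {ν : (k : ι) → ({i // i ≠ k} → ℝ) → ℝ} {a : ι → ℝ} {k : ι}

theorem faceDensity_extendZero {ι : Type*} [DecidableEq ι] (ν : (k : ι) → ({i // i ≠ k} → ℝ) → ℝ)
    (k : ι) (y : {i // i ≠ k} → ℝ) : faceDensity ν k (extendZero k y) = ν k y :=
  congrArg (ν k) (funext (extendZero_coe k y))

theorem aestronglyMeasurable_faceDensity
    (hν : ContinuousOn (ν k) (orthant fun i : {i // i ≠ k} => a i)) :
    AEStronglyMeasurable (faceDensity ν k) (faceMeasure a k) := by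
  rw [← (measurePreserving_extendZero_faceMeasure a k).map_eq,
    (measurableEmbedding_extendZero k).aestronglyMeasurable_map_iff, Function.comp_def,
    funext (faceDensity_extendZero ν k), pi_weightedLebesgue fun i : {i // i ≠ k} => a i]
  exact (hν.aestronglyMeasurable (isOpen_orthant _).measurableSet).mono_ac
    (withDensity_absolutelyContinuous _ _)

theorem ae_abs_faceDensity_le {C r : ℝ}
    (hν : ∀ y ∈ orthant fun i : {i // i ≠ k} => a i, |ν k y| ≤ C * (1 + ∑ i, y i ^ 2) ^ r) :
    ∀ᵐ x ∂faceMeasure a k, |faceDensity ν k x| ≤ C * (1 + ∑ i, x i ^ 2) ^ r := by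
  filter_upwards [ae_faceMeasure_mem a k] with x hx
  rw [Fintype.sum_eq_add_sum_subtype_ne _ k, hx.1, zero_pow two_ne_zero, zero_add]
  exact hν _ fun i => hx.2 i i.2

theorem integrable_faceDensity_mul_rpow (ha : ∀ i, 0 ≤ a i) {β s C : ℝ}
    (hdim : ∑ i, (a i + 1 / 2) = β + 1) (hs : 1 - 2 * a k < s)
    (hcont : ContinuousOn (ν k) (orthant fun i : {i // i ≠ k} => a i))
    (hbound : ∀ᵐ x ∂faceMeasure a k, |faceDensity ν k x| ≤ C * (1 + ∑ i, x i ^ 2) ^ (-s / 2)) :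
    Integrable (fun x => faceDensity ν k x * (1 + ∑ i, x i ^ 2) ^ (-β)) (faceMeasure a k) := by
  have hp : ∑ i ∈ Finset.univ.erase k, (1 + 2 * a i) < s + 2 * β := by
    have hsum : ∑ i, (1 + 2 * a i) = 2 * (β + 1) := by
      rw [← hdim, Finset.mul_sum]
      exact Finset.sum_congr rfl fun i _ => by ring
    linarith [Finset.add_sum_erase _ (fun i => 1 + 2 * a i) (Finset.mem_univ k)]
  refine ((integrable_one_add_sum_sq_rpow_faceMeasure ha hp).const_mul C).mono'
    ((aestronglyMeasurable_faceDensity hcont).mul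
      (by fun_prop : Measurable _).aestronglyMeasurable) (hbound.mono fun x hx => ?_)
  have hT : 0 < 1 + ∑ i, x i ^ 2 := by positivity
  calc ‖faceDensity ν k x * (1 + ∑ i, x i ^ 2) ^ (-β)‖
      = |faceDensity ν k x| * (1 + ∑ i, x i ^ 2) ^ (-β) := by
        rw [norm_mul, norm_eq_abs, norm_eq_abs, abs_of_pos (rpow_pos_of_pos hT _)]
    _ ≤ C * (1 + ∑ i, x i ^ 2) ^ (-s / 2) * (1 + ∑ i, x i ^ 2) ^ (-β) := by gcongr
    _ = C * (1 + ∑ i, x i ^ 2) ^ (-(s + 2 * β) / 2) := by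
        rw [mul_assoc, ← rpow_add hT]
        congr 2
        ring

theorem sum_sq_extendZero_sub_pos {ξ : ι → ℝ} (hξ : ξ k ≠ 0) (y : {i // i ≠ k} → ℝ) :
    0 < ∑ i, (extendZero k y i - ξ i) ^ 2 :=
  Finset.sum_pos' (fun i _ => sq_nonneg _)
    ⟨k, Finset.mem_univ k, by rw [extendZero_self, zero_sub, neg_sq]; positivity⟩

theorem layerPotential_faceMeasure (ha : ∀ i, 0 ≤ a i) {f : (ι → ℝ) → ℝ} {β : ℝ}
    (hf : Integrable (fun x => f x * (1 + ∑ i, x i ^ 2) ^ (-β)) (faceMeasure a k))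
    (hβ : 0 ≤ β) {ξ : ι → ℝ} (hξ : ξ k ≠ 0) :
    layerPotential a (faceMeasure a k) f β ξ
      = ∫ y in orthant fun i : {i // i ≠ k} => a i, (∏ i, y i ^ (2 * a i)) *
          (f (extendZero k y) * ∫ u, quadForm (extendZero k y) u ξ ^ (-β) ∂mixingMeasure a) := by
  have hint := integrable_momentIntegrand (a := a) (ae_faceMeasure_eq_zero a k) hf hβ hξ k (n := 0)
    (q := β) (by simp)
  rw [← potentialMoment_zero a _ f k, potentialMoment, integral_prod _ hint,
    integral_faceMeasure ha]
  simp only [momentIntegrand, pow_zero, one_mul, integral_const_mul]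

end FaceDensity

section Transfer

theorem eventuallyEq_comp_update {ι : Type*} [DecidableEq ι] {u v : (ι → ℝ) → ℝ} {S : Set (ι → ℝ)}
    (hS : IsOpen S) (huv : Set.EqOn u v S) {ξ : ι → ℝ} (hξ : ξ ∈ S) (i : ι) :
    (fun t => u (Function.update ξ i t)) =ᶠ[𝓝 (ξ i)] fun t => v (Function.update ξ i t) :=
  (tendsto_update_nhds_self ξ i).eventually (huv.eventuallyEq_of_mem (hS.mem_nhds hξ))

theorem update_mem_orthant {ι : Type*} [DecidableEq ι] {a ξ : ι → ℝ} {k : ι}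
    (hξ : ∀ i, i ≠ k → 0 < a i → 0 < ξ i) {t : ℝ} (ht : 0 < t) :
    Function.update ξ k t ∈ orthant a :=
  (Function.forall_update_iff ξ fun i y => 0 < a i → 0 < y).2 ⟨fun _ => ht, hξ⟩

variable {ι : Type*} [Fintype ι] [DecidableEq ι] {a : ι → ℝ} {s : Finset ι}
  {f : ι → (ι → ℝ) → ℝ} {β γ : ℝ} {u : (ι → ℝ) → ℝ}

theorem sum_deriv_deriv_add_sum_deriv_eq_zero (ha : ∀ i, 0 ≤ a i) (has : ∀ k ∈ s, 0 < a k)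
    (hf : ∀ k ∈ s, Integrable (fun x => f k x * (1 + ∑ i, x i ^ 2) ^ (-β)) (faceMeasure a k))
    (hβ : 0 ≤ β) (hdim : ∑ i, (a i + 1 / 2) = β + 1)
    (hu : Set.EqOn u (neumannPotential a s f β γ) (orthant a)) {ξ : ι → ℝ} (hξ : ξ ∈ orthant a) :
    ∑ i, deriv (deriv fun t => u (Function.update ξ i t)) (ξ i)
      + ∑ i, 2 * a i / ξ i * deriv (fun t => u (Function.update ξ i t)) (ξ i) = 0 := by
  have hline := eventuallyEq_comp_update (isOpen_orthant a) hu hξ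
  simp_rw [fun i => (hline i).deriv.deriv_eq, fun i => (hline i).deriv_eq]
  exact neumannPotential_pde ha hf hβ hdim γ (fun k hk => (hξ k (has k hk)).ne')
    fun i hi => (hξ i hi).ne'

theorem tendsto_rpow_mul_deriv (ha : ∀ i, 0 ≤ a i) (has : ∀ k ∈ s, 0 < a k)
    (hf : ∀ k ∈ s, Integrable (fun x => f k x * (1 + ∑ i, x i ^ 2) ^ (-β)) (faceMeasure a k))
    (hβ : 0 ≤ β) (hdim : ∑ i, (a i + 1 / 2) = β + 1)
    (hu : Set.EqOn u (neumannPotential a s f β γ) (orthant a)) {k : ι} (hk : k ∈ s)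
    (hγ : 2 * β * γ * faceMass a k = 1) {ξ : ι → ℝ} (hξ : ∀ i, i ≠ k → 0 < a i → 0 < ξ i)
    (hcont : ContinuousAt (f k) (Function.update ξ k 0)) :
    Tendsto (fun t => t ^ (2 * a k) * deriv (fun r => u (Function.update ξ k r)) t) (𝓝[>] 0)
      (𝓝 (f k (Function.update ξ k 0))) := by
  have hlim := tendsto_rpow_mul_neumannGradient ha has hf hβ hdim γ hk hξ hcont
  rw [← mul_assoc, hγ, one_mul] at hlim
  refine hlim.congr' (eventually_mem_nhdsWithin.mono fun t (ht : 0 < t) => ?_)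
  have hmem := update_mem_orthant hξ ht
  have hderiv := ((hasDerivAt_neumannPotential hf hβ γ
    (fun l hl => (hmem l (has l hl)).ne') k).congr_of_eventuallyEq
      (eventuallyEq_comp_update (isOpen_orthant a) hu hmem k)).deriv
  simp only [Function.update_idem, Function.update_self] at hderiv
  exact congrArg _ hderiv.symm

theorem exists_forall_orthant_abs_lt (ha : ∀ i, 0 ≤ a i) (hβ : 0 < β)
    (hdim : ∑ i, (a i + 1 / 2) = β + 1) (has : ∀ k ∈ s, 0 < a k ∧ a k < 1 / 2) {c r : ι → ℝ}
    (hr : ∀ k ∈ s, 1 - 2 * a k < r k)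
    (hf : ∀ k ∈ s, ∀ᵐ x ∂faceMeasure a k, |f k x| ≤ c k * (1 + ∑ i, x i ^ 2) ^ (-r k / 2))
    (hu : Set.EqOn u (neumannPotential a s f β γ) (orthant a)) {δ : ℝ} (hδ : 0 < δ) :
    ∃ R : ℝ, ∀ ξ ∈ orthant a, R < √(∑ i, ξ i ^ 2) → |u ξ| < δ := by
  obtain ⟨R, hR⟩ := exists_forall_lt_imp_abs_lt
    (tendsto_neumannPotential_cocompact ha hβ hdim γ has hr hf)
    (by fun_prop : Continuous fun ξ : ι → ℝ => √(∑ i, ξ i ^ 2)) hδ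
  refine ⟨R, fun ξ hξ hξR => ?_⟩
  rw [hu hξ]
  exact hR ξ (fun k hk => (hξ k (has k hk).1).ne') hξR

theorem faceDensity_update {ι : Type*} [DecidableEq ι] (ν : (k : ι) → ({i // i ≠ k} → ℝ) → ℝ)
    (k : ι) (ξ : ι → ℝ) (t : ℝ) :
    faceDensity ν k (Function.update ξ k t) = ν k fun i => ξ i :=
  congrArg (ν k) (funext fun i => Function.update_of_ne i.2 t ξ)

theorem continuousAt_faceDensity {ι : Type*} [Finite ι] [DecidableEq ι] {a : ι → ℝ}
    {ν : (k : ι) → ({i // i ≠ k} → ℝ) → ℝ} {k : ι}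
    (hν : ContinuousOn (ν k) (orthant fun i : {i // i ≠ k} => a i)) {ξ : ι → ℝ}
    (hξ : ∀ i, i ≠ k → 0 < a i → 0 < ξ i) (t : ℝ) :
    ContinuousAt (faceDensity ν k) (Function.update ξ k t) := by
  refine ContinuousAt.comp (g := ν k) (hν.continuousAt ((isOpen_orthant _).mem_nhds
    fun i hi => ?_)) (continuous_pi fun i => continuous_apply i.1).continuousAt
  rw [Function.update_of_ne i.2]
  exact hξ i i.2 hi

end Transfer

section SingularExponent

variable {ι : Type*} {p : ι → Prop} [DecidablePred p] {α : ι → ℝ}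

/-- The exponents `α` of the singular coordinates `p`, extended by `0` to the other ones. -/
def singularExponent (p : ι → Prop) [DecidablePred p] (α : ι → ℝ) (i : ι) : ℝ :=
  if p i then α i else 0

theorem singularExponent_of_singular {i : ι} (hi : p i) : singularExponent p α i = α i := if_pos hi

theorem singularExponent_pos_iff (hα : ∀ j, p j → 0 < α j) (i : ι) :
    0 < singularExponent p α i ↔ p i := by
  by_cases hi : p i <;> simp [singularExponent, hi, hα i]

theorem singularExponent_nonneg (hα : ∀ j, p j → 0 < α j) (i : ι) : 0 ≤ singularExponent p α i := by
  by_cases hi : p i <;> simp [singularExponent, hi, (hα i _).le]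

theorem orthant_singularExponent (hα : ∀ j, p j → 0 < α j) :
    orthant (singularExponent p α) = {x | ∀ i, p i → 0 < x i} := by
  simp only [orthant, singularExponent_pos_iff hα]

theorem orthant_singularExponent_ne (hα : ∀ j, p j → 0 < α j) (k : ι) :
    (orthant fun i : {i // i ≠ k} => singularExponent p α i)
      = {y | ∀ i : {i // i ≠ k}, p i → 0 < y i} := by
  simp only [orthant, singularExponent_pos_iff hα]

variable [Fintype ι]

theorem sum_singularExponent_add_half {β : ℝ}
    (hβ : β = ((Fintype.card ι : ℝ) - 2) / 2 + ∑ j ∈ Finset.univ.filter p, α j) :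
    ∑ i, (singularExponent p α i + 1 / 2) = β + 1 := by
  rw [hβ, Finset.sum_filter, Finset.sum_add_distrib, Finset.sum_const, Finset.card_univ,
    nsmul_eq_mul]
  simp only [singularExponent]
  ring

theorem sum_filter_div_mul_eq_sum_singularExponent (ξ D : ι → ℝ) :
    ∑ j ∈ Finset.univ.filter p, 2 * α j / ξ j * D j
      = ∑ i, 2 * singularExponent p α i / ξ i * D i := by
  rw [Finset.sum_filter]
  refine Finset.sum_congr rfl fun i _ => ?_
  by_cases hi : p i <;> simp [singularExponent, hi]

variable [DecidableEq ι]

theorem two_mul_gamma_factor_mul_faceMass_singularExponent (hα : ∀ j, p j → 0 < α j) {β γ : ℝ}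
    (hβ₀ : 0 < β) (hβ : β = ((Fintype.card ι : ℝ) - 2) / 2 + ∑ j ∈ Finset.univ.filter p, α j)
    (hγ : γ = 2 ^ (2 * β - Fintype.card ι) * Real.Gamma β / π ^ ((Fintype.card ι : ℝ) / 2) *
      ∏ j ∈ Finset.univ.filter p, Real.Gamma (α j) / Real.Gamma (2 * α j)) {k : ι} (hk : p k) :
    2 * β * γ * faceMass (singularExponent p α) k = 1 := by
  have hprod : ∏ j ∈ Finset.univ.filter p, Real.Gamma (α j) / Real.Gamma (2 * α j)
      = ∏ j ∈ Finset.univ.filter p, Real.Gamma (singularExponent p α j) /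
          Real.Gamma (2 * singularExponent p α j) :=
    Finset.prod_congr rfl fun j hj => by
      rw [singularExponent_of_singular (Finset.mem_filter.1 hj).2]
  rw [hγ, hprod]
  exact two_mul_gamma_factor_mul_faceMass (singularExponent_nonneg hα)
    (fun i => Finset.mem_filter_univ i |>.trans (singularExponent_pos_iff hα i).symm) hβ₀
    (sum_singularExponent_add_half hβ) ((singularExponent_pos_iff hα k).2 hk)

theorem prod_rpow_singularExponent (k : ι) (y : {i // i ≠ k} → ℝ) :
    ∏ i, y i ^ (2 * singularExponent p α i)
      = ∏ j : {j // p j ∧ j ≠ k}, y ⟨j, j.2.2⟩ ^ (2 * α j) := by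
  refine (Fintype.prod_of_injective (fun j : {j // p j ∧ j ≠ k} => ⟨j, j.2.2⟩)
    (fun _ _ h => Subtype.ext (by simpa using h)) _ _ (fun i hi => ?_) fun j => ?_).symm
  · have hpi : ¬ p i := fun h => hi ⟨⟨i, h, i.2⟩, rfl⟩
    rw [singularExponent, if_neg hpi, mul_zero, rpow_zero]
  · rw [singularExponent_of_singular j.2.1]

end SingularExponent

section SingleLayer

/-- The fundamental solution `q(x, ξ)` with pole at `x`; the singular coordinates are those
satisfying `p`. -/
noncomputable def fundamentalSolution {ι : Type*} [Fintype ι] (p : ι → Prop) [DecidablePred p]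
    (α : ι → ℝ) (β γ : ℝ) (x ξ : ι → ℝ) : ℝ :=
  γ * (∑ i, (x i - ξ i) ^ 2) ^ (-β) *
    lauricellaFA β (fun j : {i // p i} => α j.1) (fun j => 2 * α j.1)
      (fun j => -4 * x j.1 * ξ j.1 / ∑ i, (x i - ξ i) ^ 2)

/-- The sum `u` of single-layer potentials with densities `ν k` on the faces `x k = 0`, `p k`, and
kernel `fundamentalSolution`. -/
noncomputable def singleLayerSum {ι : Type*} [Fintype ι] [DecidableEq ι] (p : ι → Prop)
    [DecidablePred p] (α : ι → ℝ) (β γ : ℝ) (ν : (k : ι) → ({i // i ≠ k} → ℝ) → ℝ)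
    (ξ : ι → ℝ) : ℝ :=
  -∑ k ∈ Finset.univ.filter p, ∫ y in {y : {i // i ≠ k} → ℝ | ∀ i, p i.1 → 0 < y i},
    (∏ j : {j // p j ∧ j ≠ k}, y ⟨j.1, j.2.2⟩ ^ (2 * α j.1)) * ν k y *
      fundamentalSolution p α β γ (fun i => if h : i = k then 0 else y ⟨i, h⟩) ξ

variable {ι : Type*} [Fintype ι] {p : ι → Prop} [DecidablePred p] {α : ι → ℝ}

theorem fundamentalSolution_eq_integral (hα : ∀ j, p j → 0 < α j) (β γ : ℝ) {x ξ : ι → ℝ}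
    (hr : 0 < ∑ i, (x i - ξ i) ^ 2) :
    fundamentalSolution p α β γ x ξ
      = γ * ∫ u, quadForm x u ξ ^ (-β) ∂mixingMeasure (singularExponent p α) := by
  rw [← rpow_mul_lauricellaFA (singularExponent_nonneg hα)
    (fun i => (singularExponent_pos_iff hα i).symm) β hr, fundamentalSolution, mul_assoc]
  simp only [fun j : {i // p i} => (singularExponent_of_singular j.2 : _ = α j)]

variable [DecidableEq ι]

theorem singleLayerSum_eqOn {ν : (k : ι) → ({i // i ≠ k} → ℝ) → ℝ} (hα : ∀ j, p j → 0 < α j)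
    {β : ℝ} (hβ : 0 ≤ β) (γ : ℝ)
    (hν : ∀ k ∈ Finset.univ.filter p, Integrable
      (fun x => faceDensity ν k x * (1 + ∑ i, x i ^ 2) ^ (-β))
      (faceMeasure (singularExponent p α) k)) :
    Set.EqOn (singleLayerSum p α β γ ν)
      (neumannPotential (singularExponent p α) (Finset.univ.filter p) (faceDensity ν) β γ)
      (orthant (singularExponent p α)) := by
  intro ξ hξ
  rw [singleLayerSum, neumannPotential, Finset.mul_sum]
  refine congrArg Neg.neg (Finset.sum_congr rfl fun k hk => ?_)
  have hξk : ξ k ≠ 0 := (hξ k ((singularExponent_pos_iff hα k).2 (Finset.mem_filter.1 hk).2)).ne'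
  rw [layerPotential_faceMeasure (singularExponent_nonneg hα) (hν k hk) hβ hξk,
    ← integral_const_mul, orthant_singularExponent_ne hα]
  refine integral_congr_ae (ae_of_all _ fun y => ?_)
  beta_reduce
  rw [← prod_rpow_singularExponent, faceDensity_extendZero]
  change _ * fundamentalSolution p α β γ (extendZero k y) ξ = _
  rw [fundamentalSolution_eq_integral hα β γ (sum_sq_extendZero_sub_pos hξk y)]
  ring

end SingleLayer

theorem neumann_existence_general {ι : Type*} [Fintype ι] [DecidableEq ι] {p : ι → Prop}
    [DecidablePred p] {α : ι → ℝ} (hα : ∀ j, p j → 0 < α j) {β γ : ℝ} (hβ₀ : 0 < β)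
    (hβ : β = ((Fintype.card ι : ℝ) - 2) / 2 + ∑ j ∈ Finset.univ.filter p, α j)
    (hγ : γ = 2 ^ (2 * β - Fintype.card ι) * Real.Gamma β / π ^ ((Fintype.card ι : ℝ) / 2) *
      ∏ j ∈ Finset.univ.filter p, Real.Gamma (α j) / Real.Gamma (2 * α j))
    {ν : (k : ι) → ({i // i ≠ k} → ℝ) → ℝ} {c ε : ι → ℝ} (hε : ∀ k, p k → 0 < ε k)
    (hνcont : ∀ k, p k → ContinuousOn (ν k) {y | ∀ i : {i // i ≠ k}, p i.1 → 0 < y i})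
    (hνbd : ∀ k, p k → ∀ y : {i // i ≠ k} → ℝ, (∀ i, p i.1 → 0 < y i) →
      |ν k y| ≤ c k * (1 + ∑ i, y i ^ 2) ^ (-(1 - 2 * α k + ε k) / 2))
    {u : (ι → ℝ) → ℝ} (hu : u = singleLayerSum p α β γ ν) :
    (∀ ξ : ι → ℝ, (∀ i, p i → 0 < ξ i) →
      (∑ i, deriv (deriv fun t : ℝ => u (Function.update ξ i t)) (ξ i)) +
        ∑ j ∈ Finset.univ.filter p,
          2 * α j / ξ j * deriv (fun t : ℝ => u (Function.update ξ j t)) (ξ j) = 0) ∧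
    (∀ k, p k → ∀ ξ : ι → ℝ, (∀ i, p i → i ≠ k → 0 < ξ i) →
      Tendsto (fun t : ℝ => t ^ (2 * α k) * deriv (fun s : ℝ => u (Function.update ξ k s)) t)
        (𝓝[>] 0) (𝓝 (ν k fun i => ξ i.1))) ∧
    ((∀ j, p j → 2 * α j < 1) → ∀ δ > (0 : ℝ), ∃ R : ℝ, ∀ ξ : ι → ℝ, (∀ i, p i → 0 < ξ i) →
      R < √(∑ i, ξ i ^ 2) → |u ξ| < δ) := by
  have ha := singularExponent_nonneg hα
  have hdim := sum_singularExponent_add_half hβ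
  have hsing : ∀ k ∈ Finset.univ.filter p, p k := fun k hk => (Finset.mem_filter.1 hk).2
  have hpos : ∀ k ∈ Finset.univ.filter p, 0 < singularExponent p α k := fun k hk =>
    (singularExponent_pos_iff hα k).2 (hsing k hk)
  have horth {ξ : ι → ℝ} (hξ : ∀ i, p i → 0 < ξ i) : ξ ∈ orthant (singularExponent p α) :=
    (orthant_singularExponent hα).ge hξ
  simp only [← orthant_singularExponent_ne hα] at hνcont
  have hs : ∀ k ∈ Finset.univ.filter p, 1 - 2 * singularExponent p α k < 1 - 2 * α k + ε k :=
    fun k hk => by linarith [hε k (hsing k hk), singularExponent_of_singular (α := α) (hsing k hk)]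
  have hbound : ∀ k ∈ Finset.univ.filter p, ∀ᵐ x ∂faceMeasure (singularExponent p α) k,
      |faceDensity ν k x| ≤ c k * (1 + ∑ i, x i ^ 2) ^ (-(1 - 2 * α k + ε k) / 2) := fun k hk =>
    ae_abs_faceDensity_le fun y hy =>
      hνbd k (hsing k hk) y ((orthant_singularExponent_ne hα k).le hy)
  have hf := fun k hk => integrable_faceDensity_mul_rpow ha hdim (hs k hk)
    (hνcont k (hsing k hk)) (hbound k hk)
  have hV := hu ▸ singleLayerSum_eqOn hα hβ₀.le γ hf
  refine ⟨fun ξ hξ => ?_, fun k hk ξ hξ => ?_, fun hα' δ hδ => ?_⟩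
  · rw [sum_filter_div_mul_eq_sum_singularExponent]
    exact sum_deriv_deriv_add_sum_deriv_eq_zero ha hpos hf hβ₀.le hdim hV (horth hξ)
  · have hξ' i (hi : i ≠ k) (h : 0 < singularExponent p α i) : 0 < ξ i :=
      hξ i ((singularExponent_pos_iff hα i).1 h) hi
    rw [← faceDensity_update ν k ξ 0, ← singularExponent_of_singular (α := α) hk]
    exact tendsto_rpow_mul_deriv ha hpos hf hβ₀.le hdim hV ((Finset.mem_filter_univ k).2 hk)
      (two_mul_gamma_factor_mul_faceMass_singularExponent hα hβ₀ hβ hγ hk) hξ'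
      (continuousAt_faceDensity (hνcont k hk) hξ' 0)
  · have hhalf : ∀ k ∈ Finset.univ.filter p, singularExponent p α k < 1 / 2 := fun k hk => by
      linarith [hα' k (hsing k hk), singularExponent_of_singular (α := α) (hsing k hk)]
    obtain ⟨R, hR⟩ := exists_forall_orthant_abs_lt ha hβ₀ hdim (fun k hk => ⟨hpos k hk, hhalf k hk⟩)
      hs hbound hV hδ
    exact ⟨R, fun ξ hξ => hR ξ (horth hξ)⟩

/-- **Existence for the Neumann problem**: the sum of single-layer potentials
`u(ξ) = −Σ_k ∫_{S_k} x̃_k^{(2α)} ν_k(x̃_k) q(x_k⁰, ξ) dx̃_k` built from the fundamental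
solution `q` solves the Neumann problem: it satisfies the singular elliptic equation in
the orthant, the weighted Neumann boundary conditions, and vanishes at infinity. -/
theorem neumann_existence (m n : ℕ) (hm : 2 < m) (hn : 1 ≤ n) (hnm : n ≤ m)
    (α : Fin m → ℝ) (hα : ∀ j : Fin m, (j : ℕ) < n → 0 < 2 * α j ∧ 2 * α j < 1)
    (β γ : ℝ)
    (hβ : β = ((m : ℝ) - 2) / 2 + ∑ j ∈ Finset.univ.filter fun j : Fin m => (j : ℕ) < n, α j)
    (hγ : γ = 2 ^ (2 * β - (m : ℝ)) * Real.Gamma β / Real.pi ^ ((m : ℝ) / 2) *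
      ∏ j ∈ Finset.univ.filter fun j : Fin m => (j : ℕ) < n,
        Real.Gamma (α j) / Real.Gamma (2 * α j))
    (q : (Fin m → ℝ) → (Fin m → ℝ) → ℝ)
    (hq : ∀ x ξ : Fin m → ℝ, q x ξ =
      γ * (∑ i, (x i - ξ i) ^ 2) ^ (-β) *
        lauricellaFA β (fun j : {i : Fin m // (i : ℕ) < n} => α j.1)
          (fun j => 2 * α j.1)
          (fun j => -4 * x j.1 * ξ j.1 / ∑ i, (x i - ξ i) ^ 2))
    (ν : (k : Fin m) → ({i : Fin m // i ≠ k} → ℝ) → ℝ)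
    (c ε : Fin m → ℝ) (hc : ∀ k : Fin m, (k : ℕ) < n → 0 < c k)
    (hε : ∀ k : Fin m, (k : ℕ) < n → 0 < ε k)
    (hνcont : ∀ k : Fin m, (k : ℕ) < n →
      ContinuousOn (ν k) {y | ∀ i : {i : Fin m // i ≠ k}, (i.1 : ℕ) < n → 0 < y i})
    (hνbd : ∀ k : Fin m, (k : ℕ) < n →
      ∀ y : {i : Fin m // i ≠ k} → ℝ, (∀ i, (i.1 : ℕ) < n → 0 < y i) →
      |ν k y| ≤ c k * (1 + ∑ i, y i ^ 2) ^ (-(1 - 2 * α k + ε k) / 2))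
    (u : (Fin m → ℝ) → ℝ)
    (hu : ∀ ξ : Fin m → ℝ, u ξ =
      -∑ k ∈ Finset.univ.filter fun k : Fin m => (k : ℕ) < n,
        ∫ y in {y : {i : Fin m // i ≠ k} → ℝ | ∀ i, (i.1 : ℕ) < n → 0 < y i},
          (∏ j : {j : Fin m // (j : ℕ) < n ∧ j ≠ k}, y ⟨j.1, j.2.2⟩ ^ (2 * α j.1)) *
            ν k y * q (fun i => if h : i = k then 0 else y ⟨i, h⟩) ξ) :
    (∀ ξ : Fin m → ℝ, (∀ i : Fin m, (i : ℕ) < n → 0 < ξ i) →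
      (∑ i : Fin m, deriv (deriv fun t : ℝ => u (Function.update ξ i t)) (ξ i)) +
        ∑ j ∈ Finset.univ.filter fun j : Fin m => (j : ℕ) < n,
          2 * α j / ξ j * deriv (fun t : ℝ => u (Function.update ξ j t)) (ξ j) = 0) ∧
    (∀ k : Fin m, (k : ℕ) < n → ∀ ξ : Fin m → ℝ,
      (∀ i : Fin m, (i : ℕ) < n → i ≠ k → 0 < ξ i) →
      Filter.Tendsto
        (fun t : ℝ => t ^ (2 * α k) * deriv (fun s : ℝ => u (Function.update ξ k s)) t)
        (nhdsWithin 0 (Set.Ioi 0)) (nhds (ν k fun i => ξ i.1))) ∧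
    (∀ δ > (0 : ℝ), ∃ R : ℝ, ∀ ξ : Fin m → ℝ, (∀ i : Fin m, (i : ℕ) < n → 0 < ξ i) →
      R < Real.sqrt (∑ i, ξ i ^ 2) → |u ξ| < δ) := by
  have hα₀ (j : Fin m) (hj : (j : ℕ) < n) : 0 < α j := by linarith [(hα j hj).1]
  have hsum : 0 ≤ ∑ j ∈ Finset.univ.filter fun j : Fin m => (j : ℕ) < n, α j :=
    Finset.sum_nonneg fun j hj => (hα₀ j (Finset.mem_filter.1 hj).2).le
  have hβ₀ : 0 < β := by
    have hm' : (2 : ℝ) < m := by exact_mod_cast hm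
    linarith
  obtain rfl : q = fundamentalSolution (fun j : Fin m => (j : ℕ) < n) α β γ := funext₂ hq
  obtain ⟨hpde, hneumann, hdecay⟩ := neumann_existence_general hα₀ hβ₀
    (by rwa [Fintype.card_fin]) (by rwa [Fintype.card_fin]) hε hνcont hνbd (funext hu)
  exact ⟨hpde, hneumann, hdecay fun j hj => (hα j hj).2⟩
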